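/- arXiv:1110.6140 — 3 statements merged into one kernel-verified Lean document; each statement's English description precedes it below -/
import Mathlib

section
/- Let P be a nonempty Π⁰₁ closed subset of Cantor space 2^ℕ which is tree-immune, and let D ⊆ Ψ(T_P) be any computable closed subset of ℝ² which is a dendrite. Then D ∩ ([0,1]×{0}) = ∅. -/
open Set Metric

section TopDefs

variable {α : Type*} [TopologicalSpace α]

/-- `A ⊆ α` is an arc with endpoints `x` and `y`:
a homeomorphic (continuous injective) image of `[0,1]` sending `0 ↦ x`, `1 ↦ y`. -/
def IsArc (A : Set α) (x y : α) : Prop :=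
  ∃ f : Set.Icc (0:ℝ) 1 → α, Continuous f ∧ Function.Injective f ∧
    Set.range f = A ∧ f ⟨0, by norm_num⟩ = x ∧ f ⟨1, by norm_num⟩ = y

/-- A continuum: a nonempty compact connected set. -/
def IsContinuum (X : Set α) : Prop := IsCompact X ∧ IsConnected X

/-- Any two distinct points of `X` are endpoints of an arc contained in `X`. -/
def ArcwiseConnectedSet (X : Set α) : Prop :=
  ∀ x ∈ X, ∀ y ∈ X, x ≠ y → ∃ A, A ⊆ X ∧ IsArc A x y

/-- `X` is unicoherent: for all closed connected `A, B ⊆ X` with `A ∪ B = X`,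
the intersection `A ∩ B` is connected. -/
def UnicoherentSet (X : Set α) : Prop :=
  ∀ A B : Set α, A ⊆ X → B ⊆ X → IsClosed A → IsClosed B →
    IsConnected A → IsConnected B → A ∪ B = X → IsConnected (A ∩ B)

/-- Every subcontinuum of `X` is unicoherent. -/
def HereditarilyUnicoherent (X : Set α) : Prop :=
  ∀ Y, Y ⊆ X → IsContinuum Y → UnicoherentSet Y

/-- A dendroid: an arcwise connected, hereditarily unicoherent continuum. -/
def IsDendroid (X : Set α) : Prop :=
  IsContinuum X ∧ ArcwiseConnectedSet X ∧ HereditarilyUnicoherent X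

/-- The unit circle `S¹`. -/
def unitCircle : Set (EuclideanSpace ℝ (Fin 2)) := Metric.sphere 0 1

/-- A dendrite: a locally connected continuum containing no subset homeomorphic to `S¹`. -/
def IsDendrite (X : Set α) : Prop :=
  IsContinuum X ∧ LocallyConnectedSpace ↥X ∧
    ∀ S : Set α, S ⊆ X → IsEmpty (↥S ≃ₜ ↥unitCircle)

/-- `x` and `y` lie in the same arc-component of `Y`. -/
def SameArcComponent (Y : Set α) (x y : α) : Prop :=
  x = y ∨ ∃ A, A ⊆ Y ∧ IsArc A x y

/-- `x` is a ramification point of `X`: `X \ {x}` has at least three arc-components. -/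
def IsRamificationPoint (X : Set α) (x : α) : Prop :=
  x ∈ X ∧ ∃ u v w, u ∈ X \ {x} ∧ v ∈ X \ {x} ∧ w ∈ X \ {x} ∧
    ¬ SameArcComponent (X \ {x}) u v ∧ ¬ SameArcComponent (X \ {x}) u w ∧
    ¬ SameArcComponent (X \ {x}) v w

/-- A tree (as a continuum): a dendrite with finitely many ramification points. -/
def IsTreeContinuum (X : Set α) : Prop :=
  IsDendrite X ∧ {x | IsRamificationPoint X x}.Finite

end TopDefs

section CompDefs

/-- The rational open ball in `ℝ²` coded by `((q₁, q₂), r)`. -/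
def ballOfCode (c : (ℚ × ℚ) × ℚ) : Set (ℝ × ℝ) :=
  {x | dist x (((c.1.1 : ℝ), (c.1.2 : ℝ)) : ℝ × ℝ) < (c.2 : ℝ)}

/-- A closed set `F ⊆ ℝ²` is `Π⁰₁` if it is the complement of the union of the rational
open balls coded by some c.e. set of codes. -/
def IsPi01Closed (F : Set (ℝ × ℝ)) : Prop :=
  ∃ W : (ℚ × ℚ) × ℚ → Prop, REPred W ∧ F = Set.univ \ ⋃ c ∈ {c | W c}, ballOfCode c

/-- `F ⊆ ℝ²` is c.e. closed if the set of codes of rational open balls meeting `F` is c.e. -/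
def IsCEClosed (F : Set (ℝ × ℝ)) : Prop :=
  REPred (fun c : (ℚ × ℚ) × ℚ => (F ∩ ballOfCode c).Nonempty)

/-- A computable closed subset of `ℝ²`: both `Π⁰₁` and c.e. closed. -/
def IsComputableClosed (F : Set (ℝ × ℝ)) : Prop :=
  IsPi01Closed F ∧ IsCEClosed F

/-- A point of `ℝ²` is computable if the set of codes of rational open balls
containing it is c.e. -/
def IsComputablePoint (x : ℝ × ℝ) : Prop :=
  REPred (fun c : (ℚ × ℚ) × ℚ => x ∈ ballOfCode c)

end CompDefs

section PsiDefs

/-- A tree of binary strings: a set of finite binary strings closed under prefixes. -/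
def IsTreeOfStrings (T : Set (List Bool)) : Prop :=
  ∀ σ ∈ T, ∀ τ : List Bool, τ <+: σ → τ ∈ T

/-- The point `ψ(σ) ∈ ℝ²` associated with the binary string `σ`. -/
noncomputable def psiPt (σ : List Bool) : ℝ × ℝ :=
  ((3:ℝ) ^ (-(σ.length : ℤ)) / 2 +
      2 * ∑ i ∈ Finset.range σ.length,
        (if σ.getD i false then (3:ℝ) ^ (-((i : ℤ) + 1)) else 0),
    (2:ℝ) ^ (-(σ.length : ℤ)))

/-- The planar embedding `Ψ(T)` of a tree `T` of binary strings: the closure of the union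
of the segments from `ψ(σ⁻)` to `ψ(σ)` over nonempty `σ ∈ T` (together with the points
`ψ(σ)`, `σ ∈ T`, which makes no difference except for the degenerate trees `∅`, `{⟨⟩}`). -/
noncomputable def PsiSet (T : Set (List Bool)) : Set (ℝ × ℝ) :=
  closure (psiPt '' T ∪ ⋃ σ ∈ T, ⋃ (_ : σ ≠ []), segment ℝ (psiPt σ.dropLast) (psiPt σ))

end PsiDefs

/-- The cylinder (basic clopen set) of Cantor space determined by a binary string. -/
def cylinder (σ : List Bool) : Set (ℕ → Bool) :=
  {a | ∀ i, i < σ.length → a i = σ.getD i false}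

/-- The tree of a closed subset of Cantor space: the strings whose cylinder meets `F`. -/
def treeOfClosed (F : Set (ℕ → Bool)) : Set (List Bool) :=
  {σ | (F ∩ cylinder σ).Nonempty}

/-- `F ⊆ 2^ℕ` is `Π⁰₁` if its complement is the union of the cylinders over a c.e. set of
binary strings. -/
def IsPi01Cantor (F : Set (ℕ → Bool)) : Prop :=
  ∃ W : List Bool → Prop, REPred W ∧ Fᶜ = ⋃ σ ∈ {σ | W σ}, cylinder σ

/-- `F` is tree-immune: no infinite tree of binary strings contained in `T_F` is computable. -/
def TreeImmune (F : Set (ℕ → Bool)) : Prop :=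
  ∀ T : Set (List Bool), IsTreeOfStrings T → T ⊆ treeOfClosed F → T.Infinite →
    ¬ ComputablePred (fun σ => σ ∈ T)


/-! ### Computability of rational codes -/

section RatCodes

open Encodable

/-- The encoding of rationals as pairs (numerator, denominator). -/
noncomputable def ratPairCode (q : ℚ) : ℕ := @encode ℚ Rat.instEncodable q

theorem ratPairCode_eq (q : ℚ) : ratPairCode q = Nat.pair (Equiv.intEquivNat q.num) q.den := rfl

theorem ratEncode_eq (q : ℚ) : @encode ℚ Primcodable.toEncodable q =
    (List.range (ratPairCode q)).countP
      (fun y => @decide (y ∈ Set.range (@encode ℚ Rat.instEncodable))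
        (@decidableRangeEncode ℚ Rat.instEncodable y)) := rfl

/-- Positive part of a coded integer. -/
def codePos (k : ℕ) : ℕ := if k % 2 = 0 then k / 2 else 0
/-- Negative part of a coded integer. -/
def codeNeg (k : ℕ) : ℕ := if k % 2 = 0 then 0 else k / 2 + 1

theorem code_int (z : ℤ) : z = (codePos (Equiv.intEquivNat z) : ℤ) - codeNeg (Equiv.intEquivNat z)
    ∧ z.natAbs = (Equiv.intEquivNat z + 1) / 2 := by
  cases z with
  | ofNat n =>
    have : Equiv.intEquivNat (Int.ofNat n) = 2 * n := rfl
    rw [this]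
    simp [codePos, codeNeg]
    omega
  | negSucc n =>
    have : Equiv.intEquivNat (Int.negSucc n) = 2 * n + 1 := rfl
    rw [this]
    have h : (2 * n + 1) % 2 = 1 := by omega
    have h2 : (2 * n + 1) / 2 = n := by omega
    simp [codePos, codeNeg, h, h2]
    omega

/-- Validity of a pair code. -/
def ratValid (x : ℕ) : Prop :=
  0 < x.unpair.2 ∧ Nat.Coprime ((x.unpair.1 + 1) / 2) x.unpair.2

theorem ratValid_iff (x : ℕ) : ratValid x ↔ x ∈ Set.range (@encode ℚ Rat.instEncodable) := by
  constructor
  · rintro ⟨h1, h2⟩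
    obtain ⟨z, hz⟩ := Equiv.intEquivNat.surjective x.unpair.1
    rw [← hz, ← (code_int z).2] at h2
    refine ⟨⟨z, x.unpair.2, h1.ne', h2⟩, ?_⟩
    change ratPairCode _ = _
    rw [ratPairCode_eq]
    simp [hz]
  · rintro ⟨q, rfl⟩
    change ratValid (ratPairCode q)
    rw [ratPairCode_eq]
    refine ⟨?_, ?_⟩
    · simp [q.pos]
    · simpa [← (code_int q.num).2] using q.reduced

theorem coprime_primrec : PrimrecPred (fun p : ℕ × ℕ => Nat.Coprime p.1 p.2) := by
  have hR : PrimrecRel (fun (d : ℕ) (p : ℕ × ℕ) => d = 1 ∨ ¬ (p.1 % d = 0) ∨ ¬ (p.2 % d = 0)) := by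
    have h1 : PrimrecPred (fun v : ℕ × (ℕ × ℕ) => v.1 = 1) :=
      Primrec.eq.comp Primrec.fst (Primrec.const 1)
    have h2 : PrimrecPred (fun v : ℕ × (ℕ × ℕ) => v.2.1 % v.1 = 0) :=
      Primrec.eq.comp (Primrec.nat_mod.comp (Primrec.fst.comp Primrec.snd) Primrec.fst)
        (Primrec.const 0)
    have h3 : PrimrecPred (fun v : ℕ × (ℕ × ℕ) => v.2.2 % v.1 = 0) :=
      Primrec.eq.comp (Primrec.nat_mod.comp (Primrec.snd.comp Primrec.snd) Primrec.fst)
        (Primrec.const 0)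
    exact h1.or (h2.not.or h3.not)
  have hR2 : PrimrecRel (fun (n : ℕ) (p : ℕ × ℕ) =>
      ∀ d < n, d = 1 ∨ ¬ (p.1 % d = 0) ∨ ¬ (p.2 % d = 0)) :=
    ((PrimrecRel.forall_mem_list hR).comp (Primrec.list_range.comp Primrec.fst)
      Primrec.snd).of_eq fun v => by simp only [List.mem_range]
  have h : PrimrecPred (fun p : ℕ × ℕ => ∀ d < (p.1 + p.2).succ,
      d = 1 ∨ ¬ (p.1 % d = 0) ∨ ¬ (p.2 % d = 0)) := hR2.comp
    (Primrec.succ.comp (Primrec.nat_add.comp Primrec.fst Primrec.snd)) Primrec.id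
  refine h.of_eq ?_
  rintro ⟨a, b⟩
  constructor
  · intro h
    have h1 := Nat.gcd_dvd_left a b
    have h2 := Nat.gcd_dvd_right a b
    have h3 : Nat.gcd a b < (a + b).succ := by
      rcases Nat.eq_zero_or_pos a with rfl | ha
      · simp
      · have := Nat.gcd_le_left b ha
        omega
    rcases h _ h3 with h | h | h
    · exact h
    · exact absurd (Nat.mod_eq_zero_of_dvd h1) h
    · exact absurd (Nat.mod_eq_zero_of_dvd h2) h
  · intro h d _
    by_contra hc
    push Not at hc
    exact hc.1 (Nat.eq_one_of_dvd_coprimes h (Nat.dvd_of_mod_eq_zero hc.2.1)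
      (Nat.dvd_of_mod_eq_zero hc.2.2))

theorem ratValid_primrec : PrimrecPred ratValid := by
  have h1 : PrimrecPred (fun x : ℕ => 0 < x.unpair.2) :=
    Primrec.nat_lt.comp (Primrec.const 0) (Primrec.snd.comp Primrec.unpair)
  have h2 : PrimrecPred (fun x : ℕ => Nat.Coprime ((x.unpair.1 + 1) / 2) x.unpair.2) :=
    coprime_primrec.comp (Primrec.pair
      (Primrec.nat_div.comp (Primrec.succ.comp (Primrec.fst.comp Primrec.unpair))
        (Primrec.const 2)) (Primrec.snd.comp Primrec.unpair))
  exact h1.and h2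

theorem ratCount_primrec : Primrec (fun x : ℕ => (List.range x).countP
      (fun y => @decide (y ∈ Set.range (@encode ℚ Rat.instEncodable))
        (@decidableRangeEncode ℚ Rat.instEncodable y))) := by
  classical
  have h := (Primrec.list_length.comp ((Primrec.listFilter ratValid_primrec).comp
    Primrec.list_range))
  refine h.of_eq fun x => ?_
  rw [List.countP_eq_length_filter]
  congr 2
  funext y
  exact decide_eq_decide.2 (ratValid_iff y)

/-- The rational `(a - b) / (d + 1)`. -/
def ratOf (v : (ℕ × ℕ) × ℕ) : ℚ := ((v.1.1 : ℚ) - v.1.2) / (v.2 + 1)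

/-- `x` codes the rational `ratOf v`. -/
def ratGraph (v : (ℕ × ℕ) × ℕ) (x : ℕ) : Prop :=
  ratValid x ∧ codePos x.unpair.1 * (v.2 + 1) + v.1.2 * x.unpair.2 =
    v.1.1 * x.unpair.2 + codeNeg x.unpair.1 * (v.2 + 1)

theorem ratGraph_iff (v : (ℕ × ℕ) × ℕ) (x : ℕ) : ratGraph v x ↔ x = ratPairCode (ratOf v) := by
  have key : ∀ q : ℚ, codePos (Equiv.intEquivNat q.num) * (v.2 + 1) + v.1.2 * q.den =
    v.1.1 * q.den + codeNeg (Equiv.intEquivNat q.num) * (v.2 + 1) ↔ q = ratOf v := by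
    intro q
    have h1 := (code_int q.num).1
    set p := codePos (Equiv.intEquivNat q.num)
    set m := codeNeg (Equiv.intEquivNat q.num)
    have hq : q = ((p : ℚ) - m) / q.den := by
      conv_lhs => rw [← Rat.num_div_den q]
      rw [h1]; push_cast; rfl
    have hd : (q.den : ℚ) ≠ 0 := by exact_mod_cast q.den_nz
    have hv : (v.2 : ℚ) + 1 ≠ 0 := by positivity
    have hq2 : q = ratOf v ↔ ((p : ℚ) - m) / q.den = ratOf v := by rw [← hq]
    rw [hq2, ratOf, div_eq_div_iff hd hv]
    rw [← Nat.cast_inj (R := ℚ)]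
    push_cast
    constructor <;> intro h <;> linarith
  constructor
  · rintro ⟨h1, h2⟩
    obtain ⟨q, rfl⟩ := (ratValid_iff x).1 h1
    change ratPairCode q = _
    change codePos (ratPairCode q).unpair.1 * (v.2 + 1) + v.1.2 * (ratPairCode q).unpair.2 =
      v.1.1 * (ratPairCode q).unpair.2 + codeNeg (ratPairCode q).unpair.1 * (v.2 + 1) at h2
    rw [ratPairCode_eq] at h2
    simp only [Nat.unpair_pair] at h2
    rw [(key q).1 h2]
  · rintro rfl
    refine ⟨(ratValid_iff _).2 ⟨_, rfl⟩, ?_⟩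
    rw [ratPairCode_eq]
    simp only [Nat.unpair_pair]
    exact (key _).2 rfl

theorem ratGraph_primrec : PrimrecRel ratGraph := by
  have hpos : Primrec codePos :=
    Primrec.ite (Primrec.eq.comp (Primrec.nat_mod.comp Primrec.id (Primrec.const 2))
      (Primrec.const 0)) (Primrec.nat_div.comp Primrec.id (Primrec.const 2)) (Primrec.const 0)
  have hneg : Primrec codeNeg :=
    Primrec.ite (Primrec.eq.comp (Primrec.nat_mod.comp Primrec.id (Primrec.const 2))
      (Primrec.const 0)) (Primrec.const 0)
      (Primrec.succ.comp (Primrec.nat_div.comp Primrec.id (Primrec.const 2)))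
  have h1 : PrimrecPred (fun w : ((ℕ × ℕ) × ℕ) × ℕ => ratValid w.2) :=
    ratValid_primrec.comp Primrec.snd
  have u1 : Primrec (fun w : ((ℕ × ℕ) × ℕ) × ℕ => w.2.unpair.1) :=
    Primrec.fst.comp (Primrec.unpair.comp Primrec.snd)
  have u2 : Primrec (fun w : ((ℕ × ℕ) × ℕ) × ℕ => w.2.unpair.2) :=
    Primrec.snd.comp (Primrec.unpair.comp Primrec.snd)
  have d : Primrec (fun w : ((ℕ × ℕ) × ℕ) × ℕ => w.1.2 + 1) :=
    Primrec.succ.comp (Primrec.snd.comp Primrec.fst)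
  have a : Primrec (fun w : ((ℕ × ℕ) × ℕ) × ℕ => w.1.1.1) :=
    Primrec.fst.comp (Primrec.fst.comp Primrec.fst)
  have b : Primrec (fun w : ((ℕ × ℕ) × ℕ) × ℕ => w.1.1.2) :=
    Primrec.snd.comp (Primrec.fst.comp Primrec.fst)
  have h2 := Primrec.eq.comp
    (Primrec.nat_add.comp (Primrec.nat_mul.comp (hpos.comp u1) d) (Primrec.nat_mul.comp b u2))
    (Primrec.nat_add.comp (Primrec.nat_mul.comp a u2) (Primrec.nat_mul.comp (hneg.comp u1) d))
  exact h1.and h2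

theorem ratOf_computable : Computable ratOf := by
  classical
  have hc : Computable (fun v => ratPairCode (ratOf v)) := by
    have hdec : Computable₂ (fun v x => decide (ratGraph v x)) :=
      (ratGraph_primrec.decide).to_comp
    have hr := Partrec.rfind hdec.partrec₂
    refine hr.of_eq fun v => ?_
    refine Part.eq_some_iff.2 ?_
    rw [Nat.mem_rfind]
    refine ⟨?_, ?_⟩
    · simpa using (ratGraph_iff v _).2 rfl
    · intro m hm
      refine Part.mem_some_iff.2 ?_
      symm
      rw [decide_eq_false_iff_not, ratGraph_iff]
      exact hm.ne
  refine Computable.encode_iff.1 ?_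
  exact (ratCount_primrec.to_comp.comp hc).of_eq fun v => (ratEncode_eq _).symm

end RatCodes

section RE

theorem REPred.exists_snd {α β : Type*} [Primcodable α] [Primcodable β] {p : α × β → Prop}
    (hp : REPred p) : REPred (fun a => ∃ b, p (a, b)) := by
  obtain ⟨c, hc⟩ := Nat.Partrec.Code.exists_code.1 hp
  have key : ∀ (a : α) (j : ℕ), (c.eval (Nat.pair (Encodable.encode a) j)).Dom ↔
      ∃ b : β, Encodable.decode j = some b ∧ p (a, b) := by
    intro a j
    rw [hc]
    cases h : (Encodable.decode j : Option β) with
    | none => simp [h, Part.bind_none]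
    | some b => simp [h, Part.assert]
  have hcomp : Computable₂ (fun (a : α) (n : ℕ) =>
      (Nat.Partrec.Code.evaln n.unpair.1 c (Nat.pair (Encodable.encode a) n.unpair.2)).isSome) := by
    have h1 : Primrec (fun v : α × ℕ => ((v.2.unpair.1, c),
      Nat.pair (Encodable.encode v.1) v.2.unpair.2)) :=
      Primrec.pair (Primrec.pair (Primrec.fst.comp (Primrec.unpair.comp Primrec.snd))
        (Primrec.const c)) (Primrec₂.natPair.comp (Primrec.encode.comp Primrec.fst)
          (Primrec.snd.comp (Primrec.unpair.comp Primrec.snd)))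
    exact (Primrec.option_isSome.comp (Nat.Partrec.Code.primrec_evaln.comp h1)).to_comp
  refine (Partrec.dom_re (Partrec.rfind hcomp.partrec₂)).of_eq fun a => ?_
  rw [Nat.rfind_dom]
  constructor
  · rintro ⟨n, hn, -⟩
    replace hn := Part.mem_some_iff.1 hn
    obtain ⟨x, hx⟩ := Option.isSome_iff_exists.1 hn.symm
    have := Nat.Partrec.Code.evaln_sound hx
    obtain ⟨b, -, hb⟩ := (key a n.unpair.2).1 (Part.dom_iff_mem.2 ⟨x, this⟩)
    exact ⟨b, hb⟩
  · rintro ⟨b, hb⟩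
    obtain ⟨x, hx⟩ := Part.dom_iff_mem.1 ((key a (Encodable.encode b)).2 ⟨b, Encodable.encodek b, hb⟩)
    obtain ⟨k, hk⟩ := Nat.Partrec.Code.evaln_complete.1 hx
    refine ⟨Nat.pair k (Encodable.encode b), ?_, fun _ => trivial⟩
    refine Part.mem_some_iff.2 ?_
    symm
    simp only [Nat.unpair_pair]
    exact Option.isSome_iff_exists.2 ⟨x, hk⟩

theorem REPred.comp_computable {α β : Type*} [Primcodable α] [Primcodable β] {p : β → Prop}
    (hp : REPred p) {f : α → β} (hf : Computable f) : REPred (fun a => p (f a)) :=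
  Partrec.comp hp hf

theorem REPred.and_re {α : Type*} [Primcodable α] {p q : α → Prop}
    (hp : REPred p) (hq : REPred q) : REPred (fun a => p a ∧ q a) := by
  have h2 : Partrec₂ (fun (a : α) (_ : Unit) => Part.assert (q a) fun _ => Part.some ()) :=
    hq.comp_computable (Computable.fst : Computable (Prod.fst : α × Unit → α))
  refine (Partrec.dom_re (Partrec.bind hp h2)).of_eq fun a => ?_
  simp [Part.assert]

theorem REPred.or_re {α : Type*} [Primcodable α] {p q : α → Prop}
    (hp : REPred p) (hq : REPred q) : REPred (fun a => p a ∨ q a) := by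
  obtain ⟨k, hk, h⟩ := Partrec.merge' hp hq
  refine (Partrec.dom_re hk).of_eq fun a => ?_
  rw [(h a).2]
  simp [Part.assert]

theorem re_reduction {α : Type*} [Primcodable α] {p q : α → Prop}
    (hp : REPred p) (hq : REPred q) (hpq : ∀ a, p a ∨ q a) :
    ∃ f : α → Bool, Computable f ∧ (∀ a, f a = true → p a) ∧ (∀ a, f a = false → q a) := by
  have h1 : Partrec (fun a => (Part.assert (p a) fun _ => Part.some ()).map fun _ => true) :=
    hp.map (Computable.const true).to₂
  have h2 : Partrec (fun a => (Part.assert (q a) fun _ => Part.some ()).map fun _ => false) :=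
    hq.map (Computable.const false).to₂
  obtain ⟨k, hk, h⟩ := Partrec.merge' h1 h2
  have hd : ∀ a, (k a).Dom := fun a => by
    rw [(h a).2]
    simpa [Part.assert] using hpq a
  refine ⟨fun a => (k a).get (hd a), ?_, ?_, ?_⟩
  · exact hk.of_eq fun a => by simp
  · intro a ha
    have := (h a).1 true (ha ▸ Part.get_mem _)
    simpa [Part.assert] using this
  · intro a ha
    have := (h a).1 false (ha ▸ Part.get_mem _)
    simpa [Part.assert] using this

end RE

/-! ### Geometry of `Ψ(T)` -/

section Geometry

/-- The ternary value of a binary string. -/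
def trit (σ : List Bool) : ℕ := σ.foldl (fun a b => 3 * a + if b then 2 else 0) 0

theorem trit_snoc (σ : List Bool) (b : Bool) :
    trit (σ ++ [b]) = 3 * trit σ + if b then 2 else 0 := by
  simp [trit]

theorem psiPt_snd (σ : List Bool) : (psiPt σ).2 = (1 / 2 : ℝ) ^ σ.length := by
  simp [psiPt]

theorem psiPt_fst_nil : (psiPt []).1 = 1 / 2 := by
  simp [psiPt]

theorem psiPt_fst_snoc (σ : List Bool) (b : Bool) :
    (psiPt (σ ++ [b])).1 =
      (psiPt σ).1 + (if b then 1 else -1) * (1 / 3 : ℝ) ^ (σ.length + 1) := by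
  have h : ∑ i ∈ Finset.range σ.length,
      (if (σ ++ [b]).getD i false then (3:ℝ) ^ (-((i : ℤ) + 1)) else 0) =
      ∑ i ∈ Finset.range σ.length,
        (if σ.getD i false then (3:ℝ) ^ (-((i : ℤ) + 1)) else 0) := by
    refine Finset.sum_congr rfl fun i hi => ?_
    rw [List.getD_append _ _ _ _ (Finset.mem_range.1 hi)]
  have h2 : (σ ++ [b]).getD σ.length false = b := by simp
  have h3 : (3:ℝ) ^ (-(σ.length : ℤ)) = (1 / 3 : ℝ) ^ σ.length := by simp
  have h4 : (3:ℝ) ^ (-((σ.length : ℤ) + 1)) = (1 / 3 : ℝ) ^ (σ.length + 1) := by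
    rw [← Nat.cast_succ, zpow_neg, zpow_natCast]; simp
  have hl : (σ ++ [b]).length = σ.length + 1 := by simp
  simp only [psiPt, hl, Finset.sum_range_succ, h, h2, h3]
  push_cast
  rw [h4, pow_succ]
  cases b <;> simp <;> ring

theorem psiPt_fst_eq (σ : List Bool) :
    (psiPt σ).1 = (trit σ + 1 / 2 : ℝ) * (1 / 3 : ℝ) ^ σ.length := by
  induction σ using List.reverseRecOn with
  | nil => simp [psiPt_fst_nil, trit]
  | append_singleton σ b ih =>
    rw [psiPt_fst_snoc, ih, trit_snoc]
    simp only [List.length_append, List.length_singleton, pow_succ]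
    cases b <;> simp <;> ring

theorem mid_below (σ ρ : List Bool) :
    |(psiPt (σ ++ ρ)).1 - (psiPt σ).1| ≤
      ((1 / 3 : ℝ) ^ σ.length - (1 / 3 : ℝ) ^ (σ ++ ρ).length) / 2 := by
  induction ρ using List.reverseRecOn with
  | nil => simp
  | append_singleton ρ b ih =>
    rw [← List.append_assoc, psiPt_fst_snoc]
    have hl : ((σ ++ ρ) ++ [b]).length = (σ ++ ρ).length + 1 := List.length_append
    rw [hl, pow_succ]
    rw [abs_le] at ih ⊢
    have : 0 < (1 / 3 : ℝ) ^ (σ ++ ρ).length := by positivity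
    cases b <;> simp only [if_true, if_false, Bool.false_eq_true] <;>
      constructor <;> linarith [ih.1, ih.2]

theorem mid_sep (n : ℕ) : ∀ σ τ : List Bool, σ.length = n → τ.length = n → σ ≠ τ →
    2 * (1 / 3 : ℝ) ^ n ≤ |(psiPt σ).1 - (psiPt τ).1| := by
  induction n with
  | zero =>
    intro σ τ h1 h2 h
    rw [List.length_eq_zero_iff] at h1 h2
    exact absurd (h1.trans h2.symm) h
  | succ n ih =>
    intro σ τ h1 h2 h
    rcases List.eq_nil_or_concat σ with rfl | ⟨σ, b, rfl⟩
    · simp at h1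
    rcases List.eq_nil_or_concat τ with rfl | ⟨τ, c, rfl⟩
    · simp at h2
    simp only [List.concat_eq_append, List.length_append, List.length_singleton,
      Nat.add_right_cancel_iff] at h1 h2 h ⊢
    rw [psiPt_fst_snoc, psiPt_fst_snoc, h1, h2]
    have hp : 0 < (1 / 3 : ℝ) ^ n := by positivity
    rw [pow_succ]
    by_cases hst : σ = τ
    · subst hst
      cases b <;> cases c
      · simp at h
      · simp only [if_true, if_false, Bool.false_eq_true]
        rw [abs_sub_comm]
        refine le_trans ?_ (le_abs_self _)
        linarith
      · simp only [if_true, if_false, Bool.false_eq_true]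
        refine le_trans ?_ (le_abs_self _)
        linarith
      · simp at h
    · have := ih σ τ h1 h2 hst
      rw [le_abs'] at this ⊢
      cases b <;> cases c <;> simp only [if_true, if_false, Bool.false_eq_true] <;>
        rcases this with h | h
      all_goals first
        | (left; linarith)
        | (right; linarith)

theorem eq_of_mid_close {n : ℕ} {σ τ : List Bool} (hσ : σ.length = n) (hτ : τ.length = n) {x : ℝ}
    {a b : ℝ} (h1 : |x - (psiPt σ).1| ≤ a) (h2 : |x - (psiPt τ).1| ≤ b)
    (hab : a + b < 2 * (1 / 3 : ℝ) ^ n) : σ = τ := by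
  by_contra h
  have h3 := mid_sep n σ τ hσ hτ h
  have h4 := abs_sub_le (psiPt σ).1 x (psiPt τ).1
  rw [abs_sub_comm (psiPt σ).1 x] at h4
  linarith

/-- The region around level `n` attached to `σ`. -/
def levelRegion (n : ℕ) (σ : List Bool) : Set (ℝ × ℝ) :=
  {p | |p.1 - (psiPt σ).1| ≤ (1 / 3 : ℝ) ^ n / 2} ∩
    {p | |p.1 - (psiPt σ).1| * (1 / 2 : ℝ) ^ n ≤ |p.2 - (1 / 2 : ℝ) ^ n| * (1 / 3 : ℝ) ^ n}

theorem levelRegion_closed (n : ℕ) (σ : List Bool) : IsClosed (levelRegion n σ) := by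
  refine IsClosed.inter (isClosed_le (by fun_prop) (by fun_prop)) ?_
  exact isClosed_le (by fun_prop) (by fun_prop)

/-- Points well below level `n` satisfy the second condition of `levelRegion`. -/
theorem low_ok {n : ℕ} {a y : ℝ} (ha : a ≤ (1 / 3 : ℝ) ^ n / 2) (hy : 2 * y ≤ (1 / 2 : ℝ) ^ n) :
    a * (1 / 2 : ℝ) ^ n ≤ |y - (1 / 2 : ℝ) ^ n| * (1 / 3 : ℝ) ^ n := by
  have hP2 : 0 < (1 / 2 : ℝ) ^ n := by positivity
  have hP3 : 0 < (1 / 3 : ℝ) ^ n := by positivity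
  have h1 : (1 / 2 : ℝ) ^ n / 2 ≤ |y - (1 / 2 : ℝ) ^ n| := by
    rw [abs_sub_comm]
    refine le_trans ?_ (le_abs_self _)
    linarith
  calc a * (1 / 2 : ℝ) ^ n ≤ (1 / 3 : ℝ) ^ n / 2 * (1 / 2 : ℝ) ^ n :=
        mul_le_mul_of_nonneg_right ha hP2.le
    _ = (1 / 2 : ℝ) ^ n / 2 * (1 / 3 : ℝ) ^ n := by ring
    _ ≤ _ := mul_le_mul_of_nonneg_right h1 hP3.le

theorem two_le_pow {k n : ℕ} (h : k < n) : 2 * (1 / 2 : ℝ) ^ n ≤ (1 / 2 : ℝ) ^ k := by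
  have : (1 / 2 : ℝ) ^ n ≤ (1 / 2 : ℝ) ^ (k + 1) :=
    pow_le_pow_of_le_one (by norm_num) (by norm_num) h
  rw [pow_succ] at this
  linarith

theorem psiSet_level {T : Set (List Bool)} (hT : IsTreeOfStrings T) {p : ℝ × ℝ}
    (hp : p ∈ PsiSet T) (n : ℕ) : 3 / 2 * (1 / 2 : ℝ) ^ n ≤ p.2 ∨
      ∃ σ ∈ T, σ.length = n ∧ p ∈ levelRegion n σ := by
  have hfin : (T ∩ {σ | σ.length = n}).Finite :=
    (List.finite_length_eq Bool n).subset inter_subset_right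
  have hcl : IsClosed ({p : ℝ × ℝ | 3 / 2 * (1 / 2 : ℝ) ^ n ≤ p.2} ∪
      ⋃ σ ∈ T ∩ {σ | σ.length = n}, levelRegion n σ) :=
    (isClosed_le (by fun_prop) (by fun_prop)).union
      (hfin.isClosed_biUnion fun σ _ => levelRegion_closed n σ)
  have hP2 : 0 < (1 / 2 : ℝ) ^ n := by positivity
  have hP3 : 0 < (1 / 3 : ℝ) ^ n := by positivity
  have htake : ∀ τ ∈ T, n ≤ τ.length → τ.take n ∈ T ∧ (τ.take n).length = n ∧
      |(psiPt τ).1 - (psiPt (τ.take n)).1| ≤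
        ((1 / 3 : ℝ) ^ n - (1 / 3 : ℝ) ^ τ.length) / 2 := by
    intro τ hτ hn
    have hl : (τ.take n).length = n := by simp [hn]
    refine ⟨hT τ hτ _ (List.take_prefix n τ), hl, ?_⟩
    have := mid_below (τ.take n) (τ.drop n)
    rwa [List.take_append_drop, hl] at this
  have hsubset : PsiSet T ⊆ _ := closure_minimal (s := psiPt '' T ∪ ⋃ σ ∈ T, ⋃ (_ : σ ≠ []),
      segment ℝ (psiPt σ.dropLast) (psiPt σ)) ?_ hcl
  · rcases hsubset hp with h | h
    · exact Or.inl h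
    · right
      simp only [mem_iUnion] at h
      obtain ⟨σ, ⟨h1, h2⟩, h3⟩ := h
      exact ⟨σ, h1, h2, h3⟩
  · rintro p (⟨τ, hτ, rfl⟩ | hp)
    · rcases lt_or_ge τ.length n with hk | hk
      · left
        simp only [mem_ofPred_eq]
        rw [psiPt_snd]
        have := two_le_pow hk
        linarith
      · right
        obtain ⟨h1, h2, h3⟩ := htake τ hτ hk
        simp only [mem_iUnion]
        have hle : |(psiPt τ).1 - (psiPt (τ.take n)).1| ≤ (1 / 3 : ℝ) ^ n / 2 := by
          have : 0 < (1 / 3 : ℝ) ^ τ.length := by positivity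
          linarith
        refine ⟨τ.take n, ⟨h1, h2⟩, hle, ?_⟩
        rcases hk.eq_or_lt with hk | hk
        · have h0 : |(psiPt τ).1 - (psiPt (τ.take n)).1| = 0 := by
            refine le_antisymm ?_ (abs_nonneg _)
            rw [← hk] at h3
            linarith
          change |(psiPt τ).1 - (psiPt (τ.take n)).1| * _ ≤ _
          rw [h0, zero_mul]
          positivity
        · refine low_ok hle ?_
          rw [psiPt_snd]
          exact two_le_pow hk
    · simp only [mem_iUnion] at hp
      obtain ⟨τ, hτ, hne, hseg⟩ := hp
      obtain ⟨ρ, b, hτe⟩ := (List.eq_nil_or_concat τ).resolve_left hne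
      rw [List.concat_eq_append] at hτe
      have hd : τ.dropLast = ρ := by rw [hτe]; simp
      rw [hd, segment_eq_image'] at hseg
      obtain ⟨t, ⟨ht0, ht1⟩, rfl⟩ := hseg
      have hl : τ.length = ρ.length + 1 := by rw [hτe]; simp
      have hy : (psiPt ρ + t • (psiPt τ - psiPt ρ)).2 = (2 - t) * (1 / 2 : ℝ) ^ τ.length := by
        simp only [Prod.snd_add, Prod.smul_snd, Prod.snd_sub, psiPt_snd, smul_eq_mul, hl, pow_succ]
        ring
      have hmid : (psiPt τ).1 = (psiPt ρ).1 + (if b then 1 else -1) * (1 / 3 : ℝ) ^ τ.length := by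
        rw [hl, ← psiPt_fst_snoc, ← hτe]
      have hx : (psiPt ρ + t • (psiPt τ - psiPt ρ)).1 =
          (psiPt ρ).1 + t * ((if b then 1 else -1) * (1 / 3 : ℝ) ^ τ.length) := by
        simp only [Prod.fst_add, Prod.smul_fst, Prod.fst_sub, smul_eq_mul]
        rw [hmid]; ring
      set p := psiPt ρ + t • (psiPt τ - psiPt ρ)
      rcases lt_trichotomy τ.length n with hk | hk | hk
      · left
        simp only [mem_ofPred_eq]
        rw [hy]
        have := two_le_pow hk
        nlinarith
      · rw [hk] at hx hy hmid hl
        rcases le_total t (1 / 2) with ht | ht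
        · left
          simp only [mem_ofPred_eq]
          rw [hy]
          nlinarith
        · right
          simp only [mem_iUnion]
          have habs : |p.1 - (psiPt τ).1| = (1 - t) * (1 / 3 : ℝ) ^ n := by
            rw [hx, hmid]
            have h0 : 0 ≤ (1 - t) * (1 / 3 : ℝ) ^ n := mul_nonneg (by linarith) hP3.le
            cases b
            · simp only [if_false, Bool.false_eq_true]
              rw [← abs_of_nonneg h0]
              congr 1; ring
            · simp only [if_true]
              rw [← abs_of_nonneg h0, abs_sub_comm]
              congr 1; ring
          refine ⟨τ, ⟨hτ, hk⟩, ?_, ?_⟩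
          · change |p.1 - (psiPt τ).1| ≤ _
            rw [habs]; nlinarith
          · have h6 : (1 - t) * (1 / 2 : ℝ) ^ n ≤ |p.2 - (1 / 2 : ℝ) ^ n| := by
              refine le_trans (le_of_eq ?_) (le_abs_self _)
              rw [hy]; ring
            change |p.1 - (psiPt τ).1| * _ ≤ |p.2 - _| * _
            rw [habs]
            have := mul_le_mul_of_nonneg_right h6 hP3.le
            linarith
      · right
        have hk' : n ≤ ρ.length := by omega
        have hρ : ρ ∈ T := hT τ hτ ρ ⟨[b], hτe.symm⟩
        obtain ⟨h1, h2, h3⟩ := htake ρ hρ hk'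
        simp only [mem_iUnion]
        have h4 : |p.1 - (psiPt ρ).1| = t * (1 / 3 : ℝ) ^ ρ.length / 3 := by
          rw [hx, add_sub_cancel_left, abs_mul, abs_mul, abs_of_nonneg ht0, hl, pow_succ]
          have hb : |(if b then 1 else -1 : ℝ)| = 1 := by cases b <;> simp
          rw [hb, abs_of_pos (by positivity)]
          ring
        have hq : 0 < (1 / 3 : ℝ) ^ ρ.length := by positivity
        have hq2 : 0 < (1 / 2 : ℝ) ^ ρ.length := by positivity
        have hle : |p.1 - (psiPt (ρ.take n)).1| ≤ (1 / 3 : ℝ) ^ n / 2 := by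
          have := abs_sub_le p.1 (psiPt ρ).1 (psiPt (ρ.take n)).1
          nlinarith
        refine ⟨ρ.take n, ⟨h1, h2⟩, hle, ?_⟩
        rcases hk'.eq_or_lt with hk' | hk'
        · have h5 : ρ.take n = ρ := by rw [hk']; simp
          change |p.1 - (psiPt (ρ.take n)).1| * _ ≤ |p.2 - _| * _
          rw [h5, h4, ← hk']
          have h6 : t * (1 / 2 : ℝ) ^ n / 2 ≤ |p.2 - (1 / 2 : ℝ) ^ n| := by
            rw [abs_sub_comm]
            refine le_trans (le_of_eq ?_) (le_abs_self _)
            rw [hy, hl, ← hk', pow_succ]; ring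
          have h7 := mul_le_mul_of_nonneg_right h6 hP3.le
          have h8 : 0 ≤ t * (1 / 2 : ℝ) ^ n * (1 / 3 : ℝ) ^ n := by positivity
          linarith
        · refine low_ok hle ?_
          rw [hy, hl, pow_succ]
          have := two_le_pow hk'
          nlinarith

theorem psiSet_snd_nonneg {T : Set (List Bool)} {p : ℝ × ℝ} (hp : p ∈ PsiSet T) : 0 ≤ p.2 := by
  have hcl : IsClosed {p : ℝ × ℝ | 0 ≤ p.2} := isClosed_le (by fun_prop) (by fun_prop)
  refine closure_minimal (s := psiPt '' T ∪ ⋃ σ ∈ T, ⋃ (_ : σ ≠ []),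
      segment ℝ (psiPt σ.dropLast) (psiPt σ)) ?_ hcl hp
  rintro p (⟨τ, hτ, rfl⟩ | hp)
  · simp only [mem_ofPred_eq]; rw [psiPt_snd]; positivity
  · simp only [mem_iUnion] at hp
    obtain ⟨τ, hτ, hne, hseg⟩ := hp
    have hconv : Convex ℝ {p : ℝ × ℝ | 0 ≤ p.2} :=
      (convex_Ici (0:ℝ)).linear_preimage (LinearMap.snd ℝ ℝ ℝ)
    refine hconv.segment_subset ?_ ?_ hseg <;>
    · simp only [mem_ofPred_eq]; rw [psiPt_snd]; positivity

theorem region_sep {T : Set (List Bool)} (hT : IsTreeOfStrings T) {D : Set (ℝ × ℝ)}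
    (hsub : D ⊆ PsiSet T) (hD : IsPreconnected D) {n : ℕ} {σ : List Bool} (hσ : σ.length = n)
    (hnot : psiPt σ ∉ D) {q : ℝ × ℝ} (hq : q ∈ D)
    (hq1 : |q.1 - (psiPt σ).1| < 3 / 4 * (1 / 3 : ℝ) ^ n) (hq2 : q.2 < (1 / 2 : ℝ) ^ n)
    {p : ℝ × ℝ} (hp : p ∈ D) :
    |p.1 - (psiPt σ).1| < 3 / 4 * (1 / 3 : ℝ) ^ n ∧ p.2 < (1 / 2 : ℝ) ^ n := by
  have hP2 : 0 < (1 / 2 : ℝ) ^ n := by positivity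
  have hP3 : 0 < (1 / 3 : ℝ) ^ n := by positivity
  set U : Set (ℝ × ℝ) := {p | |p.1 - (psiPt σ).1| < 3 / 4 * (1 / 3 : ℝ) ^ n} ∩ {p | p.2 < (1 / 2 : ℝ) ^ n}
  set V : Set (ℝ × ℝ) := {p | (1 / 3 : ℝ) ^ n / 2 < |p.1 - (psiPt σ).1|} ∪ {p | (1 / 2 : ℝ) ^ n < p.2}
  have hU : IsOpen U := (isOpen_lt (by fun_prop) (by fun_prop)).inter
    (isOpen_lt (by fun_prop) (by fun_prop))
  have hV : IsOpen V := (isOpen_lt (by fun_prop) (by fun_prop)).union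
    (isOpen_lt (by fun_prop) (by fun_prop))
  have hcov : D ⊆ U ∪ V := by
    intro r hr
    by_cases hrV : r ∈ V
    · exact Or.inr hrV
    left
    have hrV' : |r.1 - (psiPt σ).1| ≤ (1 / 3 : ℝ) ^ n / 2 ∧ r.2 ≤ (1 / 2 : ℝ) ^ n := by
      constructor
      · by_contra h; exact hrV (Or.inl (not_le.1 h))
      · by_contra h; exact hrV (Or.inr (not_le.1 h))
    have hlt : |r.1 - (psiPt σ).1| < 3 / 4 * (1 / 3 : ℝ) ^ n := by linarith [hrV'.1]
    refine ⟨hlt, lt_of_le_of_ne hrV'.2 fun heq => ?_⟩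
    rcases psiSet_level hT (hsub hr) n with h | ⟨τ, -, hτ, h1, h2⟩
    · linarith
    · obtain rfl := eq_of_mid_close hσ hτ hrV'.1 h1 (by linarith)
      change |r.1 - (psiPt σ).1| * _ ≤ |r.2 - _| * _ at h2
      rw [heq, sub_self, abs_zero, zero_mul] at h2
      have h3 : |r.1 - (psiPt σ).1| ≤ 0 := by
        by_contra hc
        have := mul_pos (not_le.1 hc) hP2
        linarith
      apply hnot
      have h4 : r = psiPt σ := by
        refine Prod.ext ?_ ?_
        · have := abs_eq_zero.1 (le_antisymm h3 (abs_nonneg _))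
          linarith
        · rw [heq, psiPt_snd, hσ]
      rwa [← h4]
  by_contra hpU
  have hpV : p ∈ V := (hcov hp).resolve_left hpU
  obtain ⟨r, hr, hrU, hrV⟩ := hD U V hU hV hcov ⟨q, hq, hq1, hq2⟩ ⟨p, hp, hpV⟩
  have hrU1 : |r.1 - (psiPt σ).1| < 3 / 4 * (1 / 3 : ℝ) ^ n := hrU.1
  have hrU2 : r.2 < (1 / 2 : ℝ) ^ n := hrU.2
  rcases psiSet_level hT (hsub hr) n with h | ⟨τ, -, hτ, h1, h2⟩
  · linarith
  · obtain rfl := eq_of_mid_close hσ hτ hrU1.le h1 (by linarith)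
    rcases hrV with h | h
    · have h' : (1 / 3 : ℝ) ^ n / 2 < |r.1 - (psiPt σ).1| := h
      exact absurd h1 (not_le.2 h')
    · have h' : (1 / 2 : ℝ) ^ n < r.2 := h
      linarith

end Geometry

/-! ### Effective lemmas -/

section Effective

theorem isTree_treeOfClosed (P : Set (ℕ → Bool)) : IsTreeOfStrings (treeOfClosed P) := by
  rintro σ ⟨a, ha, hc⟩ τ ⟨ρ, rfl⟩
  refine ⟨a, ha, fun i hi => ?_⟩
  have := hc i (by rw [List.length_append]; omega)
  rw [this, List.getD_append _ _ _ _ hi]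

theorem finite_primrecPred {S : Set (List Bool)} (hS : S.Finite) :
    PrimrecPred (fun σ => σ ∈ S) := by
  refine Set.Finite.induction_on S hS ?_ ?_
  · have h : PrimrecPred (fun _ : List Bool => (0 : ℕ) = 1) :=
      Primrec.eq.comp (Primrec.const 0) (Primrec.const 1)
    exact h.of_eq fun σ => by simp
  · intro a s _ _ ih
    have h : PrimrecPred (fun σ : List Bool => σ = a) :=
      Primrec.eq.comp Primrec.id (Primrec.const a)
    exact (h.or ih).of_eq fun σ => by simp

theorem not_treeImmune_of {P : Set (ℕ → Bool)} (him : TreeImmune P) {Y N : List Bool → Prop}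
    (hY : REPred Y) (hN : REPred N) (hYN : ∀ σ, Y σ ∨ N σ)
    (hYT : ∀ σ, Y σ → σ ∈ treeOfClosed P) (n0 : ℕ)
    (hpar : ∀ σ, n0 < σ.length → Y σ → ¬ N σ.dropLast)
    (hex : ∀ n, n0 ≤ n → ∃ σ : List Bool, σ.length = n ∧ ¬ N σ) : False := by
  classical
  obtain ⟨f, hf, hfY, hfN⟩ := re_reduction hY hN hYN
  set S : Set (List Bool) := {τ | τ.length < n0} ∩ treeOfClosed P with hSdef
  have hSfin : S.Finite := (List.finite_length_lt Bool n0).subset inter_subset_left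
  have hftrue : ∀ σ, ¬ N σ → f σ = true := by
    intro σ h
    cases hv : f σ with
    | true => rfl
    | false => exact absurd (hfN σ hv) h
  let T' : Set (List Bool) := {τ | (n0 ≤ τ.length ∧ f τ = true) ∨ τ ∈ S}
  have hT'T : T' ⊆ treeOfClosed P := by
    rintro τ (⟨-, h⟩ | h)
    · exact hYT τ (hfY τ h)
    · exact h.2
  have hstep : ∀ (σ : List Bool) (b : Bool), σ ++ [b] ∈ T' → σ ∈ T' := by
    intro σ b h
    have hσT : σ ∈ treeOfClosed P := isTree_treeOfClosed P _ (hT'T h) σ ⟨[b], rfl⟩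
    rcases lt_or_ge σ.length n0 with hl | hl
    · exact Or.inr ⟨hl, hσT⟩
    · left
      refine ⟨hl, ?_⟩
      rcases h with ⟨h1, h2⟩ | ⟨h1, -⟩
      · apply hftrue
        have := hpar (σ ++ [b]) (by simp; omega) (hfY _ h2)
        simpa using this
      · have h1' : (σ ++ [b]).length < n0 := h1
        simp at h1'
        omega
  have htree : IsTreeOfStrings T' := by
    rintro σ hσ τ ⟨ρ, rfl⟩
    induction ρ using List.reverseRecOn with
    | nil => simpa using hσ
    | append_singleton ρ b ih =>
      rw [← List.append_assoc] at hσ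
      exact ih (hstep _ b hσ)
  have hinf : T'.Infinite := by
    intro hfin
    obtain ⟨M, hM⟩ := (hfin.image List.length).bddAbove
    obtain ⟨σ, h1, h2⟩ := hex (max n0 (M + 1)) (le_max_left _ _)
    have hmem : σ ∈ T' := Or.inl ⟨by rw [h1]; exact le_max_left _ _, hftrue σ h2⟩
    have := hM ⟨σ, hmem, rfl⟩
    have h3 := le_max_right n0 (M + 1)
    omega
  refine him T' htree hT'T hinf ?_
  have hlen : PrimrecPred (fun σ : List Bool => n0 ≤ σ.length) :=
    Primrec.nat_le.comp (Primrec.const n0) Primrec.list_length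
  refine ComputablePred.computable_iff.2 ⟨fun σ => (decide (n0 ≤ σ.length) && f σ) || decide (σ ∈ S),
    ?_, ?_⟩
  · exact (Primrec.or.to_comp).comp ((Primrec.and.to_comp).comp hlen.decide.to_comp hf)
      (finite_primrecPred hSfin).decide.to_comp
  · funext σ
    simp [T']

theorem pow_primrec (k : ℕ) : Primrec (fun σ : List Bool => k ^ σ.length) :=
  (Primrec₂.unpaired'.1 Nat.Primrec.pow).comp (Primrec.const k) Primrec.list_length

theorem trit_primrec : Primrec trit := by
  have hg : Primrec (fun b : Bool => if b = true then 2 else 0) :=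
    Primrec.dom_finite _
  have hstep : Primrec (fun v : List Bool × (ℕ × Bool) => 3 * v.2.1 + if v.2.2 = true then 2 else 0) :=
    Primrec.nat_add.comp (Primrec.nat_mul.comp (Primrec.const 3) (Primrec.fst.comp Primrec.snd))
      (hg.comp (Primrec.snd.comp Primrec.snd))
  exact Primrec.list_foldl (f := fun σ : List Bool => σ) (g := fun _ => 0)
    (h := fun _ v => 3 * v.1 + if v.2 = true then 2 else 0) Primrec.id (Primrec.const 0) hstep

theorem ratOf_real (a b d : ℕ) (hd : 0 < d) :
    ((ratOf ((a, b), d - 1) : ℚ) : ℝ) = ((a : ℝ) - b) / d := by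
  obtain ⟨e, rfl⟩ : ∃ e, d = e + 1 := ⟨d - 1, by omega⟩
  simp [ratOf]

theorem mem_ballOfCode {c : (ℚ × ℚ) × ℚ} {x : ℝ × ℝ} : x ∈ ballOfCode c ↔
    |x.1 - (c.1.1 : ℝ)| < (c.2 : ℝ) ∧ |x.2 - (c.1.2 : ℝ)| < (c.2 : ℝ) := by
  unfold ballOfCode
  rw [mem_ofPred_eq, Prod.dist_eq, Real.dist_eq, Real.dist_eq, max_lt_iff]

theorem ce_meets {D : Set (ℝ × ℝ)} (hce : IsCEClosed D) {a b d a' d' r e : List Bool → ℕ}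
    (ha : Primrec a) (hb : Primrec b) (hd : Primrec d) (ha' : Primrec a') (hd' : Primrec d')
    (hr : Primrec r) (he : Primrec e) (pd : ∀ σ, 0 < d σ) (pd' : ∀ σ, 0 < d' σ)
    (pe : ∀ σ, 0 < e σ) :
    REPred (fun σ => ∃ p ∈ D, |p.1 - ((a σ : ℝ) - b σ) / d σ| < (r σ : ℝ) / e σ ∧
      |p.2 - (a' σ : ℝ) / d' σ| < (r σ : ℝ) / e σ) := by
  have hpred : ∀ {g : List Bool → ℕ}, Primrec g → Primrec (fun σ => g σ - 1) := fun hg =>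
    Primrec.nat_sub.comp hg (Primrec.const 1)
  have hc : Computable (fun σ : List Bool => ((ratOf ((a σ, b σ), d σ - 1),
      ratOf ((a' σ, 0), d' σ - 1)), ratOf ((r σ, 0), e σ - 1))) :=
    ((ratOf_computable.comp ((ha.pair hb).pair (hpred hd)).to_comp).pair
      (ratOf_computable.comp ((ha'.pair (Primrec.const 0)).pair (hpred hd')).to_comp)).pair
      (ratOf_computable.comp ((hr.pair (Primrec.const 0)).pair (hpred he)).to_comp)
  refine (REPred.comp_computable hce hc).of_eq fun σ => ?_
  have key : ∀ p : ℝ × ℝ, p ∈ ballOfCode ((ratOf ((a σ, b σ), d σ - 1),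
      ratOf ((a' σ, 0), d' σ - 1)), ratOf ((r σ, 0), e σ - 1)) ↔
      |p.1 - ((a σ : ℝ) - b σ) / d σ| < (r σ : ℝ) / e σ ∧
      |p.2 - (a' σ : ℝ) / d' σ| < (r σ : ℝ) / e σ := by
    intro p
    rw [mem_ballOfCode]
    simp only [ratOf_real _ _ _ (pd σ), ratOf_real _ _ _ (pd' σ), ratOf_real _ _ _ (pe σ),
      Nat.cast_zero, sub_zero]
  constructor
  · rintro ⟨p, h1, h2⟩
    exact ⟨p, h1, (key p).1 h2⟩
  · rintro ⟨p, h1, h2⟩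
    exact ⟨p, h1, (key p).2 h2⟩

theorem abs_lt_nat (t L a b R S e : ℕ) (hL : 0 < L) (he : 0 < e) :
    |(t : ℝ) / L - ((a : ℝ) - b) / e| < ((R : ℝ) - S) / e ↔
      t * e + (b + S) * L < (a + R) * L ∧ (a + S) * L < t * e + (b + R) * L := by
  have hL' : (0 : ℝ) < L := by exact_mod_cast hL
  have he' : (0 : ℝ) < e := by exact_mod_cast he
  have e1 : ((R : ℝ) - S) / e - ((t : ℝ) / L - ((a : ℝ) - b) / e) =
      (((a : ℝ) + R) * L - (t * e + (b + S) * L)) / (L * e) := by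
    field_simp
    ring
  have e2 : ((R : ℝ) - S) / e - (((a : ℝ) - b) / e - (t : ℝ) / L) =
      ((t * e + (b + R) * L) - ((a : ℝ) + S) * L) / (L * e) := by
    field_simp
    ring
  have hpos : (0 : ℝ) < L * e := mul_pos hL' he'
  rw [abs_sub_lt_iff, ← sub_pos, e1, ← sub_pos (b := ((a : ℝ) - b) / e - (t : ℝ) / L), e2,
    div_pos_iff_of_pos_right hpos, div_pos_iff_of_pos_right hpos, sub_pos, sub_pos]
  norm_cast

theorem cond_primrec {α : Type*} [Primcodable α] {t L a b R S e : α → ℕ} (ht : Primrec t)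
    (hL : Primrec L) (ha : Primrec a) (hb : Primrec b) (hR : Primrec R) (hS : Primrec S)
    (he : Primrec e) : PrimrecPred (fun x => t x * e x + (b x + S x) * L x < (a x + R x) * L x ∧
      (a x + S x) * L x < t x * e x + (b x + R x) * L x) := by
  have hadd : ∀ {f g : α → ℕ}, Primrec f → Primrec g → Primrec (fun x => f x + g x) :=
    fun hf hg => Primrec.nat_add.comp hf hg
  have hmul : ∀ {f g : α → ℕ}, Primrec f → Primrec g → Primrec (fun x => f x * g x) :=
    fun hf hg => Primrec.nat_mul.comp hf hg
  have hlt : ∀ {f g : α → ℕ}, Primrec f → Primrec g → PrimrecPred (fun x => f x < g x) :=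
    fun hf hg => Primrec.nat_lt.comp hf hg
  exact (hlt (hadd (hmul ht he) (hmul (hadd hb hS) hL)) (hmul (hadd ha hR) hL)).and
    (hlt (hmul (hadd ha hS) hL) (hadd (hmul ht he) (hmul (hadd hb hR) hL)))

theorem rat_common (q : ℚ) (e : ℕ) (he : 0 < e) (h : q.den ∣ e) :
    ∃ a b : ℕ, q = ratOf ((a, b), e - 1) := by
  obtain ⟨k, hk⟩ := h
  refine ⟨(q.num * k).toNat, (-(q.num * k)).toNat, ?_⟩
  have h1 : ((q.num * k).toNat : ℤ) - (-(q.num * k)).toNat = q.num * k := by omega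
  have h1' : (((q.num * k).toNat : ℚ)) - (-(q.num * k)).toNat = q.num * k := by
    exact_mod_cast congrArg (Int.cast : ℤ → ℚ) h1
  have h2 : ((e - 1 : ℕ) : ℚ) + 1 = e := by
    have : e - 1 + 1 = e := by omega
    exact_mod_cast this
  unfold ratOf
  simp only
  rw [h1', h2, hk]
  have hd : (q.den : ℚ) ≠ 0 := by exact_mod_cast q.den_ne_zero
  have hk0 : (k : ℚ) ≠ 0 := by
    rintro h0
    have : k = 0 := by exact_mod_cast h0
    subst this
    omega
  push_cast
  rw [mul_div_mul_right _ _ hk0, Rat.num_div_den]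

theorem psiPt_fst_nat (σ : List Bool) :
    (psiPt σ).1 = ((2 * trit σ + 1 : ℕ) : ℝ) / ((2 * 3 ^ σ.length : ℕ) : ℝ) := by
  rw [psiPt_fst_eq]
  push_cast
  rw [one_div, one_div, inv_pow]
  field_simp

theorem psiPt_snd_nat (σ : List Bool) :
    (psiPt σ).2 = ((1 : ℕ) : ℝ) / ((2 ^ σ.length : ℕ) : ℝ) := by
  rw [psiPt_snd]
  simp

theorem psiPt_notMem_re {D : Set (ℝ × ℝ)} (hD : IsPi01Closed D) :
    REPred (fun σ => psiPt σ ∉ D) := by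
  obtain ⟨W, hW, rfl⟩ := hD
  let β := ((ℕ × ℕ) × (ℕ × ℕ)) × ((ℕ × ℕ) × ℕ)
  have ha1 : Primrec (fun v : List Bool × β => v.2.1.1.1) :=
    Primrec.fst.comp (Primrec.fst.comp (Primrec.fst.comp Primrec.snd))
  have hb1 : Primrec (fun v : List Bool × β => v.2.1.1.2) :=
    Primrec.snd.comp (Primrec.fst.comp (Primrec.fst.comp Primrec.snd))
  have ha2 : Primrec (fun v : List Bool × β => v.2.1.2.1) :=
    Primrec.fst.comp (Primrec.snd.comp (Primrec.fst.comp Primrec.snd))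
  have hb2 : Primrec (fun v : List Bool × β => v.2.1.2.2) :=
    Primrec.snd.comp (Primrec.snd.comp (Primrec.fst.comp Primrec.snd))
  have hR : Primrec (fun v : List Bool × β => v.2.2.1.1) :=
    Primrec.fst.comp (Primrec.fst.comp (Primrec.snd.comp Primrec.snd))
  have hS : Primrec (fun v : List Bool × β => v.2.2.1.2) :=
    Primrec.snd.comp (Primrec.fst.comp (Primrec.snd.comp Primrec.snd))
  have hd : Primrec (fun v : List Bool × β => v.2.2.2) :=
    Primrec.snd.comp (Primrec.snd.comp Primrec.snd)
  have he : Primrec (fun v : List Bool × β => v.2.2.2 + 1) := Primrec.succ.comp hd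
  have ht : Primrec (fun v : List Bool × β => 2 * trit v.1 + 1) :=
    Primrec.succ.comp (Primrec.nat_mul.comp (Primrec.const 2) (trit_primrec.comp Primrec.fst))
  have hL : Primrec (fun v : List Bool × β => 2 * 3 ^ v.1.length) :=
    Primrec.nat_mul.comp (Primrec.const 2) ((pow_primrec 3).comp Primrec.fst)
  have hM : Primrec (fun v : List Bool × β => 2 ^ v.1.length) :=
    (pow_primrec 2).comp Primrec.fst
  have hcode : Computable (fun v : List Bool × β => ((ratOf ((v.2.1.1.1, v.2.1.1.2), v.2.2.2),
      ratOf ((v.2.1.2.1, v.2.1.2.2), v.2.2.2)), ratOf ((v.2.2.1.1, v.2.2.1.2), v.2.2.2))) :=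
    ((ratOf_computable.comp ((ha1.pair hb1).pair hd).to_comp).pair
      (ratOf_computable.comp ((ha2.pair hb2).pair hd).to_comp)).pair
      (ratOf_computable.comp ((hR.pair hS).pair hd).to_comp)
  have hc1 := cond_primrec ht hL ha1 hb1 hR hS he
  have hc2 := cond_primrec (Primrec.const 1) hM ha2 hb2 hR hS he
  have hre := REPred.exists_snd ((REPred.comp_computable hW hcode).and_re
    ((hc1.and hc2).computablePred.to_re))
  have hball : ∀ (σ : List Bool) (a1 b1 a2 b2 R S d : ℕ),
      psiPt σ ∈ ballOfCode ((ratOf ((a1, b1), d), ratOf ((a2, b2), d)), ratOf ((R, S), d)) ↔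
      ((2 * trit σ + 1) * (d + 1) + (b1 + S) * (2 * 3 ^ σ.length) < (a1 + R) * (2 * 3 ^ σ.length) ∧
        (a1 + S) * (2 * 3 ^ σ.length) <
          (2 * trit σ + 1) * (d + 1) + (b1 + R) * (2 * 3 ^ σ.length)) ∧
      (1 * (d + 1) + (b2 + S) * 2 ^ σ.length < (a2 + R) * 2 ^ σ.length ∧
        (a2 + S) * 2 ^ σ.length < 1 * (d + 1) + (b2 + R) * 2 ^ σ.length) := by
    intro σ a1 b1 a2 b2 R S d
    have hr : ∀ a b : ℕ, ((ratOf ((a, b), d) : ℚ) : ℝ) = ((a : ℝ) - b) / ((d + 1 : ℕ) : ℝ) :=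
      fun a b => ratOf_real a b (d + 1) (Nat.succ_pos d)
    rw [mem_ballOfCode]
    simp only [hr]
    rw [psiPt_fst_nat, psiPt_snd_nat, abs_lt_nat _ _ _ _ _ _ _ (by positivity) (by positivity),
      abs_lt_nat _ _ _ _ _ _ _ (by positivity) (by positivity)]
  refine hre.of_eq fun σ => ?_
  constructor
  · rintro ⟨⟨⟨⟨a1, b1⟩, ⟨a2, b2⟩⟩, ⟨⟨R, S⟩, d⟩⟩, hw, hcond⟩ ⟨-, hnot⟩
    apply hnot
    refine mem_biUnion (show _ ∈ {c | W c} from hw) ((hball σ a1 b1 a2 b2 R S d).2 hcond)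
  · intro h
    have h' : psiPt σ ∈ ⋃ c ∈ {c | W c}, ballOfCode c := by
      by_contra hc
      exact h ⟨mem_univ _, hc⟩
    simp only [mem_iUnion] at h'
    obtain ⟨⟨⟨q1, q2⟩, r⟩, hw, hb⟩ := h'
    have he : 0 < q1.den * q2.den * r.den :=
      Nat.mul_pos (Nat.mul_pos q1.den_pos q2.den_pos) r.den_pos
    obtain ⟨a1, b1, h1⟩ := rat_common q1 _ he (Dvd.intro _ (by ring : q1.den * (q2.den * r.den) = _))
    obtain ⟨a2, b2, h2⟩ := rat_common q2 _ he (Dvd.intro _ (by ring : q2.den * (q1.den * r.den) = _))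
    obtain ⟨R, S, h3⟩ := rat_common r _ he (Dvd.intro _ (by ring : r.den * (q1.den * q2.den) = _))
    generalize q1.den * q2.den * r.den - 1 = d at h1 h2 h3
    subst h1 h2 h3
    exact ⟨⟨⟨⟨a1, b1⟩, ⟨a2, b2⟩⟩, ⟨⟨R, S⟩, d⟩⟩, hw, (hball σ a1 b1 a2 b2 R S d).1 hb⟩

end Effective

section Main

theorem two_trit_primrec : Primrec (fun σ : List Bool => 2 * trit σ + 1) :=
  Primrec.succ.comp (Primrec.nat_mul.comp (Primrec.const 2) trit_primrec)

theorem caseB {P : Set (ℕ → Bool)} (him : TreeImmune P) {D : Set (ℝ × ℝ)}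
    (hsub : D ⊆ PsiSet (treeOfClosed P)) (hpi : IsPi01Closed D) (hce : IsCEClosed D)
    (hD : IsPreconnected D) {q : ℝ × ℝ} (hq : q ∈ D) (hq0 : q.2 = 0) {p₀ : ℝ × ℝ} (hp₀ : p₀ ∈ D)
    (hpos : 0 < p₀.2) : False := by
  have hT := isTree_treeOfClosed P
  obtain ⟨n0, hn0⟩ := exists_pow_lt_of_lt_one (show 0 < p₀.2 / 2 by linarith)
    (show (1 / 2 : ℝ) < 1 by norm_num)
  have hbig : ∀ n, n0 ≤ n → (1 / 2 : ℝ) ^ n < p₀.2 := by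
    intro n hn
    have : (1 / 2 : ℝ) ^ n ≤ (1 / 2 : ℝ) ^ n0 :=
      pow_le_pow_of_le_one (by norm_num) (by norm_num) hn
    linarith
  have h3L : Primrec (fun σ : List Bool => 2 * 3 ^ σ.length) :=
    Primrec.nat_mul.comp (Primrec.const 2) (pow_primrec 3)
  have hYre : REPred (fun σ : List Bool => ∃ p ∈ D,
      |p.1 - (psiPt σ).1| < (1 / 3 : ℝ) ^ σ.length / 2 ∧
      |p.2 - (1 / 2 : ℝ) ^ σ.length| < (1 / 3 : ℝ) ^ σ.length / 2) := by
    refine (ce_meets hce two_trit_primrec (Primrec.const 0) h3L (Primrec.const 1) (pow_primrec 2)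
      (Primrec.const 1) h3L (fun σ => by positivity) (fun σ => by positivity)
      (fun σ => by positivity)).of_eq fun σ => ?_
    have e1 : (((1 : ℕ) : ℝ)) / ((2 * 3 ^ σ.length : ℕ) : ℝ) = (1 / 3 : ℝ) ^ σ.length / 2 := by
      push_cast
      rw [one_div, one_div, inv_pow]
      field_simp
    rw [Nat.cast_zero, sub_zero, ← psiPt_fst_nat, ← psiPt_snd_nat, psiPt_snd, e1]
  refine not_treeImmune_of him hYre (psiPt_notMem_re hpi) ?_ ?_ n0 ?_ ?_
  · intro σ
    by_cases h : psiPt σ ∈ D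
    · left
      have hp : 0 < (1 / 3 : ℝ) ^ σ.length / 2 := by positivity
      exact ⟨psiPt σ, h, by simpa using hp, by rw [psiPt_snd]; simpa using hp⟩
    · exact Or.inr h
  · rintro σ ⟨p, hp, h1, h2⟩
    have h32 : (1 / 3 : ℝ) ^ σ.length ≤ (1 / 2 : ℝ) ^ σ.length :=
      pow_le_pow_left₀ (by norm_num) (by norm_num) _
    have h3 : 0 < (1 / 3 : ℝ) ^ σ.length := by positivity
    rcases psiSet_level hT (hsub hp) σ.length with h | ⟨τ, hτT, hτ, h4, -⟩
    · have := (abs_lt.1 h2).2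
      linarith
    · obtain rfl := eq_of_mid_close rfl hτ h1.le h4 (by linarith)
      exact hτT
  · rintro σ hlen ⟨p, hp, h1, h2⟩
    rcases List.eq_nil_or_concat σ with rfl | ⟨ρ, b, rfl⟩
    · simp at hlen
    rw [List.concat_eq_append] at hlen h1 h2 ⊢
    rw [List.dropLast_concat]
    intro hnot
    have hl : (ρ ++ [b]).length = ρ.length + 1 := by simp
    rw [hl] at hlen h1 h2
    rw [psiPt_fst_snoc] at h1
    have h32 : (1 / 3 : ℝ) ^ ρ.length ≤ (1 / 2 : ℝ) ^ ρ.length :=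
      pow_le_pow_left₀ (by norm_num) (by norm_num) _
    have h3 : 0 < (1 / 3 : ℝ) ^ ρ.length := by positivity
    rw [pow_succ] at h1
    rw [pow_succ, pow_succ] at h2
    have h2' := (abs_lt.1 h2).2
    have h1' : |p.1 - (psiPt ρ).1| < 3 / 4 * (1 / 3 : ℝ) ^ ρ.length := by
      rw [abs_lt] at h1 ⊢
      cases b <;> simp only [if_true, if_false, Bool.false_eq_true] at h1 <;>
        constructor <;> linarith [h1.1, h1.2]
    have := (region_sep hT hsub hD rfl hnot hp h1' (by linarith) hp₀).2
    linarith [hbig ρ.length (by omega)]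
  · intro n hn
    have hP2 : 0 < (1 / 2 : ℝ) ^ n := by positivity
    have h3 : 0 < (1 / 3 : ℝ) ^ n := by positivity
    rcases psiSet_level hT (hsub hq) n with h | ⟨τ, hτT, hτ, h4, -⟩
    · linarith
    · refine ⟨τ, hτ, fun hnot => ?_⟩
      have h4' : |q.1 - (psiPt τ).1| ≤ (1 / 3 : ℝ) ^ n / 2 := h4
      have := (region_sep hT hsub hD hτ hnot hq (by linarith) (by linarith) hp₀).2
      linarith [hbig n hn]

theorem caseA {P : Set (ℕ → Bool)} (him : TreeImmune P) {D : Set (ℝ × ℝ)}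
    (hsub : D ⊆ PsiSet (treeOfClosed P)) (hce : IsCEClosed D)
    (hD : IsPreconnected D) {q : ℝ × ℝ} (hq : q ∈ D) (hzero : ∀ p ∈ D, p.2 = 0) : False := by
  have hT := isTree_treeOfClosed P
  have hnotD : ∀ σ, psiPt σ ∉ D := by
    intro σ h
    have h1 := hzero _ h
    rw [psiPt_snd] at h1
    have : 0 < (1 / 2 : ℝ) ^ σ.length := by positivity
    linarith
  have hlevel : ∀ p ∈ D, ∀ n, ∃ σ ∈ treeOfClosed P, σ.length = n ∧
      |p.1 - (psiPt σ).1| ≤ (1 / 3 : ℝ) ^ n / 2 := by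
    intro p hp n
    have hP2 : 0 < (1 / 2 : ℝ) ^ n := by positivity
    rcases psiSet_level hT (hsub hp) n with h | ⟨τ, hτT, hτ, h4, -⟩
    · linarith [hzero p hp]
    · exact ⟨τ, hτT, hτ, h4⟩
  have hsep : ∀ (σ : List Bool), ∀ p ∈ D, |p.1 - (psiPt σ).1| < 3 / 4 * (1 / 3 : ℝ) ^ σ.length →
      ¬ ∃ p' ∈ D, 3 / 4 * (1 / 3 : ℝ) ^ σ.length < |p'.1 - (psiPt σ).1| := by
    rintro σ p hp h ⟨p', hp', h'⟩
    have := (region_sep hT hsub hD rfl (hnotD σ) hp h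
      (by rw [hzero p hp]; positivity) hp').1
    linarith
  have h3L : Primrec (fun σ : List Bool => 2 * 3 ^ σ.length) :=
    Primrec.nat_mul.comp (Primrec.const 2) (pow_primrec 3)
  have h4L : Primrec (fun σ : List Bool => 4 * 3 ^ σ.length) :=
    Primrec.nat_mul.comp (Primrec.const 4) (pow_primrec 3)
  have h4t : Primrec (fun σ : List Bool => 2 * (2 * trit σ + 1)) :=
    Primrec.nat_mul.comp (Primrec.const 2) two_trit_primrec
  have hoff : Primrec (fun σ : List Bool => 3 + 40 * 3 ^ σ.length) :=
    Primrec.nat_add.comp (Primrec.const 3) (Primrec.nat_mul.comp (Primrec.const 40) (pow_primrec 3))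
  have hsum : Primrec (fun σ : List Bool => 2 * (2 * trit σ + 1) + (3 + 40 * 3 ^ σ.length)) :=
    Primrec.nat_add.comp h4t hoff
  have hYre : REPred (fun σ : List Bool => ∃ p ∈ D,
      |p.1 - (psiPt σ).1| < 3 / 4 * (1 / 3 : ℝ) ^ σ.length) := by
    refine (ce_meets hce two_trit_primrec (Primrec.const 0) h3L (Primrec.const 0) (Primrec.const 1)
      (Primrec.const 3) h4L (fun σ => by positivity) (fun σ => by positivity)
      (fun σ => by positivity)).of_eq fun σ => ?_
    have e1 : (((3 : ℕ) : ℝ)) / ((4 * 3 ^ σ.length : ℕ) : ℝ) = 3 / 4 * (1 / 3 : ℝ) ^ σ.length := by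
      push_cast
      rw [one_div, inv_pow]
      field_simp
    rw [Nat.cast_zero, sub_zero, ← psiPt_fst_nat, e1]
    constructor
    · rintro ⟨p, hp, h1, -⟩
      exact ⟨p, hp, h1⟩
    · rintro ⟨p, hp, h1⟩
      refine ⟨p, hp, h1, ?_⟩
      rw [hzero p hp]
      simp
  have hNre : REPred (fun σ : List Bool => ∃ p ∈ D,
      3 / 4 * (1 / 3 : ℝ) ^ σ.length < |p.1 - (psiPt σ).1|) := by
    have hr1 := ce_meets hce hsum (Primrec.const 0) h4L (Primrec.const 0) (Primrec.const 1)
      (Primrec.const 10) (Primrec.const 1) (fun σ => by positivity) (fun σ => by positivity)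
      (fun σ => by positivity)
    have hr2 := ce_meets hce h4t hoff h4L (Primrec.const 0) (Primrec.const 1)
      (Primrec.const 10) (Primrec.const 1) (fun σ => by positivity) (fun σ => by positivity)
      (fun σ => by positivity)
    refine (hr1.or_re hr2).of_eq fun σ => ?_
    have hmid := psiPt_fst_nat σ
    have e1 : (((2 * (2 * trit σ + 1) + (3 + 40 * 3 ^ σ.length) : ℕ) : ℝ) - ((0 : ℕ) : ℝ)) /
        ((4 * 3 ^ σ.length : ℕ) : ℝ) = (psiPt σ).1 + (3 / 4 * (1 / 3 : ℝ) ^ σ.length + 10) := by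
      rw [hmid]
      push_cast
      rw [one_div, inv_pow]
      field_simp
      ring
    have e2 : (((2 * (2 * trit σ + 1) : ℕ) : ℝ) - ((3 + 40 * 3 ^ σ.length : ℕ) : ℝ)) /
        ((4 * 3 ^ σ.length : ℕ) : ℝ) = (psiPt σ).1 - (3 / 4 * (1 / 3 : ℝ) ^ σ.length + 10) := by
      rw [hmid]
      push_cast
      rw [one_div, inv_pow]
      field_simp
      ring
    have e3 : ((10 : ℕ) : ℝ) / ((1 : ℕ) : ℝ) = 10 := by norm_num
    have hu : 0 < (1 / 3 : ℝ) ^ σ.length := by positivity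
    rw [e1, e2, e3]
    constructor
    · rintro (⟨p, hp, h, -⟩ | ⟨p, hp, h, -⟩)
      · refine ⟨p, hp, lt_of_lt_of_le ?_ (le_abs_self _)⟩
        linarith [(abs_lt.1 h).1]
      · refine ⟨p, hp, lt_of_lt_of_le ?_ (neg_le_abs _)⟩
        linarith [(abs_lt.1 h).2]
    · rintro ⟨p, hp, h⟩
      have hy : |p.2 - ((0 : ℕ) : ℝ) / ((1 : ℕ) : ℝ)| < 10 := by rw [hzero p hp]; norm_num
      have hp1 : |p.1 - 1 / 2| ≤ 1 / 2 := by
        obtain ⟨τ, -, hτ, h5⟩ := hlevel p hp 0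
        rw [List.length_eq_zero_iff] at hτ
        subst hτ
        rw [psiPt_fst_nil, pow_zero] at h5
        exact h5
      have hm : |(psiPt σ).1 - 1 / 2| ≤ 1 / 2 := by
        have h6 := mid_below [] σ
        rw [List.nil_append, psiPt_fst_nil, List.length_nil, pow_zero] at h6
        linarith
      rw [abs_le] at hp1 hm
      rcases lt_abs.1 h with h | h
      · left
        refine ⟨p, hp, ?_, hy⟩
        rw [abs_lt]
        constructor <;> linarith [hp1.1, hp1.2, hm.1, hm.2]
      · right
        refine ⟨p, hp, ?_, hy⟩
        rw [abs_lt]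
        constructor <;> linarith [hp1.1, hp1.2, hm.1, hm.2]
  refine not_treeImmune_of him hYre hNre ?_ ?_ 0 ?_ ?_
  · intro σ
    have hu : 0 < (1 / 3 : ℝ) ^ σ.length := by positivity
    obtain ⟨τ, -, hτ, h⟩ := hlevel q hq σ.length
    by_cases hst : σ = τ
    · left
      subst hst
      exact ⟨q, hq, by linarith⟩
    · right
      refine ⟨q, hq, ?_⟩
      have h1 := mid_sep _ σ τ rfl hτ hst
      have h2 := abs_sub_le (psiPt σ).1 q.1 (psiPt τ).1
      rw [abs_sub_comm (psiPt σ).1 q.1] at h2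
      linarith
  · rintro σ ⟨p, hp, h⟩
    have hu : 0 < (1 / 3 : ℝ) ^ σ.length := by positivity
    obtain ⟨τ, hτT, hτ, h'⟩ := hlevel p hp σ.length
    obtain rfl := eq_of_mid_close rfl hτ h.le h' (by linarith)
    exact hτT
  · rintro σ hlen ⟨p, hp, h1⟩
    rcases List.eq_nil_or_concat σ with rfl | ⟨ρ, b, rfl⟩
    · simp at hlen
    rw [List.concat_eq_append] at h1 ⊢
    rw [List.dropLast_concat]
    have hl : (ρ ++ [b]).length = ρ.length + 1 := by simp
    rw [hl, psiPt_fst_snoc, pow_succ] at h1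
    have hu : 0 < (1 / 3 : ℝ) ^ ρ.length := by positivity
    refine hsep ρ p hp ?_
    rw [abs_lt] at h1 ⊢
    cases b <;> simp only [if_true, if_false, Bool.false_eq_true] at h1 <;>
      constructor <;> linarith [h1.1, h1.2]
  · intro n _
    obtain ⟨τ, -, hτ, h⟩ := hlevel q hq n
    have hu : 0 < (1 / 3 : ℝ) ^ n := by positivity
    refine ⟨τ, hτ, hsep τ q hq ?_⟩
    rw [hτ]
    linarith

end Main

theorem computable_dendrite_in_tree_immune_psiSet_misses_base
    (P : Set (ℕ → Bool)) (hne : P.Nonempty) (hcl : IsClosed P)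
    (hpi : IsPi01Cantor P) (him : TreeImmune P)
    (D : Set (ℝ × ℝ)) (hsub : D ⊆ PsiSet (treeOfClosed P))
    (hcomp : IsComputableClosed D) (hden : IsDendrite D) :
    D ∩ (Set.Icc (0:ℝ) 1 ×ˢ ({0} : Set ℝ)) = ∅ := by
  rw [Set.eq_empty_iff_forall_notMem]
  rintro q ⟨hq, -, hq0⟩
  have hq0' : q.2 = 0 := hq0
  have hD : IsPreconnected D := hden.1.2.isPreconnected
  by_cases h : ∃ p ∈ D, 0 < p.2
  · obtain ⟨p, hp, hpos⟩ := h
    exact caseB him hsub hcomp.1 hcomp.2 hD hq hq0' hp hpos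
  · refine caseA him hsub hcomp.2 hD hq fun p hp => ?_
    refine le_antisymm ?_ (psiSet_snd_nonneg (hsub hp))
    by_contra hc
    exact h ⟨p, hp, not_le.1 hc⟩
end

section
/- There exists a computable closed set K ⊆ ℝ² which is a dendroid and which does not *-include a Π⁰₁ dendrite: there is a real ε > 0 such that every Π⁰₁ closed set R ⊆ K which is a dendrite satisfies d_H(R, K) ≥ ε. -/
open Set Metric

/-! ### Computability toolbox -/

/-- Bounded conjunction. -/
def bAll (p : ℕ → Bool) (n : ℕ) : Bool := Nat.rec true (fun i r => r && p i) n

theorem bAll_iff (p : ℕ → Bool) (n : ℕ) : bAll p n = true ↔ ∀ i < n, p i = true := by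
  induction n with
  | zero => simp [bAll]
  | succ n ih =>
    have : bAll p (n+1) = (bAll p n && p n) := rfl
    rw [this, Bool.and_eq_true, ih]
    constructor
    · rintro ⟨h1, h2⟩ i hi
      rcases Nat.lt_succ_iff_lt_or_eq.1 hi with h | rfl
      · exact h1 i h
      · exact h2
    · intro h
      exact ⟨fun i hi => h i (by omega), h n (by omega)⟩

/-- Bounded disjunction. -/
def bEx (p : ℕ → Bool) (n : ℕ) : Bool := !(bAll (fun i => !(p i)) n)

theorem bEx_iff (p : ℕ → Bool) (n : ℕ) : bEx p n = true ↔ ∃ i < n, p i = true := by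
  have h := bAll_iff (fun i => !(p i)) n
  unfold bEx
  cases hb : bAll (fun i => !(p i)) n
  · rw [hb] at h
    simp only [Bool.not_false, true_iff]
    by_contra hc
    push Not at hc
    exact absurd (h.2 (fun i hi => by simpa using hc i hi)) (by simp)
  · rw [hb] at h
    simp only [Bool.not_true, Bool.false_eq_true, false_iff]
    rintro ⟨i, hi, hp⟩
    have := h.1 rfl i hi
    simp [hp] at this

section
variable {α β γ σ : Type*} [Primcodable α] [Primcodable β] [Primcodable γ] [Primcodable σ]

theorem Computable.and' {f g : α → Bool} (hf : Computable f) (hg : Computable g) :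
    Computable (fun a => f a && g a) :=
  (Primrec.and.to_comp (α := Bool) (β := Bool)).comp hf hg

theorem Computable.or' {f g : α → Bool} (hf : Computable f) (hg : Computable g) :
    Computable (fun a => f a || g a) :=
  (Primrec.or.to_comp (α := Bool) (β := Bool)).comp hf hg

theorem Computable.not' {f : α → Bool} (hf : Computable f) :
    Computable (fun a => !(f a)) :=
  (Primrec.not.to_comp).comp hf

theorem computable_bAll {p : α → ℕ → Bool} {n : α → ℕ} (hp : Computable₂ p) (hn : Computable n) :
    Computable (fun a => bAll (p a) (n a)) := by
  refine Computable.nat_rec (h := fun a x => x.2 && p a x.1) hn (Computable.const true) ?_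
  exact Computable.and' (Computable.snd.comp Computable.snd)
    (hp.comp Computable.fst (Computable.fst.comp Computable.snd))

theorem computable_bEx {p : α → ℕ → Bool} {n : α → ℕ} (hp : Computable₂ p) (hn : Computable n) :
    Computable (fun a => bEx (p a) (n a)) :=
  Computable.not' (computable_bAll (p := fun a i => !(p a i)) (Computable.not' hp) hn)

theorem computable_nat_add {f g : α → ℕ} (hf : Computable f) (hg : Computable g) :
    Computable (fun a => f a + g a) := (Primrec.nat_add.to_comp).comp hf hg
theorem computable_nat_mul {f g : α → ℕ} (hf : Computable f) (hg : Computable g) :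
    Computable (fun a => f a * g a) := (Primrec.nat_mul.to_comp).comp hf hg
theorem computable_nat_mod {f g : α → ℕ} (hf : Computable f) (hg : Computable g) :
    Computable (fun a => f a % g a) := (Primrec.nat_mod.to_comp).comp hf hg
theorem computable_nat_div {f g : α → ℕ} (hf : Computable f) (hg : Computable g) :
    Computable (fun a => f a / g a) := (Primrec.nat_div.to_comp).comp hf hg
theorem computable_nat_lt {f g : α → ℕ} (hf : Computable f) (hg : Computable g) :
    Computable (fun a => decide (f a < g a)) := (Primrec.nat_lt.decide.to_comp).comp hf hg
theorem computable_nat_le {f g : α → ℕ} (hf : Computable f) (hg : Computable g) :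
    Computable (fun a => decide (f a ≤ g a)) := (Primrec.nat_le.decide.to_comp).comp hf hg
theorem computable_nat_eq {f g : α → ℕ} (hf : Computable f) (hg : Computable g) :
    Computable (fun a => decide (f a = g a)) :=
  (Primrec.eq (α := ℕ)).decide.to_comp.comp hf hg

/-- Total unbounded search. -/
theorem computable_of_search {f : α → ℕ} {p : α → ℕ → Bool} (hp : Computable₂ p)
    (h : ∀ a n, p a n = true ↔ n = f a) : Computable f := by
  have h1 : Partrec (fun a => Nat.rfind (fun n => (Part.some (p a n) : Part Bool))) :=
    Partrec.rfind hp.partrec₂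
  refine Partrec.of_eq h1 (fun a => Part.eq_some_iff.2 (Nat.mem_rfind.2 ⟨by simp [h], ?_⟩))
  intro m hm
  have : p a m = false := by
    rw [← Bool.not_eq_true, h]; omega
  simp [this]

/-- Projection of a computable predicate is r.e. -/
theorem rePred_exists_nat {p : α → ℕ → Bool} (hp : Computable₂ p) :
    REPred (fun a => ∃ n, p a n = true) := by
  have h1 : Partrec (fun a => Nat.rfind (fun n => (Part.some (p a n) : Part Bool))) :=
    Partrec.rfind hp.partrec₂
  refine (Partrec.dom_re h1).of_eq (fun a => ?_)
  refine Iff.trans Nat.rfind_dom ?_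
  constructor
  · rintro ⟨n, hn, -⟩
    exact ⟨n, by simpa using hn⟩
  · rintro ⟨n, hn⟩
    exact ⟨n, by simpa using hn, by simp⟩

theorem rePred_exists {p : α → β → Bool} (hp : Computable₂ p) :
    REPred (fun a => ∃ b, p a b = true) := by
  have h2 : Computable₂ (fun (a : α) (n : ℕ) =>
      ((Encodable.decode n : Option β).casesOn false (fun b => p a b) : Bool)) := by
    refine Computable.option_casesOn (g := fun (x : α × ℕ) b => p x.1 b) (Computable.decode.comp Computable.snd) (Computable.const false) ?_
    exact hp.comp (Computable.fst.comp Computable.fst) Computable.snd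
  refine (rePred_exists_nat h2).of_eq (fun a => ?_)
  constructor
  · rintro ⟨n, hn⟩
    cases h : (Encodable.decode n : Option β) with
    | none => simp [h] at hn
    | some b => exact ⟨b, by simpa [h] using hn⟩
  · rintro ⟨b, hb⟩
    exact ⟨Encodable.encode b, by simpa using hb⟩
end

/-! ### Computability on the rationals -/

/-- the base encoding of rationals -/
def ratCode (q : ℚ) : ℕ := @Encodable.encode ℚ Rat.instEncodable q

theorem ratCode_eq (q : ℚ) : ratCode q = Nat.pair (Encodable.encode q.num) q.den := rfl

def isRatCode (k : ℕ) : Bool :=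
  decide (0 < k.unpair.2) &&
  bAll (fun d => decide (0 < ((k.unpair.1 + 1) / 2) % d) || (decide (0 < k.unpair.2 % d) || decide (d = 1)))
    ((k.unpair.1 + 1) / 2 + k.unpair.2 + 1)

theorem int_encode_ofNat (m : ℕ) : Encodable.encode (Int.ofNat m) = 2 * m := rfl
theorem int_encode_negSucc (m : ℕ) : Encodable.encode (Int.negSucc m) = 2 * m + 1 := rfl

theorem int_encode_natAbs (z : ℤ) : (Encodable.encode z + 1) / 2 = z.natAbs := by
  cases z with
  | ofNat m => rw [int_encode_ofNat]; simp; omega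
  | negSucc m => rw [int_encode_negSucc]; simp; omega

theorem coprime_iff_bAll (a b : ℕ) (hb : 0 < b) : Nat.Coprime a b ↔
    bAll (fun d => decide (0 < a % d) || (decide (0 < b % d) || decide (d = 1))) (a + b + 1) = true := by
  rw [bAll_iff]
  constructor
  · intro h d hd
    by_contra hc
    simp only [Bool.or_eq_true, decide_eq_true_eq, not_or, not_lt, nonpos_iff_eq_zero] at hc
    exact hc.2.2 (Nat.eq_one_of_dvd_coprimes h (Nat.dvd_of_mod_eq_zero hc.1) (Nat.dvd_of_mod_eq_zero hc.2.1))
  · intro h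
    have h1 := h (Nat.gcd a b) (by have := Nat.gcd_le_right a hb; omega)
    simp only [Bool.or_eq_true, decide_eq_true_eq] at h1
    rcases h1 with h1 | h1 | h1
    · have := Nat.mod_eq_zero_of_dvd (Nat.gcd_dvd_left a b); omega
    · have := Nat.mod_eq_zero_of_dvd (Nat.gcd_dvd_right a b); omega
    · exact h1

theorem isRatCode_iff (k : ℕ) : isRatCode k = true ↔ k ∈ Set.range (@Encodable.encode ℚ Rat.instEncodable) := by
  unfold isRatCode
  rw [Bool.and_eq_true, decide_eq_true_eq]
  constructor
  · rintro ⟨h1, h2⟩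
    rw [← coprime_iff_bAll _ _ h1] at h2
    let z : ℤ := Denumerable.ofNat ℤ k.unpair.1
    have hz : Encodable.encode z = k.unpair.1 := Denumerable.encode_ofNat _
    rw [← hz, int_encode_natAbs] at h2
    refine ⟨⟨z, k.unpair.2, by omega, h2⟩, ?_⟩
    change ratCode _ = _
    rw [ratCode_eq]
    simp [hz]
  · rintro ⟨q, rfl⟩
    change 0 < (ratCode q).unpair.2 ∧ bAll (fun d => decide (0 < (((ratCode q).unpair.1 + 1) / 2) % d) || (decide (0 < (ratCode q).unpair.2 % d) || decide (d = 1)))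
      (((ratCode q).unpair.1 + 1) / 2 + (ratCode q).unpair.2 + 1) = true
    rw [ratCode_eq, Nat.unpair_pair]
    simp only [int_encode_natAbs]
    exact ⟨q.pos, (coprime_iff_bAll _ _ q.pos).1 q.reduced⟩

theorem computable_isRatCode : Computable isRatCode := by
  have u1 : Computable (fun k : ℕ => k.unpair.1) := Computable.fst.comp Computable.unpair
  have u2 : Computable (fun k : ℕ => k.unpair.2) := Computable.snd.comp Computable.unpair
  have v1 : Computable (fun k : ℕ => (k.unpair.1 + 1) / 2) :=
    computable_nat_div (computable_nat_add u1 (Computable.const 1)) (Computable.const 2)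
  refine Computable.and' (computable_nat_lt (Computable.const 0) u2) ?_
  refine computable_bAll ?_ (computable_nat_add (computable_nat_add v1 u2) (Computable.const 1))
  refine Computable.or' (computable_nat_lt (Computable.const 0) (computable_nat_mod (v1.comp Computable.fst) Computable.snd)) ?_
  refine Computable.or' (computable_nat_lt (Computable.const 0) (computable_nat_mod (u2.comp Computable.fst) Computable.snd)) ?_
  exact computable_nat_eq Computable.snd (Computable.const 1)

theorem ratCode_ofNat_succ (n : ℕ) :
    ∃ m, ratCode (Denumerable.ofNat ℚ (n+1)) = ratCode (Denumerable.ofNat ℚ n) + m + 1 ∧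
     isRatCode (ratCode (Denumerable.ofNat ℚ n) + m + 1) = true ∧
     ∀ j < m, isRatCode (ratCode (Denumerable.ofNat ℚ n) + j + 1) = false := by
  let := @Encodable.decidableRangeEncode ℚ Rat.instEncodable
  let : Infinite (Set.range (@Encodable.encode ℚ Rat.instEncodable)) :=
    Infinite.of_injective _ (Equiv.ofInjective _ Encodable.encode_injective).injective
  have key : ∀ n, ratCode (Denumerable.ofNat ℚ n) = (Nat.Subtype.ofNat (Set.range (@Encodable.encode ℚ Rat.instEncodable)) n : ℕ) := by
    intro n
    have h : Denumerable.ofNat ℚ n = (@Encodable.equivRangeEncode ℚ Rat.instEncodable).symm (Nat.Subtype.ofNat (Set.range (@Encodable.encode ℚ Rat.instEncodable)) n) := by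
      let := Nat.Subtype.denumerable (Set.range (@Encodable.encode ℚ Rat.instEncodable))
      have h1 := Denumerable.ofEquiv_ofNat (Set.range (@Encodable.encode ℚ Rat.instEncodable)) (@Encodable.equivRangeEncode ℚ Rat.instEncodable) n
      exact h1
    rw [h]
    have h3 := congrArg Subtype.val ((@Encodable.equivRangeEncode ℚ Rat.instEncodable).apply_symm_apply (Nat.Subtype.ofNat (Set.range (@Encodable.encode ℚ Rat.instEncodable)) n))
    exact h3
  rw [key, key]
  have hex := Nat.Subtype.exists_succ (Nat.Subtype.ofNat (Set.range (@Encodable.encode ℚ Rat.instEncodable)) n)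
  refine ⟨Nat.find hex, rfl, ?_, ?_⟩
  · rw [isRatCode_iff]; exact Nat.find_spec hex
  · intro j hj
    rw [← Bool.not_eq_true, isRatCode_iff]; exact Nat.find_min hex hj


theorem exists_ratCode_gt (v : ℕ) : ∃ m, isRatCode (v + m + 1) = true := by
  have h0 : v + 1 ≤ Nat.pair (v + 1) 1 := Nat.left_le_pair _ _
  refine ⟨Nat.pair (v + 1) 1 - (v + 1), ?_⟩
  have : v + (Nat.pair (v + 1) 1 - (v + 1)) + 1 = Nat.pair (v + 1) 1 := by omega
  rw [this]
  unfold isRatCode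
  rw [Nat.unpair_pair, Bool.and_eq_true]
  exact ⟨by simp, (coprime_iff_bAll _ 1 one_pos).1 (by simp)⟩

theorem computable_ratCode_ofNat : Computable (fun n => ratCode (Denumerable.ofNat ℚ n)) := by
  have h1 : Computable (fun v : ℕ => Nat.find (exists_ratCode_gt v)) := by
    refine Computable.find (P := fun v m => isRatCode (v + m + 1) = true) ?_ exists_ratCode_gt
    refine ComputablePred.computable_iff.2 ⟨fun p => isRatCode (p.1 + p.2 + 1), ?_, rfl⟩
    exact computable_isRatCode.comp (computable_nat_add (computable_nat_add Computable.fst Computable.snd)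
      (Computable.const 1))
  have h2 : Computable (fun n : ℕ => (Nat.rec (ratCode (Denumerable.ofNat ℚ 0))
      (fun _ v => v + Nat.find (exists_ratCode_gt v) + 1) n : ℕ)) := by
    refine Computable.nat_rec (h := fun (_ : ℕ) (x : ℕ × ℕ) => x.2 + Nat.find (exists_ratCode_gt x.2) + 1)
      Computable.id (Computable.const _) ?_
    have : Computable (fun x : ℕ × ℕ × ℕ => x.2.2) := Computable.snd.comp Computable.snd
    exact computable_nat_add (computable_nat_add this (h1.comp this)) (Computable.const 1)
  refine h2.of_eq (fun n => ?_)
  induction n with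
  | zero => rfl
  | succ n ih =>
    obtain ⟨m, e1, e2, e3⟩ := ratCode_ofNat_succ n
    have hm : Nat.find (exists_ratCode_gt (ratCode (Denumerable.ofNat ℚ n))) = m := by
      rw [Nat.find_eq_iff]
      exact ⟨e2, fun j hj => by rw [e3 j hj]; exact Bool.false_ne_true⟩
    rw [e1, ← hm]
    simp only [ih]

theorem computable_ratCode : Computable ratCode := by
  refine (computable_ratCode_ofNat.comp (Computable.encode (α := ℚ))).of_eq (fun q => ?_)
  rw [Denumerable.ofNat_encode]

theorem computable_rat_den : Computable (fun q : ℚ => q.den) := by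
  refine (Computable.snd.comp (Computable.unpair.comp computable_ratCode)).of_eq (fun q => ?_)
  rw [ratCode_eq, Nat.unpair_pair]

def rpos (q : ℚ) : ℕ := q.num.toNat
def rneg (q : ℚ) : ℕ := (-q.num).toNat

theorem computable_rpos : Computable rpos := by
  have u1 : Computable (fun q : ℚ => (ratCode q).unpair.1) :=
    Computable.fst.comp (Computable.unpair.comp computable_ratCode)
  have := Computable.cond (computable_nat_eq (computable_nat_mod u1 (Computable.const 2)) (Computable.const 0))
    (computable_nat_div u1 (Computable.const 2)) (Computable.const 0)
  refine this.of_eq (fun q => ?_)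
  rw [ratCode_eq, Nat.unpair_pair]
  unfold rpos
  cases h : q.num with
  | ofNat m => rw [int_encode_ofNat]; simp
  | negSucc m => rw [int_encode_negSucc]; simp [Nat.add_mod]

theorem computable_rneg : Computable rneg := by
  have u1 : Computable (fun q : ℚ => (ratCode q).unpair.1) :=
    Computable.fst.comp (Computable.unpair.comp computable_ratCode)
  have := Computable.cond (computable_nat_eq (computable_nat_mod u1 (Computable.const 2)) (Computable.const 0))
    (Computable.const 0) (computable_nat_div (computable_nat_add u1 (Computable.const 1)) (Computable.const 2))
  refine this.of_eq (fun q => ?_)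
  rw [ratCode_eq, Nat.unpair_pair]
  unfold rneg
  cases h : q.num with
  | ofNat m => rw [int_encode_ofNat]; simp
  | negSucc m => rw [int_encode_negSucc]; simp [Nat.add_mod, Int.neg_negSucc]; omega

theorem rat_eq_pnd (q : ℚ) : q = ((rpos q : ℚ) - (rneg q : ℚ)) / (q.den : ℚ) := by
  have h : ((rpos q : ℚ) - (rneg q : ℚ)) = (q.num : ℚ) := by
    have : ((rpos q : ℤ) - (rneg q : ℤ)) = q.num := by
      unfold rpos rneg; omega
    exact_mod_cast this
  rw [h]
  exact (Rat.num_div_den q).symm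

section
variable {α : Type*} [Primcodable α]

theorem computable_rat_of {f : α → ℚ} {a b d : α → ℕ} (ha : Computable a) (hb : Computable b)
    (hd : Computable d) (hd0 : ∀ x, d x ≠ 0) (h : ∀ x, f x = ((a x : ℚ) - b x) / d x) :
    Computable f := by
  rw [← Computable.encode_iff]
  refine computable_of_search (p := fun x n =>
    decide (rpos (Denumerable.ofNat ℚ n) * d x + b x * (Denumerable.ofNat ℚ n).den =
      a x * (Denumerable.ofNat ℚ n).den + rneg (Denumerable.ofNat ℚ n) * d x)) ?_ ?_
  · have o : Computable (fun z : α × ℕ => Denumerable.ofNat ℚ z.2) :=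
      (Computable.ofNat ℚ).comp Computable.snd
    exact computable_nat_eq
      (computable_nat_add (computable_nat_mul (computable_rpos.comp o) (hd.comp Computable.fst))
        (computable_nat_mul (hb.comp Computable.fst) (computable_rat_den.comp o)))
      (computable_nat_add (computable_nat_mul (ha.comp Computable.fst) (computable_rat_den.comp o))
        (computable_nat_mul (computable_rneg.comp o) (hd.comp Computable.fst)))
  · intro x n
    rw [decide_eq_true_eq]
    set q := Denumerable.ofNat ℚ n with hq
    have hn : n = @Encodable.encode ℚ (Primcodable.ofDenumerable ℚ).toEncodable q :=
      (Denumerable.encode_ofNat (α := ℚ) n).symm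
    rw [hn]
    have h1 : (q.den : ℚ) ≠ 0 := by exact_mod_cast q.den_nz
    have h2 : (d x : ℚ) ≠ 0 := by exact_mod_cast hd0 x
    have h3 : (@Encodable.encode ℚ (Primcodable.ofDenumerable ℚ).toEncodable q =
      @Encodable.encode ℚ (Primcodable.ofDenumerable ℚ).toEncodable (f x)) ↔ q = f x :=
      @Encodable.encode_inj ℚ (Primcodable.ofDenumerable ℚ).toEncodable q (f x)
    rw [h3, h x]
    have h4 : q = ((a x : ℚ) - b x) / d x ↔
        ((rpos q : ℚ) - (rneg q : ℚ)) / (q.den : ℚ) = ((a x : ℚ) - b x) / d x := by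
      rw [← rat_eq_pnd q]
    rw [h4, div_eq_div_iff h1 h2]
    constructor
    · intro e
      have e' : ((rpos q : ℚ) * d x + b x * q.den) = (a x * q.den + rneg q * d x) := by exact_mod_cast e
      linarith
    · intro e
      have e' : ((rpos q : ℚ) * d x + b x * q.den) = (a x * q.den + rneg q * d x) := by linarith
      exact_mod_cast e'

theorem computable_rat_add {f g : α → ℚ} (hf : Computable f) (hg : Computable g) :
    Computable (fun x => f x + g x) := by
  have d1 := computable_rat_den.comp hf
  have d2 := computable_rat_den.comp hg
  refine computable_rat_of
    (computable_nat_add (computable_nat_mul (computable_rpos.comp hf) d2) (computable_nat_mul (computable_rpos.comp hg) d1))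
    (computable_nat_add (computable_nat_mul (computable_rneg.comp hf) d2) (computable_nat_mul (computable_rneg.comp hg) d1))
    (computable_nat_mul d1 d2) (fun x => Nat.mul_ne_zero (f x).den_nz (g x).den_nz) (fun x => ?_)
  have h1 : ((f x).den : ℚ) ≠ 0 := by exact_mod_cast (f x).den_nz
  have h2 : ((g x).den : ℚ) ≠ 0 := by exact_mod_cast (g x).den_nz
  conv_lhs => rw [rat_eq_pnd (f x), rat_eq_pnd (g x)]
  push_cast
  field_simp
  ring

theorem computable_rat_neg {f : α → ℚ} (hf : Computable f) : Computable (fun x => - f x) := by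
  refine computable_rat_of (computable_rneg.comp hf) (computable_rpos.comp hf)
    (computable_rat_den.comp hf) (fun x => (f x).den_nz) (fun x => ?_)
  conv_lhs => rw [rat_eq_pnd (f x)]
  ring

theorem computable_rat_sub {f g : α → ℚ} (hf : Computable f) (hg : Computable g) :
    Computable (fun x => f x - g x) :=
  (computable_rat_add hf (computable_rat_neg hg)).of_eq (fun x => by ring)

theorem computable_rat_mul {f g : α → ℚ} (hf : Computable f) (hg : Computable g) :
    Computable (fun x => f x * g x) := by
  have d1 := computable_rat_den.comp hf
  have d2 := computable_rat_den.comp hg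
  refine computable_rat_of
    (computable_nat_add (computable_nat_mul (computable_rpos.comp hf) (computable_rpos.comp hg))
      (computable_nat_mul (computable_rneg.comp hf) (computable_rneg.comp hg)))
    (computable_nat_add (computable_nat_mul (computable_rpos.comp hf) (computable_rneg.comp hg))
      (computable_nat_mul (computable_rneg.comp hf) (computable_rpos.comp hg)))
    (computable_nat_mul d1 d2) (fun x => Nat.mul_ne_zero (f x).den_nz (g x).den_nz) (fun x => ?_)
  have h1 : ((f x).den : ℚ) ≠ 0 := by exact_mod_cast (f x).den_nz
  have h2 : ((g x).den : ℚ) ≠ 0 := by exact_mod_cast (g x).den_nz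
  conv_lhs => rw [rat_eq_pnd (f x), rat_eq_pnd (g x)]
  push_cast
  field_simp
  ring

theorem computable_rat_lt {f g : α → ℚ} (hf : Computable f) (hg : Computable g) :
    Computable (fun x => decide (f x < g x)) := by
  have h := computable_nat_lt (Computable.const 0) (computable_rpos.comp (computable_rat_sub hg hf))
  refine h.of_eq (fun x => ?_)
  congr 1
  unfold rpos
  rw [← sub_pos (a := g x), ← Rat.num_pos, eq_iff_iff]
  omega

theorem computable_rat_le {f g : α → ℚ} (hf : Computable f) (hg : Computable g) :
    Computable (fun x => decide (f x ≤ g x)) := by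
  refine (Computable.not' (computable_rat_lt hg hf)).of_eq (fun x => ?_)
  rw [← decide_not]
  simp

theorem computable_rat_abs {f : α → ℚ} (hf : Computable f) : Computable (fun x => |f x|) := by
  refine (Computable.cond (computable_rat_lt hf (Computable.const 0)) (computable_rat_neg hf) hf).of_eq (fun x => ?_)
  by_cases h : f x < 0
  · simp [h, abs_of_neg h]
  · simp [h, abs_of_nonneg (not_lt.1 h)]

theorem computable_rat_max {f g : α → ℚ} (hf : Computable f) (hg : Computable g) :
    Computable (fun x => max (f x) (g x)) := by
  refine (Computable.cond (computable_rat_lt hf hg) hg hf).of_eq (fun x => ?_)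
  by_cases h : f x < g x
  · simp [h, max_eq_right h.le]
  · simp [h, max_eq_left (not_lt.1 h)]

theorem computable_half_pow {n : α → ℕ} (hn : Computable n) : Computable (fun x => ((1:ℚ)/2) ^ n x) := by
  have h2 : Computable (fun n : ℕ => 2 ^ n) := by
    have : Computable (fun n : ℕ => (Nat.rec 1 (fun _ v => v * 2) n : ℕ)) := by
      refine Computable.nat_rec (h := fun (_ : ℕ) (x : ℕ × ℕ) => x.2 * 2) Computable.id (Computable.const 1) ?_
      exact computable_nat_mul (Computable.snd.comp Computable.snd) (Computable.const 2)
    refine this.of_eq (fun n => ?_)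
    induction n with
    | zero => rfl
    | succ n ih => simp only [ih, pow_succ]
  refine computable_rat_of (Computable.const 1) (Computable.const 0) (h2.comp hn) (fun x => by positivity) (fun x => ?_)
  simp

theorem computable_two_pow_rat {n : α → ℕ} (hn : Computable n) : Computable (fun x => (2:ℚ) ^ n x) := by
  have h2 : Computable (fun n : ℕ => 2 ^ n) := by
    have : Computable (fun n : ℕ => (Nat.rec 1 (fun _ v => v * 2) n : ℕ)) := by
      refine Computable.nat_rec (h := fun (_ : ℕ) (x : ℕ × ℕ) => x.2 * 2) Computable.id (Computable.const 1) ?_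
      exact computable_nat_mul (Computable.snd.comp Computable.snd) (Computable.const 2)
    refine this.of_eq (fun n => ?_)
    induction n with
    | zero => rfl
    | succ n ih => simp only [ih, pow_succ]
  refine computable_rat_of (h2.comp hn) (Computable.const 0) (Computable.const 1) (fun x => by positivity) (fun x => ?_)
  simp
end

/-! ### The comb-like sets `{f ≤ y ≤ g}` -/

/-- the region between the graphs of `f` and `g` over `[-2,2]` -/
def combSet (f g : ℝ → ℝ) : Set (ℝ × ℝ) := {p | |p.1| ≤ 2 ∧ f p.1 ≤ p.2 ∧ p.2 ≤ g p.1}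

section Comb
variable {f g : ℝ → ℝ}

theorem comb_base_mem (hf : Continuous f) (hd : Dense {x | g x = f x}) {C : Set (ℝ × ℝ)}
    (hCK : C ⊆ combSet f g) (hC : IsClosed C) (hcon : IsPreconnected C) {p q : ℝ × ℝ} (hp : p ∈ C)
    (hq : q ∈ C) (hpq : p.1 < q.1) {x : ℝ} (hx : x ∈ Set.Icc p.1 q.1) : (x, f x) ∈ C := by
  have himg : IsPreconnected (Prod.fst '' C) := hcon.image _ continuous_fst.continuousOn
  have h1 : ∀ z ∈ Set.Ioo p.1 q.1, g z = f z → (z, f z) ∈ C := by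
    intro z hz hgz
    have : z ∈ Prod.fst '' C :=
      himg.Icc_subset (Set.mem_image_of_mem _ hp) (Set.mem_image_of_mem _ hq) ⟨hz.1.le, hz.2.le⟩
    obtain ⟨r, hr, hrz⟩ := this
    have h2 := hCK hr
    have : r = (z, f z) := by
      refine Prod.ext hrz ?_
      have h3 := h2.2.1
      have h4 := h2.2.2
      rw [hrz] at h3 h4
      rw [hgz] at h4
      exact le_antisymm h4 h3
    exact this ▸ hr
  have h2 : x ∈ closure (Set.Ioo p.1 q.1 ∩ {x | g x = f x}) := by
    have h3 := hd.open_subset_closure_inter (isOpen_Ioo (a := p.1) (b := q.1))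
    have h4 : x ∈ closure (Set.Ioo p.1 q.1) := by rw [closure_Ioo hpq.ne]; exact hx
    exact closure_minimal h3 isClosed_closure h4
  have h5 : IsClosed {z | (z, f z) ∈ C} := hC.preimage (by fun_prop)
  exact closure_minimal (fun z hz => h1 z hz.1 hz.2) h5 h2

theorem comb_vert_mem (hf : Continuous f) (hd : Dense {x | g x = f x}) {C : Set (ℝ × ℝ)}
    (hCK : C ⊆ combSet f g) (hC : IsClosed C) (hcon : IsPreconnected C) {x y₁ y₂ y : ℝ}
    (h1 : (x, y₁) ∈ C) (h2 : (x, y₂) ∈ C) (hy1 : y₁ ≤ y) (hy2 : y ≤ y₂) : (x, y) ∈ C := by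
  by_contra hc
  have hy1' : y₁ < y := lt_of_le_of_ne hy1 (fun h => hc (h ▸ h1))
  have hy2' : y < y₂ := lt_of_le_of_ne hy2 (fun h => hc (h ▸ h2))
  have hfx : f x < y := lt_of_le_of_lt (hCK h1).2.1 hy1'
  have e1 : ∀ᶠ z in nhds x, f z < y := hf.continuousAt.eventually_lt continuousAt_const hfx
  have e2 : ∀ᶠ z in nhds x, (z, y) ∉ C := by
    have : IsOpen {z : ℝ | (z, y) ∉ C} := by
      have : IsOpen Cᶜ := hC.isOpen_compl
      exact this.preimage (by fun_prop : Continuous fun z : ℝ => (z, y))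
    exact this.mem_nhds hc
  obtain ⟨δ, hδ, hb⟩ := Metric.eventually_nhds_iff.1 (e1.and e2)
  obtain ⟨a, ha, ha'⟩ := hd.exists_between (show x - δ < x by linarith)
  obtain ⟨b, hb1, hb'⟩ := hd.exists_between (show x < x + δ by linarith)
  have hab : ∀ z ∈ Set.Icc a b, f z < y ∧ (z, y) ∉ C := by
    intro z hz
    apply hb
    rw [Real.dist_eq, abs_lt]
    constructor <;> linarith [ha'.1, ha'.2, hb'.1, hb'.2, hz.1, hz.2]
  let U : Set (ℝ × ℝ) := {r | a < r.1 ∧ r.1 < b ∧ y < r.2}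
  let V : Set (ℝ × ℝ) := {r | r.1 < a ∨ b < r.1 ∨ r.2 < y}
  have hU : IsOpen U :=
    (isOpen_lt continuous_const continuous_fst).inter ((isOpen_lt continuous_fst continuous_const).inter
      (isOpen_lt continuous_const continuous_snd))
  have hV : IsOpen V :=
    (isOpen_lt continuous_fst continuous_const).union ((isOpen_lt continuous_const continuous_fst).union
      (isOpen_lt continuous_snd continuous_const))
  have hcov : C ⊆ U ∪ V := by
    intro r hr
    by_cases hV' : r ∈ V
    · exact Or.inr hV'
    left
    simp only [V, Set.mem_setOf_eq, not_or, not_lt] at hV'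
    obtain ⟨ra, rb, ry⟩ := hV'
    obtain ⟨k1, k2⟩ := hab r.1 ⟨ra, rb⟩
    have k3 := hCK hr
    refine ⟨lt_of_le_of_ne ra ?_, lt_of_le_of_ne rb ?_, lt_of_le_of_ne ry ?_⟩
    · intro e
      have h5 : g a = f a := ha
      have := k3.2.2
      rw [← e] at this k1
      linarith
    · intro e
      have h5 : g b = f b := hb1
      have := k3.2.2
      rw [e] at this k1
      linarith
    · intro e
      apply k2
      rw [e]
      exact hr
  obtain ⟨r, hr, hrU, hrV⟩ := hcon U V hU hV hcov ⟨(x, y₂), h2, ha'.2, hb'.1, hy2'⟩ ⟨(x, y₁), h1, Or.inr (Or.inr hy1')⟩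
  simp only [U, Set.mem_setOf_eq] at hrU
  simp only [V, Set.mem_setOf_eq] at hrV
  rcases hrV with h | h | h <;> linarith [hrU.1, hrU.2.1, hrU.2.2]

theorem comb_inter_preconnected (hf : Continuous f) (hd : Dense {x | g x = f x}) {A B : Set (ℝ × ℝ)}
    (hA : A ⊆ combSet f g) (hB : B ⊆ combSet f g) (hAc : IsClosed A) (hBc : IsClosed B)
    (hA' : IsPreconnected A) (hB' : IsPreconnected B) : IsPreconnected (A ∩ B) := by
  have vert : ∀ x y₁ y₂, (x, y₁) ∈ A ∩ B → (x, y₂) ∈ A ∩ B → y₁ ≤ y₂ →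
      (fun y => (x, y)) '' (Set.Icc y₁ y₂) ⊆ A ∩ B := by
    rintro x y₁ y₂ h1 h2 h12 _ ⟨y, hy, rfl⟩
    exact ⟨comb_vert_mem hf hd hA hAc hA' h1.1 h2.1 hy.1 hy.2,
      comb_vert_mem hf hd hB hBc hB' h1.2 h2.2 hy.1 hy.2⟩
  have vpre : ∀ x y₁ y₂ : ℝ, IsPreconnected ((fun y => ((x, y) : ℝ × ℝ)) '' (Set.Icc y₁ y₂)) :=
    fun x y₁ y₂ => isPreconnected_Icc.image _ (by fun_prop)
  have main : ∀ p ∈ A ∩ B, ∀ q ∈ A ∩ B, p.1 ≤ q.1 → ∃ t ⊆ A ∩ B, p ∈ t ∧ q ∈ t ∧ IsPreconnected t := by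
    rintro ⟨x1, y1⟩ hp ⟨x2, y2⟩ hq hle
    rcases hle.lt_or_eq with hlt | heq
    · have base : ∀ x ∈ Set.Icc x1 x2, (x, f x) ∈ A ∩ B := fun x hx =>
        ⟨comb_base_mem hf hd hA hAc hA' hp.1 hq.1 hlt hx, comb_base_mem hf hd hB hBc hB' hp.2 hq.2 hlt hx⟩
      have b1 := base x1 ⟨le_rfl, hlt.le⟩
      have b2 := base x2 ⟨hlt.le, le_rfl⟩
      have g1 : f x1 ≤ y1 := (hA hp.1).2.1
      have g2 : f x2 ≤ y2 := (hA hq.1).2.1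
      refine ⟨((fun y => (x1, y)) '' (Set.Icc (f x1) y1) ∪ (fun x => (x, f x)) '' Set.Icc x1 x2) ∪
        (fun y => (x2, y)) '' (Set.Icc (f x2) y2), ?_, ?_, ?_, ?_⟩
      · refine Set.union_subset (Set.union_subset (vert _ _ _ b1 hp g1) ?_) (vert _ _ _ b2 hq g2)
        rintro _ ⟨x, hx, rfl⟩
        exact base x hx
      · exact Or.inl (Or.inl ⟨y1, ⟨g1, le_rfl⟩, rfl⟩)
      · exact Or.inr ⟨y2, ⟨g2, le_rfl⟩, rfl⟩
      · refine IsPreconnected.union (x2, f x2) (Or.inr ⟨x2, ⟨hlt.le, le_rfl⟩, rfl⟩) ⟨f x2, ⟨le_rfl, g2⟩, rfl⟩ ?_ (vpre _ _ _)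
        refine IsPreconnected.union (x1, f x1) ⟨f x1, ⟨le_rfl, g1⟩, rfl⟩ ⟨x1, ⟨le_rfl, hlt.le⟩, rfl⟩ (vpre _ _ _) ?_
        exact isPreconnected_Icc.image _ (by fun_prop)
    · simp only at heq
      subst heq
      rcases le_total y1 y2 with h | h
      · exact ⟨_, vert x1 y1 y2 hp hq h, ⟨y1, ⟨le_rfl, h⟩, rfl⟩, ⟨y2, ⟨h, le_rfl⟩, rfl⟩, vpre _ _ _⟩
      · exact ⟨_, vert x1 y2 y1 hq hp h, ⟨y1, ⟨h, le_rfl⟩, rfl⟩, ⟨y2, ⟨le_rfl, h⟩, rfl⟩, vpre _ _ _⟩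
  apply isPreconnected_of_forall_pair
  intro p hp q hq
  rcases le_total p.1 q.1 with h | h
  · exact main p hp q hq h
  · obtain ⟨t, h1, h2, h3, h4⟩ := main q hq p hp h
    exact ⟨t, h1, h3, h2, h4⟩

theorem comb_hereditarilyUnicoherent (hf : Continuous f) (hd : Dense {x | g x = f x}) :
    HereditarilyUnicoherent (combSet f g) := by
  intro Y hY hYc A B hAY hBY hA hB hAc hBc hAB
  refine ⟨?_, comb_inter_preconnected hf hd (hAY.trans hY) (hBY.trans hY) hA hB hAc.isPreconnected hBc.isPreconnected⟩
  have h := isPreconnected_closed_iff.1 hYc.2.isPreconnected A B hA hB hAB.ge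
  obtain ⟨a, ha⟩ := hAc.nonempty
  obtain ⟨b, hb⟩ := hBc.nonempty
  obtain ⟨z, -, hz⟩ := h ⟨a, hAY ha, ha⟩ ⟨b, hBY hb, hb⟩
  exact ⟨z, hz⟩

theorem isArc_of_Icc {γ : ℝ → ℝ × ℝ} {a b : ℝ} (hab : a < b) (hγ : Continuous γ)
    (hinj : Set.InjOn γ (Set.Icc a b)) : IsArc (γ '' Set.Icc a b) (γ a) (γ b) := by
  have hba : 0 < b - a := sub_pos.2 hab
  refine ⟨fun t => γ (a + (b - a) * t), by fun_prop, ?_, ?_, by simp, by simp⟩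
  · intro s t hst
    have hs : a + (b - a) * (s : ℝ) ∈ Set.Icc a b := ⟨by nlinarith [s.2.1, s.2.2], by nlinarith [s.2.1, s.2.2]⟩
    have ht : a + (b - a) * (t : ℝ) ∈ Set.Icc a b := ⟨by nlinarith [t.2.1, t.2.2], by nlinarith [t.2.1, t.2.2]⟩
    have := hinj hs ht hst
    have h2 : (b - a) * (s : ℝ) = (b - a) * (t : ℝ) := by linarith
    exact Subtype.ext (mul_left_cancel₀ hba.ne' h2)
  · ext z
    constructor
    · rintro ⟨s, rfl⟩
      exact ⟨_, ⟨by nlinarith [s.2.1, s.2.2], by nlinarith [s.2.1, s.2.2]⟩, rfl⟩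
    · rintro ⟨u, hu, rfl⟩
      refine ⟨⟨(u - a) / (b - a), div_nonneg (by linarith [hu.1]) hba.le, (div_le_one hba).2 (by linarith [hu.2])⟩, ?_⟩
      simp only
      congr 1
      field_simp
      ring

theorem IsArc.symm' {A : Set (ℝ × ℝ)} {x y : ℝ × ℝ} (h : IsArc A x y) : IsArc A y x := by
  obtain ⟨φ, hc, hi, hr, h0, h1⟩ := h
  refine ⟨fun t => φ (unitInterval.symm t), by fun_prop, ?_, ?_, ?_, ?_⟩
  · intro s t hst
    exact unitInterval.symm_bijective.injective (hi hst)
  · rw [← hr]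
    exact unitInterval.symm_bijective.surjective.range_comp φ
  · rw [← h1]
    exact congrArg φ (Subtype.ext (by simp [unitInterval.symm]))
  · rw [← h0]
    exact congrArg φ (Subtype.ext (by simp [unitInterval.symm]))

theorem comb_arcwise (hf : Continuous f) (hfg : ∀ x, f x ≤ g x) : ArcwiseConnectedSet (combSet f g) := by
  have main : ∀ p ∈ combSet f g, ∀ q ∈ combSet f g, p ≠ q → p.1 ≤ q.1 →
      ∃ A, A ⊆ combSet f g ∧ (IsArc A p q ∨ IsArc A q p) := by
    rintro ⟨x1, y1⟩ hp ⟨x2, y2⟩ hq hne hle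
    obtain ⟨px, p1, p2⟩ := hp
    obtain ⟨qx, q1, q2⟩ := hq
    simp only at px p1 p2 qx q1 q2 hle
    rcases hle.lt_or_eq with hlt | heq
    · let γ : ℝ → ℝ × ℝ := fun s => (max x1 (min s x2), f (max x1 (min s x2)) + max (x1 - s) 0 + max (s - x2) 0)
      have hγ : Continuous γ := by fun_prop
      have ga : γ (x1 - (y1 - f x1)) = (x1, y1) := by
        have e1 : max x1 (min (x1 - (y1 - f x1)) x2) = x1 := max_eq_left ((min_le_left _ _).trans (by linarith))
        have e2 : max (x1 - (x1 - (y1 - f x1))) 0 = y1 - f x1 := by rw [max_eq_left] <;> linarith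
        have e3 : max ((x1 - (y1 - f x1)) - x2) 0 = 0 := max_eq_right (by linarith)
        simp only [γ, e1, e2, e3]; congr 1; ring
      have gb : γ (x2 + (y2 - f x2)) = (x2, y2) := by
        have e1 : max x1 (min (x2 + (y2 - f x2)) x2) = x2 := by
          rw [min_eq_right (by linarith), max_eq_right hlt.le]
        have e2 : max (x1 - (x2 + (y2 - f x2))) 0 = 0 := max_eq_right (by linarith)
        have e3 : max ((x2 + (y2 - f x2)) - x2) 0 = y2 - f x2 := by rw [max_eq_left] <;> linarith
        simp only [γ, e1, e2, e3]; congr 1; ring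
      have c1 : ∀ s, s ≤ x1 → γ s = (x1, f x1 + (x1 - s)) := by
        intro s hs
        have e1 : max x1 (min s x2) = x1 := max_eq_left ((min_le_left _ _).trans hs)
        have e2 : max (x1 - s) 0 = x1 - s := max_eq_left (by linarith)
        have e3 : max (s - x2) 0 = 0 := max_eq_right (by linarith)
        simp only [γ, e1, e2, e3, add_zero]
      have c2 : ∀ s, x1 ≤ s → s ≤ x2 → γ s = (s, f s) := by
        intro s hs hs2
        have e1 : max x1 (min s x2) = s := by rw [min_eq_left hs2, max_eq_right hs]
        have e2 : max (x1 - s) 0 = 0 := max_eq_right (by linarith)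
        have e3 : max (s - x2) 0 = 0 := max_eq_right (by linarith)
        simp only [γ, e1, e2, e3, add_zero]
      have c3 : ∀ s, x2 ≤ s → γ s = (x2, f x2 + (s - x2)) := by
        intro s hs
        have e1 : max x1 (min s x2) = x2 := by rw [min_eq_right hs, max_eq_right hlt.le]
        have e2 : max (x1 - s) 0 = 0 := max_eq_right (by linarith)
        have e3 : max (s - x2) 0 = s - x2 := max_eq_left (by linarith)
        simp only [γ, e1, e2, e3, add_zero]
      have hinj : Function.Injective γ := by
        intro s t hst
        rcases le_total s x1 with hs | hs <;> rcases le_total t x1 with ht | ht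
        · rw [c1 s hs, c1 t ht, Prod.mk.injEq] at hst; linarith [hst.2]
        · rcases le_total t x2 with ht2 | ht2
          · rw [c1 s hs, c2 t ht ht2, Prod.mk.injEq] at hst
            obtain ⟨h1, h2⟩ := hst; subst h1; linarith
          · rw [c1 s hs, c3 t ht2, Prod.mk.injEq] at hst
            obtain ⟨h1, h2⟩ := hst; linarith
        · rcases le_total s x2 with hs2 | hs2
          · rw [c1 t ht, c2 s hs hs2, Prod.mk.injEq] at hst
            obtain ⟨h1, h2⟩ := hst; subst h1; linarith
          · rw [c1 t ht, c3 s hs2, Prod.mk.injEq] at hst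
            obtain ⟨h1, h2⟩ := hst; linarith
        · rcases le_total s x2 with hs2 | hs2 <;> rcases le_total t x2 with ht2 | ht2
          · rw [c2 s hs hs2, c2 t ht ht2, Prod.mk.injEq] at hst; exact hst.1
          · rw [c2 s hs hs2, c3 t ht2, Prod.mk.injEq] at hst
            obtain ⟨h1, h2⟩ := hst; subst h1; linarith
          · rw [c3 s hs2, c2 t ht ht2, Prod.mk.injEq] at hst
            obtain ⟨h1, h2⟩ := hst; subst h1; linarith
          · rw [c3 s hs2, c3 t ht2, Prod.mk.injEq] at hst; linarith [hst.2]
      refine ⟨γ '' Set.Icc (x1 - (y1 - f x1)) (x2 + (y2 - f x2)), ?_, Or.inl ?_⟩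
      · rintro _ ⟨s, ⟨hs1, hs2⟩, rfl⟩
        have hg : ∀ x, x1 ≤ x → x ≤ x2 → |x| ≤ 2 := fun x h1 h2 =>
          abs_le.2 ⟨by linarith [(abs_le.1 px).1], by linarith [(abs_le.1 qx).2]⟩
        rcases le_total s x1 with hs | hs
        · rw [c1 s hs]; exact ⟨px, by simp only; linarith, by simp only; linarith⟩
        · rcases le_total s x2 with hs' | hs'
          · rw [c2 s hs hs']
            refine ⟨hg s hs hs', le_rfl, ?_⟩
            exact hfg s
          · rw [c3 s hs']; exact ⟨qx, by simp only; linarith, by simp only; linarith⟩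
      · have := isArc_of_Icc (a := x1 - (y1 - f x1)) (b := x2 + (y2 - f x2)) (by linarith) hγ hinj.injOn
        rwa [ga, gb] at this
    · subst heq
      have hγ : Continuous (fun y : ℝ => (x1, y)) := by fun_prop
      have hinj : Function.Injective (fun y : ℝ => (x1, y)) := fun a b h => (Prod.mk.inj h).2
      have hne' : y1 ≠ y2 := fun h => hne (by rw [h])
      rcases lt_or_gt_of_ne hne' with h | h
      · refine ⟨_, ?_, Or.inl (isArc_of_Icc h hγ hinj.injOn)⟩
        rintro _ ⟨s, hs, rfl⟩
        exact ⟨px, p1.trans hs.1, hs.2.trans q2⟩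
      · refine ⟨_, ?_, Or.inr (isArc_of_Icc h hγ hinj.injOn)⟩
        rintro _ ⟨s, hs, rfl⟩
        exact ⟨px, q1.trans hs.1, hs.2.trans p2⟩
  intro p hp q hq hne
  rcases le_total p.1 q.1 with h | h
  · obtain ⟨A, hA, h1 | h1⟩ := main p hp q hq hne h
    · exact ⟨A, hA, h1⟩
    · exact ⟨A, hA, h1.symm'⟩
  · obtain ⟨A, hA, h1 | h1⟩ := main q hq p hp hne.symm h
    · exact ⟨A, hA, h1.symm'⟩
    · exact ⟨A, hA, h1⟩

end Comb

theorem dist_ratPt (a b c d : ℚ) : dist (((a:ℝ),(b:ℝ)) : ℝ×ℝ) ((c:ℝ),(d:ℝ)) = ((max |a - c| |b - d| : ℚ) : ℝ) := by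
  rw [Prod.dist_eq, Real.dist_eq, Real.dist_eq]; push_cast; rfl

theorem computableClosed_of_near {K : Set (ℝ × ℝ)} (hK : IsClosed K) (near : ℕ → ℚ → ℚ → Bool)
    (hnear : Computable (fun a : ℕ × ℚ × ℚ => near a.1 a.2.1 a.2.2)) (C : ℕ)
    (hA : ∀ (s : ℕ) (x y : ℚ), near s x y = true → ∃ q ∈ K, dist (((x:ℝ),(y:ℝ)) : ℝ×ℝ) q ≤ C * (1/2:ℝ)^s)
    (hB : ∀ (s : ℕ) (x y : ℚ), (∃ q ∈ K, dist (((x:ℝ),(y:ℝ)) : ℝ×ℝ) q ≤ (1/2:ℝ)^s) → near s x y = true) :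
    IsComputableClosed K := by
  have hsmall : ∀ r : ℝ, 0 < r → ∃ s : ℕ, (C+2) * (1/2:ℝ)^s < r := by
    intro r hr
    obtain ⟨s, hs⟩ := exists_pow_lt_of_lt_one (show 0 < r / (C+2) by positivity) (by norm_num : (1/2:ℝ) < 1)
    refine ⟨s, ?_⟩
    rw [lt_div_iff₀ (by positivity)] at hs
    linarith
  have hrat : ∀ (p : ℝ × ℝ) (d : ℝ), 0 < d → ∃ x y : ℚ, dist p (((x:ℝ),(y:ℝ)) : ℝ×ℝ) < d := by
    intro p d hd
    obtain ⟨x, h1, h2⟩ := exists_rat_btwn (show p.1 < p.1 + d by linarith)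
    obtain ⟨y, h3, h4⟩ := exists_rat_btwn (show p.2 < p.2 + d by linarith)
    refine ⟨x, y, ?_⟩
    rw [Prod.dist_eq, Real.dist_eq, Real.dist_eq]
    apply max_lt <;> rw [abs_lt] <;> constructor <;> simp only <;> linarith
  have hcast : ∀ s : ℕ, (((1/2:ℚ)^s : ℚ) : ℝ) = (1/2:ℝ)^s := by intro s; push_cast; rfl
  constructor
  · refine ⟨fun c => ∃ s : ℕ, (!(near s c.1.1 c.1.2) && decide (c.2 ≤ (1/2:ℚ)^s)) = true, ?_, ?_⟩
    · have c3 : Computable (fun p : ((ℚ × ℚ) × ℚ) × ℕ => p.2) := Computable.snd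
      have c4 : Computable (fun p : ((ℚ × ℚ) × ℚ) × ℕ => p.1.1.1) :=
        Computable.fst.comp (Computable.fst.comp Computable.fst)
      have c5 : Computable (fun p : ((ℚ × ℚ) × ℚ) × ℕ => p.1.1.2) :=
        Computable.snd.comp (Computable.fst.comp Computable.fst)
      have c6 : Computable (fun p : ((ℚ × ℚ) × ℚ) × ℕ => p.1.2) :=
        Computable.snd.comp Computable.fst
      have c7 : Computable (fun p : ((ℚ × ℚ) × ℚ) × ℕ => near p.2 p.1.1.1 p.1.1.2) := by
        have := hnear.comp (Computable.pair c3 (Computable.pair c4 c5))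
        exact this
      have c8 := Computable.not' c7
      have c9 := computable_rat_le c6 (computable_half_pow c3)
      have c10 := Computable.and' c8 c9
      exact rePred_exists (p := fun (c : (ℚ × ℚ) × ℚ) (s : ℕ) => (!(near s c.1.1 c.1.2) && decide (c.2 ≤ (1/2:ℚ)^s)))
        c10
    · ext p
      simp only [Set.mem_sdiff, Set.mem_univ, true_and, Set.mem_iUnion, not_exists]
      constructor
      · rintro hp c ⟨s, hs⟩ hc
        simp only [Bool.and_eq_true, Bool.not_eq_true', decide_eq_true_eq] at hs
        have : near s c.1.1 c.1.2 = true := by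
          apply hB
          refine ⟨p, hp, ?_⟩
          rw [dist_comm]
          have h2 : dist p (((c.1.1:ℝ),(c.1.2:ℝ)) : ℝ×ℝ) < c.2 := hc
          have h3 : (c.2 : ℝ) ≤ (1/2:ℝ)^s := by
            rw [← hcast]; exact Rat.cast_le.2 hs.2
          linarith
        rw [this] at hs
        exact absurd hs.1 (by simp)
      · intro h
        by_contra hp
        obtain ⟨d, hd, hball⟩ := Metric.isOpen_iff.1 hK.isOpen_compl p hp
        obtain ⟨s, hs⟩ := hsmall d hd
        have hpos : (0:ℝ) < (1/2:ℝ)^s := by positivity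
        obtain ⟨x, y, hxy⟩ := hrat p _ hpos
        refine h ((x, y), (1/2:ℚ)^s) ⟨s, ?_⟩ ?_
        · simp only [Bool.and_eq_true, Bool.not_eq_true', decide_eq_true_eq, le_refl, and_true]
          by_contra hn
          obtain ⟨q, hq, hqd⟩ := hA s x y (by simpa using hn)
          apply hball (a := q) _ hq
          rw [Metric.mem_ball, dist_comm]
          have := dist_triangle p (((x:ℝ),(y:ℝ)) : ℝ×ℝ) q
          nlinarith
        · change dist p _ < _
          push_cast
          push_cast at hxy
          exact hxy
  · have : (fun c : (ℚ × ℚ) × ℚ => (K ∩ ballOfCode c).Nonempty) = fun c : (ℚ × ℚ) × ℚ => ∃ a : ℕ × ℚ × ℚ,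
      (near a.1 a.2.1 a.2.2 && decide (max |a.2.1 - c.1.1| |a.2.2 - c.1.2| + C * (1/2:ℚ)^a.1 < c.2)) = true := by
      funext c
      apply propext
      constructor
      · rintro ⟨p, hp, hpc⟩
        have h2 : dist p (((c.1.1:ℝ),(c.1.2:ℝ)) : ℝ×ℝ) < c.2 := hpc
        obtain ⟨s, hs⟩ := hsmall _ (sub_pos.2 h2)
        have hpos : (0:ℝ) < (1/2:ℝ)^s := by positivity
        obtain ⟨x, y, hxy⟩ := hrat p _ hpos
        refine ⟨(s, x, y), ?_⟩
        simp only [Bool.and_eq_true, decide_eq_true_eq]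
        refine ⟨hB _ _ _ ⟨p, hp, by rw [dist_comm]; exact hxy.le⟩, ?_⟩
        have h3 := dist_ratPt x y c.1.1 c.1.2
        have h4 := dist_triangle (((x:ℝ),(y:ℝ)) : ℝ×ℝ) p (((c.1.1:ℝ),(c.1.2:ℝ)) : ℝ×ℝ)
        rw [dist_comm _ p, h3] at h4
        have : ((max |x - c.1.1| |y - c.1.2| : ℚ) : ℝ) + C * (1/2:ℝ)^s < c.2 := by nlinarith
        rw [← hcast, ← Rat.cast_natCast, ← Rat.cast_mul, ← Rat.cast_add] at this
        exact Rat.cast_lt.1 this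
      · rintro ⟨⟨s, x, y⟩, h⟩
        simp only [Bool.and_eq_true, decide_eq_true_eq] at h
        obtain ⟨q, hq, hqd⟩ := hA s x y h.1
        refine ⟨q, hq, ?_⟩
        change dist q _ < _
        have h3 := dist_ratPt x y c.1.1 c.1.2
        have h4 := dist_triangle q (((x:ℝ),(y:ℝ)) : ℝ×ℝ) (((c.1.1:ℝ),(c.1.2:ℝ)) : ℝ×ℝ)
        rw [dist_comm q _ , h3] at h4
        rw [dist_comm q _ ] at h4 ⊢
        have : ((max |x - c.1.1| |y - c.1.2| : ℚ) : ℝ) + C * (1/2:ℝ)^s < c.2 := by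
          rw [← hcast, ← Rat.cast_natCast, ← Rat.cast_mul, ← Rat.cast_add]
          exact Rat.cast_lt.2 h.2
        linarith
    unfold IsCEClosed
    rw [this]
    have c0 : Computable (fun p : ((ℚ × ℚ) × ℚ) × (ℕ × ℚ × ℚ) => near p.2.1 p.2.2.1 p.2.2.2) := by
      have := hnear.comp (Computable.snd : Computable (Prod.snd : ((ℚ × ℚ) × ℚ) × (ℕ × ℚ × ℚ) → _))
      exact this
    have c10 : Computable (fun p : ((ℚ × ℚ) × ℚ) × (ℕ × ℚ × ℚ) =>
        decide (max |p.2.2.1 - p.1.1.1| |p.2.2.2 - p.1.1.2| + C * (1/2:ℚ)^p.2.1 < p.1.2)) := by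
      have c1 : Computable (fun p : ((ℚ × ℚ) × ℚ) × (ℕ × ℚ × ℚ) => p.2.2.1) :=
        Computable.fst.comp (Computable.snd.comp Computable.snd)
      have c2 : Computable (fun p : ((ℚ × ℚ) × ℚ) × (ℕ × ℚ × ℚ) => p.2.2.2) :=
        Computable.snd.comp (Computable.snd.comp Computable.snd)
      have c3 : Computable (fun p : ((ℚ × ℚ) × ℚ) × (ℕ × ℚ × ℚ) => p.2.1) :=
        Computable.fst.comp Computable.snd
      have c4 : Computable (fun p : ((ℚ × ℚ) × ℚ) × (ℕ × ℚ × ℚ) => p.1.1.1) :=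
        Computable.fst.comp (Computable.fst.comp Computable.fst)
      have c5 : Computable (fun p : ((ℚ × ℚ) × ℚ) × (ℕ × ℚ × ℚ) => p.1.1.2) :=
        Computable.snd.comp (Computable.fst.comp Computable.fst)
      have c6 : Computable (fun p : ((ℚ × ℚ) × ℚ) × (ℕ × ℚ × ℚ) => p.1.2) :=
        Computable.snd.comp Computable.fst
      have := computable_rat_lt (computable_rat_add (computable_rat_max
        (computable_rat_abs (computable_rat_sub c1 c4)) (computable_rat_abs (computable_rat_sub c2 c5)))
        (computable_rat_mul (Computable.const (C:ℚ)) (computable_half_pow c3))) c6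
      exact this
    have c11 := Computable.and' c0 c10
    exact rePred_exists (p := fun (c : (ℚ × ℚ) × ℚ) (a : ℕ × ℚ × ℚ) =>
      (near a.1 a.2.1 a.2.2 && decide (max |a.2.1 - c.1.1| |a.2.2 - c.1.2| + C * (1/2:ℚ)^a.1 < c.2)))
      c11

noncomputable section CombDef

def xr (n : ℕ) : ℝ := (1/2:ℝ)^n
def hr (n : ℕ) : ℝ := (1/2:ℝ)^(n.unpair.1)
def wr (n k : ℕ) : ℝ := (1/2:ℝ)^(n+k+2)
def vr (n k : ℕ) : ℝ := (2:ℝ)^(n+k+2)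
def tent (n k : ℕ) (x : ℝ) : ℝ := max 0 (hr n * (1 - |x - xr n| * vr n k))

theorem wr_mul_vr (n k : ℕ) : wr n k * vr n k = 1 := by
  unfold wr vr; rw [← mul_pow]; norm_num

theorem wr_pos (n k : ℕ) : 0 < wr n k := by unfold wr; positivity
theorem vr_pos (n k : ℕ) : 0 < vr n k := by unfold vr; positivity
theorem xr_pos (n : ℕ) : 0 < xr n := by unfold xr; positivity
theorem hr_pos (n : ℕ) : 0 < hr n := by unfold hr; positivity
theorem xr_le_one (n : ℕ) : xr n ≤ 1 := pow_le_one₀ (by norm_num) (by norm_num)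
theorem hr_le_one (n : ℕ) : hr n ≤ 1 := pow_le_one₀ (by norm_num) (by norm_num)
theorem xr_anti {n m : ℕ} (h : n ≤ m) : xr m ≤ xr n := pow_le_pow_of_le_one (by norm_num) (by norm_num) h
theorem wr_le_xr (n k : ℕ) : wr n k ≤ xr n / 4 := by
  have : wr n k ≤ (1/2:ℝ)^(n+2) := pow_le_pow_of_le_one (by norm_num) (by norm_num) (by omega)
  unfold xr; rw [pow_add] at this; norm_num at this ⊢; linarith
theorem wr_le_k (n k : ℕ) : wr n k ≤ (1/2:ℝ)^k := pow_le_pow_of_le_one (by norm_num) (by norm_num) (by omega)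
theorem xr_lt_half {n m : ℕ} (h : n < m) : xr m ≤ xr n / 2 := by
  have := xr_anti (show n+1 ≤ m from h)
  unfold xr at *; rw [pow_succ] at this; linarith

theorem tent_nonneg (n k x) : 0 ≤ tent n k x := le_max_left _ _
theorem tent_le_h (n k x) : tent n k x ≤ hr n := by
  apply max_le (hr_pos n).le
  have : 0 ≤ |x - xr n| * vr n k := mul_nonneg (abs_nonneg _) (vr_pos _ _).le
  nlinarith [hr_pos n]
theorem tent_continuous (n k : ℕ) : Continuous (tent n k) := by unfold tent; fun_prop
theorem tent_pos_iff (n k x) : 0 < tent n k x ↔ |x - xr n| < wr n k := by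
  have h1 := wr_mul_vr n k
  have h2 := vr_pos n k
  have h3 := hr_pos n
  unfold tent
  constructor
  · intro h
    have h4 : 0 < hr n * (1 - |x - xr n| * vr n k) := by
      by_contra hc
      rw [max_eq_left (not_lt.1 hc)] at h
      exact lt_irrefl _ h
    have h5 := (mul_pos_iff_of_pos_left h3).1 h4
    by_contra hc
    nlinarith [not_lt.1 hc]
  · intro h
    apply lt_max_of_lt_right
    apply mul_pos h3
    nlinarith

theorem tent_disjoint' {n k n' k' : ℕ} {x : ℝ} (h : |x - xr n| ≤ wr n k) (h' : |x - xr n'| ≤ wr n' k') (hlt : n < n') : False := by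
  have := wr_le_xr n k
  have := wr_le_xr n' k'
  have := xr_lt_half hlt
  have := xr_pos n
  have := xr_pos n'
  have := abs_le.1 h
  have := abs_le.1 h'
  linarith

theorem tent_disjoint {n k n' k' : ℕ} {x : ℝ} (h : |x - xr n| ≤ wr n k) (h' : |x - xr n'| ≤ wr n' k') : n = n' := by
  rcases lt_trichotomy n n' with h1 | h1 | h1
  · exact (tent_disjoint' h h' h1).elim
  · exact h1
  · exact (tent_disjoint' h' h h1).elim

variable (T : ℕ → ℕ → Bool)

def TOne : Prop := ∀ n k n' k', T n k = true → T n' k' = true → n.unpair.1 = n'.unpair.1 → n = n' ∧ k = k'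

open Classical in
def bump (e : ℕ) (x : ℝ) : ℝ :=
  if h : ∃ p : ℕ × ℕ, p.1.unpair.1 = e ∧ T p.1 p.2 = true then tent h.choose.1 h.choose.2 x else 0

def fT (x : ℝ) : ℝ := ∑' e, bump T e x

open Classical in
def whisk (x : ℝ) : ℝ := if x = 0 then 1 else if h : ∃ n, x = xr n then hr h.choose else 0

def gT (x : ℝ) : ℝ := max (fT T x) (whisk x)

def KT : Set (ℝ × ℝ) := combSet (fT T) (gT T)

variable {T}

theorem bump_cases (e : ℕ) : bump T e = 0 ∨ ∃ n k, n.unpair.1 = e ∧ T n k = true ∧ bump T e = tent n k := by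
  by_cases h : ∃ p : ℕ × ℕ, p.1.unpair.1 = e ∧ T p.1 p.2 = true
  · right
    refine ⟨h.choose.1, h.choose.2, h.choose_spec.1, h.choose_spec.2, ?_⟩
    funext x
    simp only [bump, dif_pos h]
  · left
    funext x
    simp only [bump, dif_neg h, Pi.zero_apply]

theorem bump_eq (hT : TOne T) {n k : ℕ} (h : T n k = true) : bump T n.unpair.1 = tent n k := by
  have hex : ∃ p : ℕ × ℕ, p.1.unpair.1 = n.unpair.1 ∧ T p.1 p.2 = true := ⟨(n, k), rfl, h⟩
  have := hT _ _ _ _ hex.choose_spec.2 h hex.choose_spec.1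
  funext x
  simp only [bump, dif_pos hex]
  rw [this.1, this.2]

theorem bump_nonneg (e x) : 0 ≤ bump T e x := by
  rcases bump_cases (T := T) e with h | ⟨n, k, _, _, h⟩ <;> rw [h]
  · exact le_rfl
  · exact tent_nonneg _ _ _

theorem bump_le (e x) : bump T e x ≤ (1/2:ℝ)^e := by
  rcases bump_cases (T := T) e with h | ⟨n, k, rfl, _, h⟩ <;> rw [h]
  · simp
  · exact tent_le_h _ _ _

theorem bump_summable (x) : Summable (fun e => bump T e x) :=
  Summable.of_nonneg_of_le (fun e => bump_nonneg e x) (fun e => bump_le e x) summable_geometric_two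

theorem fT_continuous : Continuous (fT T) := by
  apply continuous_tsum (u := fun e => (1/2:ℝ)^e) _ summable_geometric_two
  · intro e x
    rw [Real.norm_eq_abs, abs_of_nonneg (bump_nonneg e x)]
    exact bump_le e x
  · intro e
    rcases bump_cases (T := T) e with h | ⟨n, k, rfl, _, h⟩ <;> rw [h]
    · exact continuous_const
    · exact tent_continuous _ _

theorem fT_nonneg (x) : 0 ≤ fT T x := tsum_nonneg (fun e => bump_nonneg e x)

theorem tent_le_fT (hT : TOne T) {n k : ℕ} (h : T n k = true) (x : ℝ) : tent n k x ≤ fT T x := by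
  rw [← bump_eq hT h]
  exact (bump_summable x).le_tsum _ (fun e _ => bump_nonneg e x)

theorem fT_cases (x : ℝ) : fT T x = 0 ∨ ∃ n k, T n k = true ∧ fT T x = tent n k x ∧ |x - xr n| < wr n k := by
  by_cases hz : ∀ e, bump T e x = 0
  · left
    simp [fT, hz]
  · right
    push Not at hz
    obtain ⟨e, he⟩ := hz
    rcases bump_cases (T := T) e with h | ⟨n, k, hne, hTn, h⟩
    · rw [h] at he; simp at he
    have hpos : 0 < tent n k x := by
      rw [← h]; exact lt_of_le_of_ne (bump_nonneg e x) he.symm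
    refine ⟨n, k, hTn, ?_, (tent_pos_iff _ _ _).1 hpos⟩
    rw [← h]
    apply tsum_eq_single
    intro e' hne'
    by_contra he'
    rcases bump_cases (T := T) e' with h' | ⟨n', k', hne2, hTn', h'⟩
    · rw [h'] at he'; simp at he'
    have hpos' : 0 < tent n' k' x := by
      rw [← h']; exact lt_of_le_of_ne (bump_nonneg e' x) (Ne.symm he')
    have := tent_disjoint ((tent_pos_iff _ _ _).1 hpos).le ((tent_pos_iff _ _ _).1 hpos').le
    apply hne'
    rw [← hne, ← hne2, this]

theorem fT_eq_tent (hT : TOne T) {n k : ℕ} (h : T n k = true) {x : ℝ} (hx : |x - xr n| ≤ wr n k) :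
    fT T x = tent n k x := by
  apply le_antisymm _ (tent_le_fT hT h x)
  rcases fT_cases (T := T) x with h0 | ⟨n', k', hTn, he, hlt⟩
  · rw [h0]; exact tent_nonneg _ _ _
  · have := tent_disjoint hx hlt.le
    have := hT _ _ _ _ h hTn (by rw [this])
    rw [he, this.1, this.2]

theorem fT_le_one (x : ℝ) : fT T x ≤ 1 := by
  rcases fT_cases (T := T) x with h0 | ⟨n', k', hTn, he, hlt⟩
  · rw [h0]; norm_num
  · rw [he]; exact (tent_le_h _ _ _).trans (hr_le_one _)

theorem fT_xr (hT : TOne T) {n k : ℕ} (h : T n k = true) : fT T (xr n) = hr n := by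
  rw [fT_eq_tent hT h (by simpa using (wr_pos n k).le)]
  simp [tent, (hr_pos n).le]

theorem fT_zero : fT T 0 = 0 := by
  rcases fT_cases (T := T) 0 with h0 | ⟨n', k', hTn, he, hlt⟩
  · exact h0
  · have := abs_lt.1 hlt
    have := wr_le_xr n' k'
    have := xr_pos n'
    linarith

theorem whisk_zero : whisk 0 = 1 := by simp [whisk]

theorem xr_inj {n m : ℕ} (h : xr n = xr m) : n = m :=
  tent_disjoint (k := 0) (k' := 0) (x := xr n) (by simpa using (wr_pos n 0).le) (by rw [h]; simpa using (wr_pos m 0).le)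

theorem whisk_xr (n : ℕ) : whisk (xr n) = hr n := by
  have h : ∃ m, xr n = xr m := ⟨n, rfl⟩
  have h2 : h.choose = n := (xr_inj h.choose_spec).symm
  unfold whisk
  rw [if_neg (xr_pos n).ne', dif_pos h, h2]

theorem whisk_cases (x : ℝ) : whisk x = 0 ∨ x = 0 ∨ ∃ n, x = xr n ∧ whisk x = hr n := by
  by_cases h0 : x = 0
  · exact Or.inr (Or.inl h0)
  by_cases h : ∃ n, x = xr n
  · obtain ⟨n, rfl⟩ := h
    exact Or.inr (Or.inr ⟨n, rfl, whisk_xr n⟩)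
  · left
    unfold whisk
    rw [if_neg h0, dif_neg h]

theorem whisk_le_one (x : ℝ) : whisk x ≤ 1 := by
  rcases whisk_cases x with h | rfl | ⟨n, rfl, h⟩
  · rw [h]; norm_num
  · rw [whisk_zero]
  · rw [h]; exact hr_le_one n

theorem gT_le_one (x : ℝ) : gT T x ≤ 1 := max_le (fT_le_one x) (whisk_le_one x)
theorem fT_le_gT (x : ℝ) : fT T x ≤ gT T x := le_max_left _ _

theorem gT_dense : Dense {x | gT T x = fT T x} := by
  have hc : (insert 0 (Set.range xr) : Set ℝ).Countable := (Set.countable_range xr).insert 0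
  refine (hc.dense_compl ℝ).mono ?_
  intro x hx
  rcases whisk_cases x with h | rfl | ⟨n, rfl, h⟩
  · change max _ _ = _
    rw [h]; exact max_eq_left (fT_nonneg x)
  · exact (hx (by simp)).elim
  · exact (hx (by simp)).elim

theorem xr_tendsto : Filter.Tendsto xr Filter.atTop (nhds 0) :=
  tendsto_pow_atTop_nhds_zero_of_lt_one (by norm_num) (by norm_num)

theorem isClosed_whisk : IsClosed {p : ℝ × ℝ | p.2 ≤ 0 ∨ p.2 ≤ whisk p.1} := by
  have : {p : ℝ × ℝ | p.2 ≤ 0 ∨ p.2 ≤ whisk p.1} = {p : ℝ × ℝ | p.2 ≤ 0} ∪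
      ⋂ N : ℕ, (Set.Icc 0 (xr N) ×ˢ Set.Iic 1 ∪ ⋃ n ∈ Finset.range N, ({xr n} : Set ℝ) ×ˢ Set.Iic (hr n)) := by
    ext ⟨x, y⟩
    simp only [Set.mem_ofPred_eq, Set.mem_union, Set.mem_iInter, Set.mem_prod, Set.mem_Icc, Set.mem_Iic,
      Set.mem_iUnion, Finset.mem_range, Set.mem_singleton_iff, exists_prop]
    apply or_congr_right'
    intro hy0
    constructor
    · intro h N
      rcases whisk_cases x with h1 | rfl | ⟨n, rfl, h1⟩
      · exact (hy0 (h1 ▸ h)).elim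
      · rw [whisk_zero] at h
        exact Or.inl ⟨⟨le_rfl, (xr_pos N).le⟩, h⟩
      · rw [h1] at h
        rcases lt_or_ge n N with hn | hn
        · exact Or.inr ⟨n, hn, rfl, h⟩
        · exact Or.inl ⟨⟨(xr_pos n).le, xr_anti hn⟩, h.trans (hr_le_one n)⟩
    · intro h
      by_cases hex : ∃ n, x = xr n ∧ y ≤ hr n
      · obtain ⟨n, rfl, hn⟩ := hex
        rwa [whisk_xr]
      · have h2 : ∀ N, (0 ≤ x ∧ x ≤ xr N) ∧ y ≤ 1 := by
          intro N
          rcases h N with h3 | ⟨n, _, h3⟩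
          · exact h3
          · exact (hex ⟨n, h3⟩).elim
        have hx : x = 0 := le_antisymm (ge_of_tendsto' xr_tendsto (fun N => (h2 N).1.2)) (h2 0).1.1
        rw [hx, whisk_zero]
        exact (h2 0).2
  rw [this]
  apply IsClosed.union
  · exact isClosed_le continuous_snd continuous_const
  · apply isClosed_iInter
    intro N
    apply IsClosed.union (isClosed_Icc.prod isClosed_Iic)
    exact (Finset.range N).finite_toSet.isClosed_biUnion (fun n _ => isClosed_singleton.prod isClosed_Iic)

theorem KT_closed : IsClosed (KT T) := by
  have : KT T = {p : ℝ × ℝ | |p.1| ≤ 2} ∩ {p | fT T p.1 ≤ p.2} ∩ ({p | p.2 ≤ fT T p.1} ∪ {p : ℝ × ℝ | p.2 ≤ 0 ∨ p.2 ≤ whisk p.1}) := by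
    ext ⟨x, y⟩
    simp only [KT, combSet, gT, Set.mem_ofPred_eq, Set.mem_inter_iff, Set.mem_union, le_max_iff]
    have := fT_nonneg (T := T) x
    constructor
    · rintro ⟨h1, h2, h3⟩
      exact ⟨⟨h1, h2⟩, by tauto⟩
    · rintro ⟨⟨h1, h2⟩, h3 | h3 | h3⟩
      · exact ⟨h1, h2, Or.inl h3⟩
      · exact ⟨h1, h2, Or.inl (h3.trans this)⟩
      · exact ⟨h1, h2, Or.inr h3⟩
  have hf := fT_continuous (T := T)
  rw [this]
  refine ((isClosed_le (by fun_prop) (by fun_prop)).inter (isClosed_le (by fun_prop) (by fun_prop))).inter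
    ((isClosed_le (by fun_prop) (by fun_prop)).union isClosed_whisk)

theorem KT_compact : IsCompact (KT T) := by
  apply IsCompact.of_isClosed_subset ((isCompact_Icc (a := (-2:ℝ)) (b := 2)).prod (isCompact_Icc (a := (0:ℝ)) (b := 1))) KT_closed
  rintro ⟨x, y⟩ ⟨h1, h2, h3⟩
  exact ⟨abs_le.1 h1, (fT_nonneg x).trans h2, h3.trans (gT_le_one x)⟩

theorem base_mem_KT {x : ℝ} (hx : |x| ≤ 2) : (x, fT T x) ∈ KT T := ⟨hx, le_rfl, fT_le_gT x⟩

theorem KT_dendroid : IsDendroid (KT T) := by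
  have harc : ArcwiseConnectedSet (KT T) := comb_arcwise fT_continuous fT_le_gT
  refine ⟨⟨KT_compact, ⟨⟨_, base_mem_KT (x := 0) (by simp)⟩, ?_⟩⟩, harc, comb_hereditarilyUnicoherent fT_continuous gT_dense⟩
  apply isPreconnected_of_forall_pair
  intro x hx y hy
  by_cases hxy : x = y
  · subst hxy
    exact ⟨{x}, by simpa using hx, by simp, by simp, isPreconnected_singleton⟩
  · obtain ⟨A, hA, φ, hc, hi, hr, h0, h1⟩ := harc x hx y hy hxy
    refine ⟨A, hA, ?_, ?_, ?_⟩
    · rw [← hr, ← h0]; exact Set.mem_range_self _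
    · rw [← hr, ← h1]; exact Set.mem_range_self _
    · rw [← hr]
      have : PreconnectedSpace (Set.Icc (0:ℝ) 1) := Subtype.preconnectedSpace isPreconnected_Icc
      exact isPreconnected_range hc

end CombDef

section NearR

variable (T : ℕ → ℕ → Bool)

def NearR (s : ℕ) (x y : ℝ) : Prop :=
  (|x| ≤ 2 + (1/2:ℝ)^s ∧ 0 ≤ y + (1/2:ℝ)^s ∧ y ≤ 1 + (1/2:ℝ)^s) ∧
  (∀ n < s + 1, ∀ k < s + 1, T n k = true → hr n * (1 - (|x - xr n| + (1/2:ℝ)^s) * vr n k) ≤ y + (1/2:ℝ)^s) ∧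
  (y ≤ (1/2:ℝ)^s ∨ |x| ≤ 3 * (1/2:ℝ)^s ∨ ∃ n < s + 1,
    ((∃ k < s + 1, T n k = true ∧ y ≤ (1/2:ℝ)^s + hr n * (1 - max 0 (|x - xr n| - (1/2:ℝ)^s) * vr n k)) ∨
     (|x - xr n| ≤ 2 * (1/2:ℝ)^s ∧ y ≤ hr n + (1/2:ℝ)^s)))

variable {T}

theorem NearR_of_mem (hT : TOne T) {s : ℕ} {x y : ℝ} {q : ℝ × ℝ} (hq : q ∈ KT T)
    (hd : dist ((x, y) : ℝ × ℝ) q ≤ (1/2:ℝ)^s) : NearR T s x y := by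
  obtain ⟨x', y'⟩ := q
  obtain ⟨q1, q2, q3⟩ := hq
  simp only at q1 q2 q3
  rw [Prod.dist_eq, Real.dist_eq, Real.dist_eq] at hd
  simp only at hd
  have hdx := (le_max_left _ _).trans hd
  have hdy := (le_max_right _ _).trans hd
  have hpos : (0:ℝ) < (1/2:ℝ)^s := by positivity
  have hxs : ∀ n, s < n → xr n ≤ (1/2:ℝ)^s := fun n h => xr_anti h.le
  have hws : ∀ n k, s < k → wr n k ≤ (1/2:ℝ)^s := fun n k h =>
    (wr_le_k n k).trans (pow_le_pow_of_le_one (by norm_num) (by norm_num) h.le)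
  unfold NearR
  generalize (1/2:ℝ)^s = δ at *
  have h0 := fT_nonneg (T := T) x'
  have h1 := gT_le_one (T := T) x'
  have hdx' := abs_le.1 hdx
  have hdy' := abs_le.1 hdy
  have tri1 : ∀ z, |x' - z| ≤ |x - z| + δ := fun z => by
    have := abs_sub_le x' x z
    rw [abs_sub_comm x' x] at this
    linarith
  have tri2 : ∀ z, |x - z| ≤ |x' - z| + δ := fun z => by
    have := abs_sub_le x x' z
    linarith
  refine ⟨⟨?_, by linarith, by linarith⟩, ?_, ?_⟩
  · have := tri2 0
    simp only [sub_zero] at this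
    linarith
  · intro n _ k _ hn
    have h2 := tent_le_fT hT hn x'
    have h3 : hr n * (1 - |x' - xr n| * vr n k) ≤ tent n k x' := le_max_right _ _
    have h4 : hr n * (1 - (|x - xr n| + δ) * vr n k) ≤ hr n * (1 - |x' - xr n| * vr n k) := by
      apply mul_le_mul_of_nonneg_left _ (hr_pos n).le
      have := mul_le_mul_of_nonneg_right (tri1 (xr n)) (vr_pos n k).le
      linarith
    linarith
  · rcases le_max_iff.1 q3 with h | h
    · rcases fT_cases (T := T) x' with hf | ⟨n, k, hn, he, hlt⟩
      · left; linarith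
      · right
        have hxn := xr_pos n
        by_cases hns : s < n
        · left
          have := hxs n hns
          have := wr_le_xr n k
          have h5 := tri2 0
          have := abs_lt.1 hlt
          rw [sub_zero, sub_zero, abs_of_nonneg (by linarith : 0 ≤ x')] at h5
          linarith
        · right
          refine ⟨n, by omega, ?_⟩
          by_cases hks : s < k
          · right
            have := hws n k hks
            have := tri2 (xr n)
            have := tent_le_h n k x'
            exact ⟨by linarith, by linarith⟩
          · left
            refine ⟨k, by omega, hn, ?_⟩
            have h6 : max 0 (|x - xr n| - δ) ≤ |x' - xr n| := max_le (abs_nonneg _) (by linarith [tri2 (xr n)])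
            have h7 : hr n * (1 - |x' - xr n| * vr n k) ≤ hr n * (1 - max 0 (|x - xr n| - δ) * vr n k) := by
              apply mul_le_mul_of_nonneg_left _ (hr_pos n).le
              have := mul_le_mul_of_nonneg_right h6 (vr_pos n k).le
              linarith
            have h8 : tent n k x' = hr n * (1 - |x' - xr n| * vr n k) := by
              have h9 := (tent_pos_iff n k x').2 hlt
              unfold tent at h9 ⊢
              rcases lt_max_iff.1 h9 with h10 | h10
              · exact (lt_irrefl _ h10).elim
              · exact max_eq_right h10.le
            linarith
    · rcases whisk_cases x' with hw | rfl | ⟨n, rfl, hw⟩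
      · left; linarith
      · right; left
        have := tri2 0
        simp only [sub_zero, abs_zero] at this
        linarith
      · right
        have hxn := xr_pos n
        by_cases hns : s < n
        · left
          have := hxs n hns
          have h5 := tri2 0
          rw [sub_zero, sub_zero, abs_of_nonneg hxn.le] at h5
          linarith
        · right
          refine ⟨n, by omega, Or.inr ⟨by linarith, by linarith⟩⟩

theorem exists_mem_of_two {x y δ x1 x2 : ℝ} (c : ℝ) (hδ : 0 < δ) (h1 : |x1| ≤ 2) (h2 : |x2| ≤ 2)
    (hx1 : |x1 - x| ≤ c) (hx2 : |x2 - x| ≤ c) (hf : fT T x1 ≤ y + δ) (hg : y - δ ≤ gT T x2) :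
    ∃ q ∈ KT T, |q.1 - x| ≤ c ∧ |q.2 - y| ≤ δ := by
  by_cases h : fT T x2 ≤ y + δ
  · refine ⟨(x2, max (fT T x2) (y - δ)), ⟨h2, le_max_left _ _, max_le (fT_le_gT x2) hg⟩, hx2, ?_⟩
    rw [abs_le]
    constructor
    · have := le_max_right (fT T x2) (y - δ)
      simp only; linarith
    · have : max (fT T x2) (y - δ) ≤ y + δ := max_le h (by linarith)
      simp only; linarith
  · push Not at h
    have : y + δ ∈ fT T '' (Set.uIcc x1 x2) :=
      intermediate_value_uIcc (fT_continuous.continuousOn) (Set.mem_uIcc.2 (Or.inl ⟨hf, h.le⟩))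
    obtain ⟨z, hz, hzf⟩ := this
    have hz2 : |z| ≤ 2 ∧ |z - x| ≤ c := by
      rw [abs_le] at *
      rw [abs_le]
      rcases Set.mem_uIcc.1 hz with h | h <;> refine ⟨⟨?_, ?_⟩, ?_, ?_⟩ <;> linarith [h.1, h.2, h1.1, h1.2, h2.1, h2.2, hx1.1, hx1.2, hx2.1, hx2.2]
    refine ⟨(z, fT T z), base_mem_KT hz2.1, hz2.2, ?_⟩
    simp only
    rw [hzf, add_sub_cancel_left, abs_of_pos hδ]

theorem exists_x1 (hT : TOne T) {s : ℕ} {x y : ℝ} (h : NearR T s x y) :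
    ∃ x1, |x1| ≤ 2 ∧ |x1 - x| ≤ 3 * (1/2:ℝ)^s ∧ fT T x1 ≤ y + (1/2:ℝ)^s := by
  obtain ⟨⟨hx, hy0, hy1⟩, hN, -⟩ := h
  have hpos : (0:ℝ) < (1/2:ℝ)^s := by positivity
  have hxs : ∀ n, s < n → xr n ≤ (1/2:ℝ)^s := fun n h => xr_anti h.le
  have hws : ∀ n k, s < k → wr n k ≤ (1/2:ℝ)^s := fun n k h =>
    (wr_le_k n k).trans (pow_le_pow_of_le_one (by norm_num) (by norm_num) h.le)
  generalize (1/2:ℝ)^s = δ at *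
  obtain ⟨x0, hx0, hx0x⟩ : ∃ x0 : ℝ, |x0| ≤ 2 ∧ |x0 - x| ≤ δ := by
    rw [abs_le] at hx
    refine ⟨max (-2) (min x 2), ?_, ?_⟩ <;> rw [abs_le] <;>
      rcases max_cases (-2) (min x 2) with ⟨h, h'⟩ | ⟨h, h'⟩ <;> rcases min_cases x 2 with ⟨g, g'⟩ | ⟨g, g'⟩ <;>
        constructor <;> linarith
  rcases fT_cases (T := T) x0 with hf | ⟨n, k, hn, he, hlt⟩
  · exact ⟨x0, hx0, by linarith, by linarith⟩
  have hxn := xr_pos n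
  have hxn1 := xr_le_one n
  have hw := wr_pos n k
  have hwx := wr_le_xr n k
  have hzero : ∀ z, |z - xr n| = wr n k → fT T z = 0 := by
    intro z hz
    rw [fT_eq_tent hT hn hz.le]
    have := (tent_pos_iff n k z).not.2 (by rw [hz]; exact lt_irrefl _)
    exact le_antisymm (not_lt.1 this) (tent_nonneg _ _ _)
  have hlt' := abs_lt.1 hlt
  have hx0x' := abs_le.1 hx0x
  by_cases hlate : wr n k ≤ δ
  · refine ⟨xr n + wr n k, ?_, ?_, ?_⟩
    · rw [abs_le]; constructor <;> linarith
    · rw [abs_le]; constructor <;> linarith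
    · rw [hzero _ (by rw [add_sub_cancel_left, abs_of_pos hw])]; exact hy0
  push Not at hlate
  have hns : ¬ s < n := fun h => by
    have := hxs n h
    linarith
  have hks : ¬ s < k := fun h => by
    have := hws n k h
    linarith
  have hN' := hN n (by omega) k (by omega) hn
  set d := min (|x - xr n| + δ) (wr n k) with hd
  have hd0 : 0 ≤ d := le_min (by linarith [abs_nonneg (x - xr n)]) hw.le
  have hdw : d ≤ wr n k := min_le_right _ _
  have hval : ∀ z, |z - xr n| = d → fT T z ≤ y + δ := by
    intro z hz
    rcases min_cases (|x - xr n| + δ) (wr n k) with ⟨h, h'⟩ | ⟨h, h'⟩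
    · rw [fT_eq_tent hT hn (hz.le.trans hdw)]
      unfold tent
      rw [hz, hd, h]
      exact max_le hy0 hN'
    · rw [hzero z (by rw [hz, hd, h])]
      exact hy0
  have hxd : |x - xr n| ≤ wr n k + δ := by
    rw [abs_le]; constructor <;> linarith
  have hd1 : d ≤ |x - xr n| + δ := min_le_left _ _
  have hd2 : |x - xr n| - δ ≤ d := le_min (by linarith) (by linarith)
  rcases le_total (xr n) x with hle | hle
  · rw [abs_of_nonneg (sub_nonneg.2 hle)] at hd1 hd2
    refine ⟨xr n + d, ?_, ?_, hval _ (by rw [add_sub_cancel_left, abs_of_nonneg hd0])⟩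
    · rw [abs_le]; constructor <;> linarith
    · rw [abs_le]; constructor <;> linarith
  · rw [abs_of_nonpos (sub_nonpos.2 hle)] at hd1 hd2
    refine ⟨xr n - d, ?_, ?_, hval _ (by rw [sub_sub_cancel_left, abs_neg, abs_of_nonneg hd0])⟩
    · rw [abs_le]; constructor <;> linarith
    · rw [abs_le]; constructor <;> linarith

theorem exists_x2 (hT : TOne T) {s : ℕ} {x y : ℝ} (h : NearR T s x y) :
    ∃ x2, |x2| ≤ 2 ∧ |x2 - x| ≤ 3 * (1/2:ℝ)^s ∧ y - (1/2:ℝ)^s ≤ gT T x2 := by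
  obtain ⟨⟨hx, hy0, hy1⟩, -, hN⟩ := h
  have hpos : (0:ℝ) < (1/2:ℝ)^s := by positivity
  generalize (1/2:ℝ)^s = δ at *
  rcases hN with h | h | ⟨n, -, ⟨k, -, hn, h⟩ | ⟨h, h'⟩⟩
  · obtain ⟨x0, hx0, hx0x⟩ : ∃ x0 : ℝ, |x0| ≤ 2 ∧ |x0 - x| ≤ δ := by
      rw [abs_le] at hx
      refine ⟨max (-2) (min x 2), ?_, ?_⟩ <;> rw [abs_le] <;>
        rcases max_cases (-2) (min x 2) with ⟨h, h'⟩ | ⟨h, h'⟩ <;> rcases min_cases x 2 with ⟨g, g'⟩ | ⟨g, g'⟩ <;>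
          constructor <;> linarith
    exact ⟨x0, hx0, by linarith, by linarith [fT_nonneg (T := T) x0, fT_le_gT (T := T) x0]⟩
  · refine ⟨0, by simp, by simpa using h, ?_⟩
    have : whisk 0 ≤ gT T 0 := le_max_right _ _
    rw [whisk_zero] at this
    linarith
  · have hxn := xr_pos n
    have hxn1 := xr_le_one n
    set d := max 0 (|x - xr n| - δ) with hd
    have hd0 : 0 ≤ d := le_max_left _ _
    have hval : ∀ z, |z - xr n| = d → y - δ ≤ gT T z := by
      intro z hz
      have h1 := tent_le_fT hT hn z
      have h2 : hr n * (1 - |z - xr n| * vr n k) ≤ tent n k z := le_max_right _ _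
      rw [hz] at h2
      linarith [fT_le_gT (T := T) z]
    rw [abs_le] at hx
    rcases le_total (xr n) x with hle | hle
    · rw [abs_of_nonneg (sub_nonneg.2 hle)] at hd
      refine ⟨xr n + d, ?_, ?_, hval _ (by rw [add_sub_cancel_left, abs_of_nonneg hd0])⟩ <;> rw [abs_le] <;>
        rcases max_cases 0 (x - xr n - δ) with ⟨g, g'⟩ | ⟨g, g'⟩ <;> constructor <;> linarith
    · rw [abs_of_nonpos (sub_nonpos.2 hle)] at hd
      refine ⟨xr n - d, ?_, ?_, hval _ (by rw [sub_sub_cancel_left, abs_neg, abs_of_nonneg hd0])⟩ <;> rw [abs_le] <;>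
        rcases max_cases 0 (-(x - xr n) - δ) with ⟨g, g'⟩ | ⟨g, g'⟩ <;> constructor <;> linarith
  · have hxn := xr_pos n
    have hxn1 := xr_le_one n
    refine ⟨xr n, by rw [abs_of_pos hxn]; linarith, by rw [abs_sub_comm]; linarith, ?_⟩
    have : whisk (xr n) ≤ gT T (xr n) := le_max_right _ _
    rw [whisk_xr] at this
    linarith

theorem mem_of_NearR (hT : TOne T) {s : ℕ} {x y : ℝ} (h : NearR T s x y) :
    ∃ q ∈ KT T, dist ((x, y) : ℝ × ℝ) q ≤ 3 * (1/2:ℝ)^s := by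
  obtain ⟨x1, a1, a2, a3⟩ := exists_x1 hT h
  obtain ⟨x2, b1, b2, b3⟩ := exists_x2 hT h
  have hpos : (0:ℝ) < (1/2:ℝ)^s := by positivity
  obtain ⟨q, hq, h1, h2⟩ := exists_mem_of_two (3 * (1/2:ℝ)^s) hpos a1 b1 a2 b2 a3 b3
  refine ⟨q, hq, ?_⟩
  rw [dist_comm, Prod.dist_eq, Real.dist_eq, Real.dist_eq]
  exact max_le h1 (h2.trans (by linarith))

end NearR

section NearB

def nearN1 (s : ℕ) (x y : ℚ) : Bool :=
  decide (|x| ≤ 2 + (1/2:ℚ)^s) && (decide (0 ≤ y + (1/2:ℚ)^s) && decide (y ≤ 1 + (1/2:ℚ)^s))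
def nearA1 (s : ℕ) (x y : ℚ) (n k : ℕ) : Bool :=
  decide ((1/2:ℚ)^n.unpair.1 * (1 - (|x - (1/2:ℚ)^n| + (1/2:ℚ)^s) * (2:ℚ)^(n+k+2)) ≤ y + (1/2:ℚ)^s)
def nearA2 (s : ℕ) (x y : ℚ) (n k : ℕ) : Bool :=
  decide (y ≤ (1/2:ℚ)^s + (1/2:ℚ)^n.unpair.1 * (1 - max 0 (|x - (1/2:ℚ)^n| - (1/2:ℚ)^s) * (2:ℚ)^(n+k+2)))
def nearA3 (s : ℕ) (x y : ℚ) (n : ℕ) : Bool :=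
  decide (|x - (1/2:ℚ)^n| ≤ 2 * (1/2:ℚ)^s) && decide (y ≤ (1/2:ℚ)^n.unpair.1 + (1/2:ℚ)^s)
def nearA4 (s : ℕ) (x y : ℚ) : Bool :=
  decide (y ≤ (1/2:ℚ)^s) || decide (|x| ≤ 3 * (1/2:ℚ)^s)

variable (T : ℕ → ℕ → Bool)
def nearB (s : ℕ) (x y : ℚ) : Bool :=
  nearN1 s x y && (bAll (fun n => bAll (fun k => !(T n k) || nearA1 s x y n k) (s+1)) (s+1) &&
   (nearA4 s x y || bEx (fun n => bEx (fun k => T n k && nearA2 s x y n k) (s+1) || nearA3 s x y n) (s+1)))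

theorem hcast (s : ℕ) : (((1/2:ℚ)^s : ℚ) : ℝ) = (1/2:ℝ)^s := by push_cast; rfl

theorem nearN1_iff (s : ℕ) (x y : ℚ) : nearN1 s x y = true ↔
    (|(x:ℝ)| ≤ 2 + (1/2:ℝ)^s ∧ 0 ≤ (y:ℝ) + (1/2:ℝ)^s ∧ (y:ℝ) ≤ 1 + (1/2:ℝ)^s) := by
  simp only [nearN1, Bool.and_eq_true, decide_eq_true_eq]
  rw [← Rat.cast_le (K := ℝ), ← Rat.cast_le (K := ℝ) (p := 0), ← Rat.cast_le (K := ℝ) (p := y)]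
  simp only [Rat.cast_abs, Rat.cast_add, hcast, Rat.cast_ofNat, Rat.cast_zero, Rat.cast_one]

theorem nearA1_iff (s : ℕ) (x y : ℚ) (n k : ℕ) : nearA1 s x y n k = true ↔
    hr n * (1 - (|(x:ℝ) - xr n| + (1/2:ℝ)^s) * vr n k) ≤ y + (1/2:ℝ)^s := by
  simp only [nearA1, decide_eq_true_eq, hr, xr, vr]
  rw [← Rat.cast_le (K := ℝ)]
  simp only [Rat.cast_abs, Rat.cast_add, Rat.cast_sub, Rat.cast_mul, hcast, Rat.cast_ofNat, Rat.cast_zero, Rat.cast_one,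
    Rat.cast_pow (2:ℚ)]

theorem nearA2_iff (s : ℕ) (x y : ℚ) (n k : ℕ) : nearA2 s x y n k = true ↔
    (y:ℝ) ≤ (1/2:ℝ)^s + hr n * (1 - max 0 (|(x:ℝ) - xr n| - (1/2:ℝ)^s) * vr n k) := by
  simp only [nearA2, decide_eq_true_eq, hr, xr, vr]
  rw [← Rat.cast_le (K := ℝ)]
  simp only [Rat.cast_abs, Rat.cast_add, Rat.cast_sub, Rat.cast_mul, hcast, Rat.cast_ofNat, Rat.cast_zero, Rat.cast_one,
    Rat.cast_pow (2:ℚ), Rat.cast_max]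

theorem nearA3_iff (s : ℕ) (x y : ℚ) (n : ℕ) : nearA3 s x y n = true ↔
    (|(x:ℝ) - xr n| ≤ 2 * (1/2:ℝ)^s ∧ (y:ℝ) ≤ hr n + (1/2:ℝ)^s) := by
  simp only [nearA3, Bool.and_eq_true, decide_eq_true_eq, hr, xr]
  rw [← Rat.cast_le (K := ℝ), ← Rat.cast_le (K := ℝ) (p := y)]
  simp only [Rat.cast_abs, Rat.cast_add, Rat.cast_sub, Rat.cast_mul, hcast, Rat.cast_ofNat]

theorem nearA4_iff (s : ℕ) (x y : ℚ) : nearA4 s x y = true ↔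
    ((y:ℝ) ≤ (1/2:ℝ)^s ∨ |(x:ℝ)| ≤ 3 * (1/2:ℝ)^s) := by
  simp only [nearA4, Bool.or_eq_true, decide_eq_true_eq]
  rw [← Rat.cast_le (K := ℝ), ← Rat.cast_le (K := ℝ) (p := |x|)]
  simp only [Rat.cast_abs, Rat.cast_mul, hcast, Rat.cast_ofNat]

theorem nearB_iff (s : ℕ) (x y : ℚ) : nearB T s x y = true ↔ NearR T s x y := by
  unfold nearB NearR
  simp only [Bool.and_eq_true, Bool.or_eq_true, bAll_iff, bEx_iff, nearN1_iff, nearA1_iff, nearA2_iff, nearA3_iff,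
    nearA4_iff, or_assoc, Bool.not_eq_true', ← imp_iff_not_or, Bool.eq_false_iff, ne_eq]

section
variable {α : Type*} [Primcodable α] {s n k : α → ℕ} {x y : α → ℚ}

theorem computable_unpair1 (hn : Computable n) : Computable (fun a => (n a).unpair.1) :=
  Computable.fst.comp (Primrec.unpair.to_comp.comp hn)
theorem computable_unpair2 (hn : Computable n) : Computable (fun a => (n a).unpair.2) :=
  Computable.snd.comp (Primrec.unpair.to_comp.comp hn)

theorem computable_nearN1 (hs : Computable s) (hx : Computable x) (hy : Computable y) :
    Computable (fun a => nearN1 (s a) (x a) (y a)) := by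
  have d := computable_half_pow hs
  have c1 := computable_rat_le (computable_rat_abs hx) (computable_rat_add (Computable.const (2:ℚ)) d)
  have c2 := computable_rat_le (Computable.const (0:ℚ)) (computable_rat_add hy d)
  have c3 := computable_rat_le hy (computable_rat_add (Computable.const (1:ℚ)) d)
  have := Computable.and' c1 (Computable.and' c2 c3)
  exact this

theorem computable_nearA4 (hs : Computable s) (hx : Computable x) (hy : Computable y) :
    Computable (fun a => nearA4 (s a) (x a) (y a)) := by
  have d := computable_half_pow hs
  have c1 := computable_rat_le (computable_rat_abs hx) (computable_rat_mul (Computable.const (3:ℚ)) d)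
  have c2 := computable_rat_le hy d
  have := Computable.or' c2 c1
  exact this

theorem computable_nearA3 (hs : Computable s) (hx : Computable x) (hy : Computable y) (hn : Computable n) :
    Computable (fun a => nearA3 (s a) (x a) (y a) (n a)) := by
  have d := computable_half_pow hs
  have c1 := computable_rat_le (computable_rat_abs (computable_rat_sub hx (computable_half_pow hn)))
    (computable_rat_mul (Computable.const (2:ℚ)) d)
  have c2 := computable_rat_le hy (computable_rat_add (computable_half_pow (computable_unpair1 hn)) d)
  have := Computable.and' c1 c2
  exact this

theorem computable_nearA1 (hs : Computable s) (hx : Computable x) (hy : Computable y) (hn : Computable n)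
    (hk : Computable k) : Computable (fun a => nearA1 (s a) (x a) (y a) (n a) (k a)) := by
  have d := computable_half_pow hs
  have h := computable_half_pow (computable_unpair1 hn)
  have v := computable_two_pow_rat (computable_nat_add (computable_nat_add hn hk) (Computable.const 2))
  have c0 := computable_rat_abs (computable_rat_sub hx (computable_half_pow hn))
  have c1 := computable_rat_mul h (computable_rat_sub (Computable.const (1:ℚ)) (computable_rat_mul (computable_rat_add c0 d) v))
  have := computable_rat_le c1 (computable_rat_add hy d)
  exact this

theorem computable_nearA2 (hs : Computable s) (hx : Computable x) (hy : Computable y) (hn : Computable n)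
    (hk : Computable k) : Computable (fun a => nearA2 (s a) (x a) (y a) (n a) (k a)) := by
  have d := computable_half_pow hs
  have h := computable_half_pow (computable_unpair1 hn)
  have v := computable_two_pow_rat (computable_nat_add (computable_nat_add hn hk) (Computable.const 2))
  have c0 := computable_rat_abs (computable_rat_sub hx (computable_half_pow hn))
  have cm := computable_rat_max (Computable.const (0:ℚ)) (computable_rat_sub c0 d)
  have c1 := computable_rat_mul h (computable_rat_sub (Computable.const (1:ℚ)) (computable_rat_mul cm v))
  have := computable_rat_le hy (computable_rat_add d c1)
  exact this

end

variable {T}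
theorem computable_nearB (hT : Computable₂ T) :
    Computable (fun a : ℕ × ℚ × ℚ => nearB T a.1 a.2.1 a.2.2) := by
  have s1 : Computable (fun a : ℕ × ℚ × ℚ => a.1) := Computable.fst
  have x1 : Computable (fun a : ℕ × ℚ × ℚ => a.2.1) := Computable.fst.comp Computable.snd
  have y1 : Computable (fun a : ℕ × ℚ × ℚ => a.2.2) := Computable.snd.comp Computable.snd
  have f2 : Computable (fun a : (ℕ × ℚ × ℚ) × ℕ => a.1) := Computable.fst
  have n2 : Computable (fun a : (ℕ × ℚ × ℚ) × ℕ => a.2) := Computable.snd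
  have s2 := s1.comp f2
  have x2 := x1.comp f2
  have y2 := y1.comp f2
  have f3 : Computable (fun a : ((ℕ × ℚ × ℚ) × ℕ) × ℕ => a.1) := Computable.fst
  have k3 : Computable (fun a : ((ℕ × ℚ × ℚ) × ℕ) × ℕ => a.2) := Computable.snd
  have s3 := s2.comp f3
  have x3 := x2.comp f3
  have y3 := y2.comp f3
  have n3 := n2.comp f3
  have t3 : Computable (fun a : ((ℕ × ℚ × ℚ) × ℕ) × ℕ => T a.1.2 a.2) := by
    have := hT.comp n3 k3
    exact this
  have b1 := computable_nat_add s1 (Computable.const 1)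
  have b2 := b1.comp f2
  have e1 : Computable₂ (fun (a : (ℕ × ℚ × ℚ) × ℕ) (k : ℕ) => !(T a.2 k) || nearA1 a.1.1 a.1.2.1 a.1.2.2 a.2 k) := by
    have := Computable.or' (Computable.not' t3) (computable_nearA1 s3 x3 y3 n3 k3)
    exact this
  have e2 : Computable₂ (fun (a : (ℕ × ℚ × ℚ) × ℕ) (k : ℕ) => (T a.2 k) && nearA2 a.1.1 a.1.2.1 a.1.2.2 a.2 k) := by
    have := Computable.and' t3 (computable_nearA2 s3 x3 y3 n3 k3)
    exact this
  have g1 : Computable₂ (fun (a : ℕ × ℚ × ℚ) (n : ℕ) =>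
      bAll (fun k => !(T n k) || nearA1 a.1 a.2.1 a.2.2 n k) (a.1 + 1)) := by
    have := computable_bAll e1 b2
    exact this
  have g2 : Computable₂ (fun (a : ℕ × ℚ × ℚ) (n : ℕ) =>
      bEx (fun k => (T n k) && nearA2 a.1 a.2.1 a.2.2 n k) (a.1 + 1) || nearA3 a.1 a.2.1 a.2.2 n) := by
    have := Computable.or' (computable_bEx e2 b2) (computable_nearA3 s2 x2 y2 n2)
    exact this
  have k1 := computable_bAll g1 b1
  have k2 := computable_bEx g2 b1
  have := Computable.and' (computable_nearN1 s1 x1 y1)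
    (Computable.and' k1 (Computable.or' (computable_nearA4 s1 x1 y1) k2))
  exact this

theorem KT_computable (hT : TOne T) (hc : Computable₂ T) : IsComputableClosed (KT T) := by
  refine computableClosed_of_near KT_closed (nearB T) (computable_nearB hc) 3 ?_ ?_
  · intro s x y h
    have := mem_of_NearR hT ((nearB_iff T s x y).1 h)
    exact_mod_cast this
  · rintro s x y ⟨q, hq, hd⟩
    exact (nearB_iff T s x y).2 (NearR_of_mem hT hq hd)

end NearB

section Diag
open Nat.Partrec (Code)

def ballHit (e m : ℕ) (c : (ℚ × ℚ) × ℚ) : Bool :=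
  decide (max |(1/2:ℚ)^(Nat.pair e m) - c.1.1| |(1/2:ℚ)^e - c.1.2| < c.2)

def evHalt (e k : ℕ) : Bool :=
  (Code.evaln k.unpair.2.unpair.2 (Denumerable.ofNat Code e) k.unpair.2.unpair.1).isSome

def decBall (j : ℕ) : Option ((ℚ × ℚ) × ℚ) :=
  @Encodable.decode ((ℚ × ℚ) × ℚ) (Primcodable.toEncodable) j

def evHit (e k : ℕ) : Bool :=
  Option.casesOn (motive := fun _ => Bool) (decBall k.unpair.2.unpair.1) false (fun c => ballHit e k.unpair.1 c)

def ev (e k : ℕ) : Bool := evHalt e k && evHit e k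

def TD (n k : ℕ) : Bool :=
  ev n.unpair.1 k && (!(bEx (fun j => ev n.unpair.1 j) k) && decide (k.unpair.1 = n.unpair.2))

theorem computable_evHalt : Computable (fun a : ℕ × ℕ => evHalt a.1 a.2) := by
  have e : Computable (fun a : ℕ × ℕ => a.1) := Computable.fst
  have k : Computable (fun a : ℕ × ℕ => a.2) := Computable.snd
  have k2 := computable_unpair2 k
  have k22 := computable_unpair2 k2
  have k21 := computable_unpair1 k2
  have c : Computable (fun a : ℕ × ℕ => Denumerable.ofNat Code a.1) := (Computable.ofNat Code).comp e
  have h := Code.primrec_evaln.to_comp.comp (Computable.pair (Computable.pair k22 c) k21)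
  have := Primrec.option_isSome.to_comp.comp h
  exact this

theorem computable_decBall : Computable decBall := Computable.decode

theorem computable_evHit : Computable (fun a : ℕ × ℕ => evHit a.1 a.2) := by
  have k : Computable (fun a : ℕ × ℕ => a.2) := Computable.snd
  have k2 := computable_unpair2 k
  have k21 := computable_unpair1 k2
  have o := computable_decBall.comp k21
  have f1 : Computable (fun a : (ℕ × ℕ) × ((ℚ × ℚ) × ℚ) => a.1) := Computable.fst
  have e : Computable (fun a : (ℕ × ℕ) × ((ℚ × ℚ) × ℚ) => a.1.1) := Computable.fst.comp f1
  have k' : Computable (fun a : (ℕ × ℕ) × ((ℚ × ℚ) × ℚ) => a.1.2) := Computable.snd.comp f1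
  have f2 : Computable (fun a : (ℕ × ℕ) × ((ℚ × ℚ) × ℚ) => a.2) := Computable.snd
  have r : Computable (fun a : (ℕ × ℕ) × ((ℚ × ℚ) × ℚ) => a.2.2) := Computable.snd.comp f2
  have f21 : Computable (fun a : (ℕ × ℕ) × ((ℚ × ℚ) × ℚ) => a.2.1) := Computable.fst.comp f2
  have q1 : Computable (fun a : (ℕ × ℕ) × ((ℚ × ℚ) × ℚ) => a.2.1.1) := Computable.fst.comp f21
  have q2 : Computable (fun a : (ℕ × ℕ) × ((ℚ × ℚ) × ℚ) => a.2.1.2) := Computable.snd.comp f21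
  have pr : Computable (fun a : (ℕ × ℕ) × ((ℚ × ℚ) × ℚ) => Nat.pair a.1.1 a.1.2.unpair.1) := by
    have := Primrec₂.natPair.to_comp.comp e (computable_unpair1 k')
    exact this
  have h1 := computable_rat_abs (computable_rat_sub (computable_half_pow pr) q1)
  have h2 := computable_rat_abs (computable_rat_sub (computable_half_pow e) q2)
  have h3 := computable_rat_lt (computable_rat_max h1 h2) r
  have g : Computable₂ (fun (a : ℕ × ℕ) (c : (ℚ × ℚ) × ℚ) => ballHit a.1 a.2.unpair.1 c) := h3
  have := Computable.option_casesOn o (Computable.const false) g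
  exact this

theorem computable_ev : Computable (fun a : ℕ × ℕ => ev a.1 a.2) := by
  have := Computable.and' computable_evHalt computable_evHit
  exact this

theorem computable_TD : Computable₂ TD := by
  have n : Computable (fun a : ℕ × ℕ => a.1) := Computable.fst
  have k : Computable (fun a : ℕ × ℕ => a.2) := Computable.snd
  have e := computable_unpair1 n
  have h1 : Computable (fun a : ℕ × ℕ => ev a.1.unpair.1 a.2) := by
    have := computable_ev.comp (Computable.pair e k)
    exact this
  have f1 : Computable (fun a : (ℕ × ℕ) × ℕ => a.1) := Computable.fst
  have f2 : Computable (fun a : (ℕ × ℕ) × ℕ => a.2) := Computable.snd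
  have h2 : Computable₂ (fun (a : ℕ × ℕ) (j : ℕ) => ev a.1.unpair.1 j) := by
    have := computable_ev.comp (Computable.pair (e.comp f1) f2)
    exact this
  have h3 := Computable.not' (computable_bEx h2 k)
  have h4 := computable_nat_eq (computable_unpair1 k) (computable_unpair2 n)
  have := Computable.and' h1 (Computable.and' h3 h4)
  exact this

theorem TD_iff (n k : ℕ) : TD n k = true ↔
    ev n.unpair.1 k = true ∧ (∀ j < k, ¬ ev n.unpair.1 j = true) ∧ k.unpair.1 = n.unpair.2 := by
  simp only [TD, Bool.and_eq_true, Bool.not_eq_true', decide_eq_true_eq, Bool.eq_false_iff, ne_eq, bEx_iff]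
  push Not
  rfl

theorem TD_one : TOne TD := by
  intro n k n' k' h h' he
  rw [TD_iff] at h h'
  rw [← he] at h'
  have hk : k = k' := by
    rcases lt_trichotomy k k' with h1 | h1 | h1
    · exact (h'.2.1 k h1 h.1).elim
    · exact h1
    · exact (h.2.1 k' h1 h'.1).elim
  refine ⟨?_, hk⟩
  rw [← Nat.pair_unpair n, ← Nat.pair_unpair n', ← he, ← h.2.2, ← h'.2.2, hk]

theorem ce_code {W : (ℚ × ℚ) × ℚ → Prop} (hW : REPred W) : ∃ e : ℕ,
    (∀ c, W c → ∃ k j, decBall j = some c ∧ (Code.evaln k (Denumerable.ofNat Code e) j).isSome = true) ∧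
    (∀ k j c, decBall j = some c → (Code.evaln k (Denumerable.ofNat Code e) j).isSome = true → W c) := by
  obtain ⟨c, hc⟩ := Code.exists_code.1 hW
  refine ⟨Encodable.encode c, ?_, ?_⟩
  · intro a ha
    obtain ⟨j, hdec⟩ : ∃ j, decBall j = some a :=
      ⟨_, @Encodable.encodek ((ℚ × ℚ) × ℚ) (Primcodable.toEncodable) a⟩
    have hdec' : @Encodable.decode ((ℚ × ℚ) × ℚ) (Primcodable.toEncodable) j = some a := hdec
    have hdom : (c.eval j).Dom := by
      rw [hc]
      beta_reduce
      rw [hdec']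
      simp [Part.assert, ha]
    obtain ⟨k, hk⟩ := Code.evaln_complete.1 (Part.get_mem hdom)
    refine ⟨k, _, hdec, ?_⟩
    rw [Denumerable.ofNat_encode]
    exact Option.isSome_iff_exists.2 ⟨_, hk⟩
  · intro k j a hdec hsome
    rw [Denumerable.ofNat_encode] at hsome
    obtain ⟨v, hv⟩ := Option.isSome_iff_exists.1 hsome
    have hv2 := Code.evaln_sound hv
    rw [hc] at hv2
    have hdec' : @Encodable.decode ((ℚ × ℚ) × ℚ) (Primcodable.toEncodable) j = some a := hdec
    beta_reduce at hv2
    rw [hdec'] at hv2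
    simp [Part.assert] at hv2
    exact hv2.1

theorem ballHit_iff (e m : ℕ) (c : (ℚ × ℚ) × ℚ) : ballHit e m c = true ↔
    ((xr (Nat.pair e m), (1/2:ℝ)^e) : ℝ × ℝ) ∈ ballOfCode c := by
  unfold ballHit
  rw [decide_eq_true_eq]
  change _ ↔ dist _ _ < _
  rw [Prod.dist_eq, Real.dist_eq, Real.dist_eq, ← Rat.cast_lt (K := ℝ)]
  simp only [Rat.cast_max, Rat.cast_abs, Rat.cast_sub, hcast, xr]

theorem hr_pair (e m : ℕ) : hr (Nat.pair e m) = (1/2:ℝ)^e := by simp [hr]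

/-- The key dichotomy. -/
theorem diag_key {R : Set (ℝ × ℝ)} (hP : IsPi01Closed R) : ∃ e : ℕ,
    (∃ n k, TD n k = true ∧ (xr n, hr n) ∉ R) ∨ (∀ m, (xr (Nat.pair e m), (1/2:ℝ)^e) ∈ R) := by
  obtain ⟨W, hW, hR⟩ := hP
  obtain ⟨e, h1, h2⟩ := ce_code hW
  refine ⟨e, ?_⟩
  by_cases hall : ∀ m, (xr (Nat.pair e m), (1/2:ℝ)^e) ∈ R
  · exact Or.inr hall
  left
  push Not at hall
  obtain ⟨m, hm⟩ := hall
  have hex : ∃ k, ev e k = true := by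
    rw [hR] at hm
    simp only [Set.mem_sdiff, Set.mem_univ, true_and, not_not, Set.mem_iUnion] at hm
    obtain ⟨c, hc, hmc⟩ := hm
    obtain ⟨k', j, hj, hs⟩ := h1 c hc
    refine ⟨Nat.pair m (Nat.pair j k'), ?_⟩
    simp only [ev, evHalt, evHit, Nat.unpair_pair, Bool.and_eq_true, hj]
    exact ⟨hs, (ballHit_iff e m c).2 hmc⟩
  classical
  have hk := Nat.find_spec hex
  have hmin := fun j (hj : j < Nat.find hex) => Nat.find_min hex hj
  generalize Nat.find hex = k at hk hmin
  refine ⟨Nat.pair e k.unpair.1, k, ?_, ?_⟩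
  · rw [TD_iff]
    simp only [Nat.unpair_pair]
    exact ⟨hk, hmin, trivial⟩
  · rw [hr_pair]
    simp only [ev, Bool.and_eq_true] at hk
    obtain ⟨hk1, hk2⟩ := hk
    unfold evHit at hk2
    rcases hd : decBall k.unpair.2.unpair.1 with _ | c
    · rw [hd] at hk2; simp at hk2
    · rw [hd] at hk2
      have hc : W c := h2 _ _ c hd hk1
      have hmem := (ballHit_iff _ _ c).1 hk2
      rw [hR]
      rintro ⟨-, hn⟩
      apply hn
      simp only [Set.mem_iUnion]
      exact ⟨c, hc, hmem⟩

theorem not_loc_conn {T : ℕ → ℕ → Bool} {R : Set (ℝ × ℝ)} (hRK : R ⊆ KT T) (hcl : IsClosed R)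
    (hlc : LocallyConnectedSpace R) (e : ℕ) (h : ∀ m, (xr (Nat.pair e m), (1/2:ℝ)^e) ∈ R) : False := by
  have hx : Filter.Tendsto (fun m => xr (Nat.pair e m)) Filter.atTop (nhds 0) :=
    xr_tendsto.comp (Filter.tendsto_atTop_mono (fun m => Nat.right_le_pair e m) Filter.tendsto_id)
  have hpos : (0:ℝ) < (1/2:ℝ)^e := by positivity
  generalize (1/2:ℝ)^e = η at *
  have hxp : Filter.Tendsto (fun m => ((xr (Nat.pair e m), η) : ℝ × ℝ)) Filter.atTop (nhds (0, η)) :=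
    hx.prodMk_nhds tendsto_const_nhds
  have h0 : ((0, η) : ℝ × ℝ) ∈ R := hcl.mem_of_tendsto hxp (Filter.Eventually.of_forall h)
  -- neighbourhood
  have hU : {p : R | η / 2 < p.1.2 ∧ fT T p.1.1 < η / 2} ∈ nhds (⟨(0, η), h0⟩ : R) := by
    apply IsOpen.mem_nhds
    · have hf := fT_continuous (T := T)
      have o1 : IsOpen {p : R | η / 2 < p.1.2} := isOpen_lt (by fun_prop) (by fun_prop)
      have o2 : IsOpen {p : R | fT T p.1.1 < η / 2} := isOpen_lt (by fun_prop) (by fun_prop)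
      exact o1.inter o2
    · simp only [Set.mem_ofPred_eq, fT_zero]
      constructor <;> linarith
  obtain ⟨V, ⟨hVo, hVm, hVc⟩, hVU⟩ := (locallyConnectedSpace_iff_hasBasis_isOpen_isConnected.1 hlc _).mem_iff.1 hU
  have hten : Filter.Tendsto (fun m => (⟨(xr (Nat.pair e m), η), h m⟩ : R)) Filter.atTop (nhds ⟨(0, η), h0⟩) :=
    tendsto_subtype_rng.2 hxp
  obtain ⟨m, hm⟩ := (hten.eventually (hVo.mem_nhds hVm)).exists
  have himg : IsPreconnected ((fun p : R => p.1.1) '' V) :=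
    hVc.isPreconnected.image _ (by fun_prop)
  have hsub := himg.Icc_subset ⟨_, hVm, rfl⟩ ⟨_, hm, rfl⟩
  simp only at hsub
  obtain ⟨z, hz1, hz2⟩ := (gT_dense (T := T)).exists_between (xr_pos (Nat.pair e m))
  obtain ⟨p, hpV, hpz⟩ := hsub (Set.Ioo_subset_Icc_self hz2)
  simp only at hpz
  have hp1 := hVU hpV
  have hp2 := (hRK p.2).2.2
  have hz1' : gT T z = fT T z := hz1
  rw [hpz, hz1'] at hp2
  have hp3 : η / 2 < p.1.2 ∧ fT T p.1.1 < η / 2 := hp1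
  rw [hpz] at hp3
  linarith [hp3.1, hp3.2]

theorem main_dist {R : Set (ℝ × ℝ)} (hRK : R ⊆ KT TD) (hP : IsPi01Closed R) (hD : IsDendrite R) :
    1 ≤ Metric.hausdorffDist R (KT TD) := by
  by_contra hlt
  push Not at hlt
  obtain ⟨⟨hcomp, hconn⟩, hlc, -⟩ := hD
  have hcl := hcomp.isClosed
  have hfin : Metric.hausdorffEDist R (KT TD) ≠ ⊤ :=
    Metric.hausdorffEDist_ne_top_of_nonempty_of_bounded hconn.nonempty ⟨_, base_mem_KT (x := 0) (by simp)⟩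
      hcomp.isBounded KT_compact.isBounded
  obtain ⟨p, hp, hpd⟩ := Metric.exists_dist_lt_of_hausdorffDist_lt' (base_mem_KT (T := TD) (x := -2) (by simp)) hlt hfin
  obtain ⟨q, hq, hqd⟩ := Metric.exists_dist_lt_of_hausdorffDist_lt' (base_mem_KT (T := TD) (x := 2) (by simp)) hlt hfin
  rw [Prod.dist_eq, Real.dist_eq] at hpd hqd
  have hp1 := abs_lt.1 (lt_of_le_of_lt (le_max_left _ _) hpd)
  have hq1 := abs_lt.1 (lt_of_le_of_lt (le_max_left _ _) hqd)
  simp only at hp1 hq1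
  obtain ⟨e, ⟨n, k, hn, hnR⟩ | h⟩ := diag_key hP
  · apply hnR
    rw [← fT_xr TD_one hn]
    apply comb_base_mem fT_continuous gT_dense hRK hcl hconn.isPreconnected hp hq (by linarith)
    exact ⟨by linarith [xr_pos n], by linarith [xr_le_one n]⟩
  · exact not_loc_conn hRK hcl hlc e h

end Diag

theorem exists_computable_dendroid_not_star_including_pi01_dendrite :
    ∃ K : Set (ℝ × ℝ), IsComputableClosed K ∧ IsDendroid K ∧
      ∃ ε : ℝ, 0 < ε ∧ ∀ R : Set (ℝ × ℝ), R ⊆ K → IsPi01Closed R → IsDendrite R →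
        ε ≤ Metric.hausdorffDist R K :=
  ⟨KT TD, KT_computable TD_one computable_TD, KT_dendroid, 1, one_pos, fun _ h1 h2 h3 => main_dist h1 h2 h3⟩
end

section
/- There exists a limit computable function f : ℕ → ℕ such that for every uniformly c.e. sequence (U_n)_{n∈ℕ} of subsets of ℕ with each U_n cofinite, one has f(n) ∈ U_n for all but finitely many n. -/
open Set Metric

namespace LimComp

open Nat.Partrec

/-- stage-`s` approximation of `x ∈ U^e_m`. -/
def R (e m x s : ℕ) : Prop :=
  (Code.evaln s (Denumerable.ofNat Code e) (Nat.pair m x)).isSome = true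

lemma R_mono {e m x s t : ℕ} (h : s ≤ t) (hR : R e m x s) : R e m x t := by
  unfold R at *
  obtain ⟨y, hy⟩ := Option.isSome_iff_exists.1 hR
  exact Option.isSome_iff_exists.2 ⟨y, Code.evaln_mono h hy⟩

/-- `R` with packed arguments. -/
lemma R_primrec : PrimrecPred (fun a : (ℕ × ℕ) × ℕ × ℕ => R a.1.1 a.1.2 a.2.1 a.2.2) := by
  have h : Primrec (fun a : (ℕ × ℕ) × ℕ × ℕ =>
      (Code.evaln a.2.2 (Denumerable.ofNat Code a.1.1) (Nat.pair a.1.2 a.2.1)).isSome) := by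
    refine Primrec.option_isSome.comp (Code.primrec_evaln.comp (Primrec.pair (Primrec.pair ?_ ?_) ?_))
    · exact Primrec.snd.comp Primrec.snd
    · exact (Primrec.ofNat Code).comp (Primrec.fst.comp Primrec.fst)
    · exact Primrec₂.natPair.comp (Primrec.snd.comp Primrec.fst) (Primrec.fst.comp Primrec.snd)
  exact (Primrec.eq.comp h (Primrec.const true)).of_eq fun a => Iff.rfl

/-- all indices in `l` accept `x` in column `m` by stage `s`. -/
def A (l : List ℕ) (m x s : ℕ) : Prop := ∀ e ∈ l, R e m x s

lemma A_mono {l : List ℕ} {m x s t : ℕ} (h : s ≤ t) (hR : A l m x s) : A l m x t :=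
  fun e he => R_mono h (hR e he)

lemma A_primrec : PrimrecRel (fun (l : List ℕ) (b : ℕ × ℕ × ℕ) => A l b.1 b.2.1 b.2.2) := by
  have h : PrimrecRel (fun (e : ℕ) (b : ℕ × ℕ × ℕ) => R e b.1 b.2.1 b.2.2) :=
    R_primrec.comp (f := fun p : ℕ × ℕ × ℕ × ℕ => ((p.1, p.2.1), p.2.2.1, p.2.2.2)) (by
      exact Primrec.pair (Primrec.pair Primrec.fst (Primrec.fst.comp Primrec.snd))
        (Primrec.snd.comp Primrec.snd))
  exact h.forall_mem_list

/-- `x` is suitable at column `m`, with lower bound `n`. -/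
def Q (l : List ℕ) (n m x s : ℕ) : Prop := n ≤ x ∧ A l m x s

/-- Each column up to `n` has a common element above `n`, seen by stage `s`. -/
def C (n s : ℕ) (l : List ℕ) : Prop := ∀ m < n + 1, ∃ x < s, Q l n m x s

lemma Q_primrec : PrimrecRel (fun (x : ℕ) (b : ℕ × ℕ × ℕ × List ℕ) =>
    Q b.2.2.2 b.2.1 b.1 x b.2.2.1) := by
  have hx : Primrec (fun p : ℕ × ℕ × ℕ × ℕ × List ℕ => p.1) := Primrec.fst
  have h2 : Primrec (fun p : ℕ × ℕ × ℕ × ℕ × List ℕ => p.2) := Primrec.snd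
  have hm := Primrec.fst.comp h2
  have h3 := Primrec.snd.comp h2
  have hn := Primrec.fst.comp h3
  have h4 := Primrec.snd.comp h3
  have hs := Primrec.fst.comp h4
  have hl := Primrec.snd.comp h4
  exact (Primrec.nat_le.comp hn hx).and
    (A_primrec.comp hl (Primrec.pair hm (Primrec.pair hx hs)))

lemma C_primrec : PrimrecPred (fun b : ℕ × ℕ × List ℕ => C b.1 b.2.1 b.2.2) := by
  have h1 : PrimrecRel (fun (m : ℕ) (b : ℕ × ℕ × List ℕ) => ∃ x < b.2.1, Q b.2.2 b.1 m x b.2.1) :=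
    by
    have h2 := PrimrecRel.exists_mem_list Q_primrec
    have h3 : PrimrecPred (fun p : ℕ × ℕ × ℕ × List ℕ =>
        ∃ x ∈ List.range p.2.2.1, Q p.2.2.2 p.2.1 p.1 x p.2.2.1) :=
      h2.comp (Primrec.list_range.comp (Primrec.fst.comp (Primrec.snd.comp Primrec.snd)))
        Primrec.id
    exact h3.of_eq fun p => by simp
  have h4 : PrimrecPred (fun b : ℕ × ℕ × List ℕ =>
      ∀ m ∈ List.range (b.1 + 1), ∃ x < b.2.1, Q b.2.2 b.1 m x b.2.1) :=
    h1.forall_mem_list.comp (Primrec.list_range.comp (Primrec.succ.comp Primrec.fst)) Primrec.id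
  exact h4.of_eq fun b => by simp only [C, List.mem_range]

open Classical in
/-- greedy choice of indices below `k`. -/
noncomputable def greedy (P : List ℕ → Prop) (k : ℕ) : List ℕ :=
  Nat.rec (motive := fun _ => List ℕ) [] (fun e l => if P (e :: l) then e :: l else l) k

open Classical in
lemma greedy_succ (P : List ℕ → Prop) (k : ℕ) : greedy P (k + 1) =
    if P (k :: greedy P k) then k :: greedy P k else greedy P k := rfl

lemma greedy_sat {P : List ℕ → Prop} (h0 : P []) (k : ℕ) : P (greedy P k) := by
  induction k with
  | zero => exact h0
  | succ k ih =>
    rw [greedy_succ]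
    split_ifs with h
    · exact h
    · exact ih

lemma greedy_subset {P : List ℕ → Prop} {j k : ℕ} (h : j ≤ k) : greedy P j ⊆ greedy P k := by
  induction k, h using Nat.le_induction with
  | base => exact fun _ h => h
  | succ k _ ih =>
    rw [greedy_succ]
    split_ifs with h
    · exact fun x hx => List.mem_cons_of_mem _ (ih hx)
    · exact ih

lemma greedy_lim {Ps : ℕ → List ℕ → Prop} {P : List ℕ → Prop}
    (h : ∀ l, ∃ s₀, ∀ s, s₀ ≤ s → (Ps s l ↔ P l)) (k : ℕ) :
    ∃ s₀, ∀ s, s₀ ≤ s → greedy (Ps s) k = greedy P k := by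
  induction k with
  | zero => exact ⟨0, fun _ _ => rfl⟩
  | succ k ih =>
    obtain ⟨s₁, h₁⟩ := ih
    obtain ⟨s₂, h₂⟩ := h (k :: greedy P k)
    refine ⟨max s₁ s₂, fun s hs => ?_⟩
    rw [greedy_succ, greedy_succ, h₁ s (by omega)]
    have h₃ := h₂ s (by omega)
    by_cases hP : P (k :: greedy P k)
    · rw [if_pos hP, if_pos (h₃.2 hP)]
    · rw [if_neg hP, if_neg (fun h => hP (h₃.1 h))]

lemma greedy_primrec : Primrec (fun p : ℕ × ℕ => greedy (C p.1 p.2) p.1) := by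
  classical
  refine Primrec.nat_rec' (f := fun p : ℕ × ℕ => p.1) (g := fun _ => ([] : List ℕ))
    (h := fun p q => if C p.1 p.2 (q.1 :: q.2) then q.1 :: q.2 else q.2)
    Primrec.fst (Primrec.const _) ?_
  have hp : Primrec (fun a : (ℕ × ℕ) × ℕ × List ℕ => a.1) := Primrec.fst
  have hq : Primrec (fun a : (ℕ × ℕ) × ℕ × List ℕ => a.2) := Primrec.snd
  have hc := Primrec.list_cons.comp (Primrec.fst.comp hq) (Primrec.snd.comp hq)
  exact Primrec.ite (C_primrec.comp
    (Primrec.pair (Primrec.fst.comp hp) (Primrec.pair (Primrec.snd.comp hp) hc)))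
    hc (Primrec.snd.comp hq)

open Classical in
/-- the approximation -/
noncomputable def g (p : ℕ × ℕ) : ℕ :=
  (List.range p.2).findIdx (fun x => decide (Q (greedy (C p.1 p.2) p.1) p.1 p.1 x p.2))

lemma g_primrec : Primrec g := by
  classical
  refine Primrec.list_findIdx (f := fun p : ℕ × ℕ => List.range p.2)
    (p := fun p x => decide (Q (greedy (C p.1 p.2) p.1) p.1 p.1 x p.2))
    (Primrec.list_range.comp Primrec.snd) ?_
  have hp : Primrec (fun a : (ℕ × ℕ) × ℕ => a.1) := Primrec.fst
  have hx : Primrec (fun a : (ℕ × ℕ) × ℕ => a.2) := Primrec.snd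
  have hn := Primrec.fst.comp hp
  have hs := Primrec.snd.comp hp
  exact (Q_primrec.comp hx (Primrec.pair hn (Primrec.pair hn
    (Primrec.pair hs (greedy_primrec.comp hp))))).decide

/-- limit in `s` of `C`. -/
def Cl (n : ℕ) (l : List ℕ) : Prop := ∃ s, C n s l

lemma C_mono {n s t : ℕ} {l : List ℕ} (h : s ≤ t) (hC : C n s l) : C n t l := by
  intro m hm
  obtain ⟨x, hx, h1, h2⟩ := hC m hm
  exact ⟨x, by omega, h1, A_mono h h2⟩

lemma bdd_stage (T : ℕ → ℕ → Prop) (hT : ∀ m s t, s ≤ t → T m s → T m t) (n : ℕ)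
    (h : ∀ m < n, ∃ s, T m s) : ∃ s, ∀ m < n, T m s := by
  induction n with
  | zero => exact ⟨0, by simp⟩
  | succ n ih =>
    obtain ⟨s, hs⟩ := ih fun m hm => h m (by omega)
    obtain ⟨t, ht⟩ := h n (by omega)
    refine ⟨max s t, fun m hm => ?_⟩
    rcases Nat.lt_succ_iff_lt_or_eq.1 hm with h | rfl
    · exact hT m s _ (le_max_left _ _) (hs m h)
    · exact hT m t _ (le_max_right _ _) ht

lemma Cl_iff {n : ℕ} {l : List ℕ} : Cl n l ↔ ∀ m < n + 1, ∃ x, n ≤ x ∧ ∃ s, A l m x s := by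
  constructor
  · rintro ⟨s, hs⟩ m hm
    obtain ⟨x, _, h1, h2⟩ := hs m hm
    exact ⟨x, h1, s, h2⟩
  · intro h
    refine bdd_stage (fun m s => ∃ x < s, Q l n m x s) ?_ (n + 1) ?_
    · rintro m s t hst ⟨x, hx, h1, h2⟩
      exact ⟨x, by omega, h1, A_mono hst h2⟩
    · intro m hm
      obtain ⟨x, hx, s, hs⟩ := h m hm
      exact ⟨max s (x + 1), x, by omega, hx, A_mono (le_max_left _ _) hs⟩

lemma Cl_nil (n : ℕ) : Cl n [] :=
  Cl_iff.2 fun m _ => ⟨n, le_rfl, 0, fun e he => by simp at he⟩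

lemma Cl_anti {n k : ℕ} {l : List ℕ} (h : n ≤ k) (hC : Cl k l) : Cl n l := by
  rw [Cl_iff] at *
  intro m hm
  obtain ⟨x, h1, h2⟩ := hC m (by omega)
  exact ⟨x, by omega, h2⟩

/-- limit in `n` of `Cl`. -/
def Cll (l : List ℕ) : Prop := ∀ n, Cl n l

lemma lim1 (n k : ℕ) : ∃ s₀, ∀ s, s₀ ≤ s → greedy (C n s) k = greedy (Cl n) k := by
  apply greedy_lim
  intro l
  by_cases h : Cl n l
  · obtain ⟨s, hs⟩ := h
    exact ⟨s, fun t ht => ⟨fun h => ⟨t, h⟩, fun _ => C_mono ht hs⟩⟩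
  · exact ⟨0, fun t _ => ⟨fun h => ⟨t, h⟩, fun h' => absurd h' h⟩⟩

lemma lim2 (k : ℕ) : ∃ n₀, ∀ n, n₀ ≤ n → greedy (Cl n) k = greedy Cll k := by
  apply greedy_lim
  intro l
  by_cases h : Cll l
  · exact ⟨0, fun t _ => ⟨fun _ => h, fun h => h t⟩⟩
  · have h' := h
    unfold Cll at h'
    push Not at h'
    obtain ⟨n, hn⟩ := h'
    exact ⟨n, fun t ht => ⟨fun h1 => absurd (Cl_anti ht h1) hn, fun h1 => absurd h1 h⟩⟩

lemma ex_f (n : ℕ) : ∃ x, n ≤ x ∧ ∃ s, A (greedy (Cl n) n) n x s :=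
  Cl_iff.1 (greedy_sat (Cl_nil n) n) n (by omega)

open Classical in
/-- the limit function -/
noncomputable def f (n : ℕ) : ℕ := Nat.find (ex_f n)

lemma g_lim (n : ℕ) : ∃ s₀, ∀ s, s₀ ≤ s → g (n, s) = f n := by
  classical
  obtain ⟨s₁, h₁⟩ := lim1 n n
  obtain ⟨hn, s₂, h₂⟩ := Nat.find_spec (ex_f n)
  refine ⟨max (max s₁ s₂) (f n + 1), fun s hs => ?_⟩
  unfold g
  have hlt : f n < (List.range s).length := by simp; omega
  rw [List.findIdx_eq hlt]
  simp only [h₁ s (by omega), List.getElem_range, decide_eq_true_eq, decide_eq_false_iff_not]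
  refine ⟨⟨hn, A_mono (by omega) h₂⟩, fun j hj hQ => ?_⟩
  exact Nat.find_min (ex_f n) hj ⟨hQ.1, s, hQ.2⟩

lemma exists_index (U : ℕ → ℕ → Prop) (hU : REPred (fun p : ℕ × ℕ => U p.1 p.2)) :
    ∃ e, ∀ m x, U m x ↔ ∃ s, R e m x s := by
  have h1 : Partrec (fun k : ℕ => (Part.assert (U k.unpair.1 k.unpair.2)
      fun _ => Part.some ()).map (fun _ => (0 : ℕ))) :=
    (Partrec.comp hU Computable.unpair).map (Computable.const 0).to₂
  obtain ⟨c, hc⟩ := Code.exists_code.1 (Partrec.nat_iff.1 h1)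
  refine ⟨Encodable.encode c, fun m x => ?_⟩
  have h2 : U m x ↔ (c.eval (Nat.pair m x)).Dom := by
    rw [hc]; simp [Part.assert]
  rw [h2, Part.dom_iff_mem]
  simp only [R, Denumerable.ofNat_encode, Option.isSome_iff_exists, Code.evaln_complete]
  constructor
  · rintro ⟨y, s, h⟩; exact ⟨s, y, h⟩
  · rintro ⟨s, y, h⟩; exact ⟨y, s, h⟩

lemma good_mem (U : ℕ → ℕ → Prop) (e : ℕ) (he : ∀ m x, U m x ↔ ∃ s, R e m x s)
    (hfin : ∀ n : ℕ, {x : ℕ | ¬ U n x}.Finite) : e ∈ greedy Cll (e + 1) := by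
  have hS : Cll (greedy Cll e) := greedy_sat Cl_nil e
  have : Cll (e :: greedy Cll e) := by
    intro n
    rw [Cl_iff]
    intro m hm
    obtain ⟨N, hN⟩ := (hfin m).bddAbove
    obtain ⟨x, hx, s, hs⟩ := Cl_iff.1 (hS (max (N + 1) n)) m (by omega)
    have hUx : U m x := by
      by_contra h
      have : x ≤ N := hN h
      omega
    obtain ⟨t, ht⟩ := (he m x).1 hUx
    refine ⟨x, by omega, max s t, fun i hi => ?_⟩
    rcases List.mem_cons.1 hi with rfl | hi
    · exact R_mono (le_max_right _ _) ht
    · exact R_mono (le_max_left _ _) (hs i hi)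
  rw [greedy_succ, if_pos this]
  simp

end LimComp

theorem exists_limit_computable_function_meeting_uniformly_ce_cofinite_sequences :
    ∃ f : ℕ → ℕ,
      (∃ g : ℕ × ℕ → ℕ, Computable g ∧ ∀ n : ℕ, ∃ s₀ : ℕ, ∀ s : ℕ, s₀ ≤ s → g (n, s) = f n) ∧
      ∀ U : ℕ → ℕ → Prop, REPred (fun p : ℕ × ℕ => U p.1 p.2) →
        (∀ n : ℕ, {x : ℕ | ¬ U n x}.Finite) →
        {n : ℕ | ¬ U n (f n)}.Finite := by
  classical
  refine ⟨LimComp.f, ⟨LimComp.g, LimComp.g_primrec.to_comp, LimComp.g_lim⟩, fun U hU hfin => ?_⟩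
  obtain ⟨e, he⟩ := LimComp.exists_index U hU
  obtain ⟨n₀, hn₀⟩ := LimComp.lim2 (e + 1)
  refine (Set.finite_lt_nat (max n₀ (e + 1))).subset fun n hn => ?_
  by_contra hlt
  have hle : max n₀ (e + 1) ≤ n := not_lt.1 hlt
  apply hn
  have hmem : e ∈ LimComp.greedy (LimComp.Cl n) n := by
    apply LimComp.greedy_subset (j := e + 1) (by omega)
    rw [hn₀ n (by omega)]
    exact LimComp.good_mem U e he hfin
  obtain ⟨_, s, hs⟩ := Nat.find_spec (LimComp.ex_f n)
  exact (he n _).2 ⟨s, hs e hmem⟩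
end
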